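/- In the tree block setting, assuming (A1) and (A2), the Glauber dynamics 𝓛^μ_E is ergodic, and there is a universal constant C₀ > 0 (independent of d, G, T, μ and the partition) such that τ(𝓛^μ_E) ≤ C₀·( d³ + Σ_{i=1}^{r} τ_i ), where τ_i = max_{σ∈Ω^μ_E} τ(𝓛^σ_{E_i}). -/

import Mathlib

/-!
The bound is proved as a Poincaré inequality `Var(f) ≤ 10^10 (d³ + ∑ τ_i) 𝓔(f, f)`, which for a
symmetric generator also forces ergodicity (`ergodic_of_poincare`, `relaxTime_le_of_poincare`).

*Root colours.* The colours of the root edges form a star (vertex-rooted case) or a double star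
(edge-rooted case), in which each edge of the star has `d + 1` colours available and at most one
edge per star has a restricted palette, of at least two colours. Adding the unused colour as a
hole, colourings of a star with `d` edges become bijections of `d + 1` points and recolouring an
edge becomes a transposition with the hole. Starting from the spectral gap of the
random-transposition walk (`transposition_gap`), one gets an `O(1)` Poincaré inequality for star
transpositions (`star_poincare`), for stars with a restricted position whose moves have weight of
order `d` (`restricted_star`), and for two stars glued along an edge whose moves have weight `d + 1`
(`double_star`). The translation to colour vectors is `col_vertex` and `col_edge`.

*Extensions to the blocks.* Given a colour at the root edge of a block, the number of extensions to
the block does not depend on the colour when the block misses the interior boundary of the tree. At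
most two blocks meet it, and for those the number varies by a factor of at most `3`, by swapping two
colours beyond an edge that separates the root from the boundary (`swap_count`, `block_count`).

*Lifting.* Colourings of the tree are tuples of block colourings whose root colours are compatible.
Inside the fibre over a root colour vector the blocks are independent, and the Efron–Stein inequality
applies; between fibres, the fibre averages are compared by the inequality for root colours. Since
at most two colours are available at a root edge when the others are fixed, this bounds the variance
by a constant times the weighted sum of the heat-bath block energies (`lift_poincare`,
`lift_apply`).

*Energies.* The heat-bath energy of a block is at most `τ_i` times its Glauber energy. The blocks
with weight `d + 1` are single edges, whose heat-bath energy is at most `d + 1` times the Glauber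
energy, so they contribute `(d + 1)² ≤ 2 d³` (`glauber_poincare`).
-/


open Finset
open scoped Classical

section Markov

variable {Ω : Type*} [Fintype Ω]

/-- A generator matrix: nonnegative off-diagonal entries, zero row sums. -/
def IsGenerator (L : Ω → Ω → ℝ) : Prop :=
  (∀ x y : Ω, x ≠ y → 0 ≤ L x y) ∧ (∀ x : Ω, ∑ y : Ω, L x y = 0)

/-- A transition of a generator matrix. -/
def IsTransition (L : Ω → Ω → ℝ) (x y : Ω) : Prop := x ≠ y ∧ 0 < L x y

/-- Ergodicity: the directed graph of transitions is strongly connected. -/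
def IsErgodicGen (L : Ω → Ω → ℝ) : Prop :=
  ∀ x y : Ω, Relation.ReflTransGen (IsTransition L) x y

/-- Reversibility with respect to a distribution π. -/
def IsReversible (L : Ω → Ω → ℝ) (π : Ω → ℝ) : Prop :=
  ∀ x y : Ω, π x * L x y = π y * L y x

/-- The variance form. -/
noncomputable def VarForm (π : Ω → ℝ) (f : Ω → ℝ) : ℝ :=
  (1 / 2) * ∑ a : Ω, ∑ b : Ω, π a * π b * (f a - f b) ^ 2

/-- The Dirichlet form. -/
noncomputable def DirForm (π : Ω → ℝ) (L : Ω → Ω → ℝ) (f : Ω → ℝ) : ℝ :=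
  (1 / 2) * ∑ a : Ω, ∑ b : Ω, π a * L a b * (f a - f b) ^ 2

/-- The spectral gap: infimum (= minimum) of the Rayleigh quotient over nonconstant functions. -/
noncomputable def specGap (π : Ω → ℝ) (L : Ω → Ω → ℝ) : ℝ :=
  sInf {r : ℝ | ∃ f : Ω → ℝ, (∃ a b : Ω, f a ≠ f b) ∧ r = DirForm π L f / VarForm π f}

/-- The relaxation time, with the convention that it equals 1 on a one-point space. -/
noncomputable def relaxTime (π : Ω → ℝ) (L : Ω → Ω → ℝ) : ℝ :=
  if ∃ a b : Ω, a ≠ b then 1 / specGap π L else 1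

/-- The uniform distribution on a finite type. -/
noncomputable def unif (Ω : Type*) [Fintype Ω] : Ω → ℝ := fun _ => 1 / (Fintype.card Ω : ℝ)

end Markov

section Glauber

variable {I : Type*} [Fintype I] {k : ℕ} {S : Type*} [Fintype S] [DecidableEq S]

/-- Off-diagonal entry of the Glauber dynamics: if the two states differ at exactly one site,
the rate of that site; otherwise `0`. -/
noncomputable def glauberOff (p : I → ℝ) (val : S → I → Fin k) (a b : S) : ℝ :=
  if (Finset.univ.filter fun w => val a w ≠ val b w).card = 1 then
    ∑ w ∈ Finset.univ.filter fun w => val a w ≠ val b w, p w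
  else 0

/-- The Glauber dynamics generator with site rates `p`, on a state space `S` of configurations
(described by `val : S → I → Fin k`): off-diagonal entries are the rate of the unique differing
site, diagonal entries make row sums vanish. -/
noncomputable def glauber (p : I → ℝ) (val : S → I → Fin k) : S → S → ℝ :=
  fun σ η =>
    if σ = η then -∑ η' ∈ Finset.univ.filter fun b => b ≠ σ, glauberOff p val σ η'
    else glauberOff p val σ η

end Glauber

section Trees

variable {V : Type} [Fintype V] [DecidableEq V]

/-- Two edges are incident if they are distinct and share an endpoint. -/
def EdgeInc (e f : Sym2 V) : Prop := e ≠ f ∧ ∃ v : V, v ∈ e ∧ v ∈ f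

/-- A proper `k`-edge-colouring of `G` (total map on `Sym2 V`, constrained on edges). -/
def ProperECol (G : SimpleGraph V) {k : ℕ} (σ : Sym2 V → Fin k) : Prop :=
  ∀ e ∈ G.edgeSet, ∀ f ∈ G.edgeSet, EdgeInc e f → σ e ≠ σ f

/-- `Ω^χ_{E'}`: proper edge-colourings of `G` agreeing with `χ` off `E'`. -/
abbrev OmegaE (G : SimpleGraph V) (k : ℕ) (E' : Finset (Sym2 V)) (χ : Sym2 V → Fin k) :=
  {σ : Sym2 V → Fin k // ProperECol G σ ∧ ∀ e ∉ E', σ e = χ e}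

/-- The Glauber dynamics `𝓛^χ_{E'}` for `k`-edge-colourings: each edge is updated at
rate `1/k`. -/
noncomputable def treeGen (G : SimpleGraph V) (k : ℕ) (E' : Finset (Sym2 V))
    (χ : Sym2 V → Fin k) : OmegaE G k E' χ → OmegaE G k E' χ → ℝ :=
  glauber (fun _ : Sym2 V => 1 / (k : ℝ)) (fun σ => σ.1)

variable (G : SimpleGraph V) [DecidableRel G.Adj]

/-- The exterior boundary `∂T` of the subtree with edge set `ET`. -/
noncomputable def extBd (ET : Finset (Sym2 V)) : Finset (Sym2 V) :=
  (G.edgeFinset \ ET).filter fun e => ∃ f ∈ ET, EdgeInc e f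

/-- The interior boundary `∂̄T` of the subtree with edge set `ET`. -/
noncomputable def intBd (ET : Finset (Sym2 V)) : Finset (Sym2 V) :=
  ET.filter fun e => ∃ f ∈ extBd G ET, EdgeInc e f

/-- Degree of a vertex in the subtree with edge set `ET`. -/
noncomputable def degT (ET : Finset (Sym2 V)) (v : V) : ℕ :=
  (ET.filter fun e => v ∈ e).card

/-- An edge set is connected (spans a subtree, inside a forest) if any two of its edges are
linked by a chain of pairwise incident edges within the set. -/
def EdgeConnectedSet (ET : Finset (Sym2 V)) : Prop :=
  ∀ e ∈ ET, ∀ f ∈ ET,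
    Relation.ReflTransGen (fun a b => a ∈ ET ∧ b ∈ ET ∧ EdgeInc a b) e f

/-- A splitting subtree (given by its nonempty connected edge set `ET`): either a single
edge, or a subtree with fringe interior boundary of size at most 2 whose two interior
boundary edges (if there are two) are non-incident. -/
def IsSplitting (ET : Finset (Sym2 V)) : Prop :=
  ET ⊆ G.edgeFinset ∧ ET.Nonempty ∧ EdgeConnectedSet ET ∧
  (ET.card = 1 ∨
    ((∀ e ∈ intBd G ET, ∃ v : V, v ∈ e ∧ degT ET v = 1) ∧
     (intBd G ET).card ≤ 2 ∧
     ∀ e ∈ intBd G ET, ∀ f ∈ intBd G ET, e ≠ f → ¬ EdgeInc e f))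

end Trees

section TreeBlocks

variable {V : Type} [Fintype V] [DecidableEq V] (G : SimpleGraph V) [DecidableRel G.Adj]

/-- The block of edges hanging from the edge `e0`, relative to a set `R` of root vertices:
the edges of `ET` reachable from `e0` by chains of incident edges meeting at vertices
outside `R`. -/
noncomputable def hangBlock (ET : Finset (Sym2 V)) (R : Finset V) (e0 : Sym2 V) :
    Finset (Sym2 V) :=
  ET.filter fun f => Relation.ReflTransGen
    (fun a b => a ∈ ET ∧ b ∈ ET ∧ EdgeInc a b ∧ ∃ v : V, v ∈ a ∧ v ∈ b ∧ v ∉ R) e0 f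

/-- Vertex-rooted block partition: `T` is rooted at an internal vertex `r0` of `T`, the
distinguished edges `roots i` are exactly the edges of `T` at `r0`, and each block is the
subtree of `T` hanging from its distinguished edge. -/
def IsVertexRooted (ET : Finset (Sym2 V)) {r : ℕ}
    (blocks : Fin r → Finset (Sym2 V)) (roots : Fin r → Sym2 V) : Prop :=
  ∃ r0 : V, 2 ≤ degT ET r0 ∧ Function.Injective roots ∧
    (∀ i, roots i ∈ ET ∧ r0 ∈ roots i) ∧
    (∀ f ∈ ET, r0 ∈ f → ∃ i, roots i = f) ∧
    (∀ i, blocks i = hangBlock ET {r0} (roots i))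

/-- Edge-rooted block partition: `T` is rooted at an edge `e` of `T`, not in the interior
boundary, with both endpoints internal to `T`; the blocks are `{e}` together with the
subtrees hanging from each edge of `T` incident to `e`. -/
def IsEdgeRooted (ET : Finset (Sym2 V)) {r : ℕ}
    (blocks : Fin r → Finset (Sym2 V)) (roots : Fin r → Sym2 V) : Prop :=
  ∃ e : Sym2 V, e ∈ ET ∧ e ∉ intBd G ET ∧ (∀ v ∈ e, 2 ≤ degT ET v) ∧
    Function.Injective roots ∧
    (∃ i0, roots i0 = e ∧ blocks i0 = {e}) ∧
    (∀ i, roots i = e ∨ (roots i ∈ ET ∧ roots i ≠ e ∧ EdgeInc e (roots i) ∧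
      blocks i = hangBlock (ET.erase e) (Finset.univ.filter fun v => v ∈ e) (roots i))) ∧
    (∀ f ∈ ET, f ≠ e → EdgeInc e f → ∃ i, roots i = f)

/-- The tree block setting: a vertex-rooted or edge-rooted block partition. -/
def TreeBlockSetting (ET : Finset (Sym2 V)) {r : ℕ}
    (blocks : Fin r → Finset (Sym2 V)) (roots : Fin r → Sym2 V) : Prop :=
  IsVertexRooted ET blocks roots ∨ IsEdgeRooted G ET blocks roots

/-- `g_i`: the minimum over boundary conditions `σ ∈ Ω^μ_E` of the spectral gap of the
Glauber dynamics on the block `E_i`. -/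
noncomputable def blockGapE (d : ℕ) (ET : Finset (Sym2 V)) (μ : Sym2 V → Fin (d + 1))
    {r : ℕ} (blocks : Fin r → Finset (Sym2 V)) (i : Fin r) : ℝ :=
  sInf {x : ℝ | ∃ σ : OmegaE G (d + 1) ET μ,
    x = specGap (unif (OmegaE G (d + 1) (blocks i) σ.1)) (treeGen G (d + 1) (blocks i) σ.1)}

/-- `τ_i`: the maximum over boundary conditions `σ ∈ Ω^μ_E` of the relaxation time of the
Glauber dynamics on the block `E_i`. -/
noncomputable def blockTauE (d : ℕ) (ET : Finset (Sym2 V)) (μ : Sym2 V → Fin (d + 1))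
    {r : ℕ} (blocks : Fin r → Finset (Sym2 V)) (i : Fin r) : ℝ :=
  sSup {x : ℝ | ∃ σ : OmegaE G (d + 1) ET μ,
    x = relaxTime (unif (OmegaE G (d + 1) (blocks i) σ.1)) (treeGen G (d + 1) (blocks i) σ.1)}

/-- Restriction of a colouring in `Ω^μ_E` to `F = {e_1, …, e_r}` (the distinguished edges). -/
noncomputable def resE (d : ℕ) (ET : Finset (Sym2 V)) (μ : Sym2 V → Fin (d + 1))
    {r : ℕ} (roots : Fin r → Sym2 V) (σ : OmegaE G (d + 1) ET μ) : Fin r → Fin (d + 1) :=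
  fun i => σ.1 (roots i)

/-- The projection `π_𝓡` onto `F` of the uniform distribution on `Ω^μ_E`. -/
noncomputable def piRE (d : ℕ) (ET : Finset (Sym2 V)) (μ : Sym2 V → Fin (d + 1))
    {r : ℕ} (roots : Fin r → Sym2 V)
    (σh : ↥(Set.range (resE G d ET μ roots))) : ℝ :=
  (Fintype.card {σ : OmegaE G (d + 1) ET μ // resE G d ET μ roots σ = σh.1} : ℝ) /
  (Fintype.card (OmegaE G (d + 1) ET μ) : ℝ)

/-- `π^{i,σ̂}_proj(η̂)`: for an arbitrary extension `σ` of `σ̂`, the probability under the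
uniform distribution on `Ω^σ_{E_i}` that the restriction to `F` equals `η̂`. -/
noncomputable def projE (d : ℕ) (ET : Finset (Sym2 V)) (μ : Sym2 V → Fin (d + 1))
    {r : ℕ} (blocks : Fin r → Finset (Sym2 V)) (roots : Fin r → Sym2 V) (i : Fin r)
    (σh : ↥(Set.range (resE G d ET μ roots))) (ηh : Fin r → Fin (d + 1)) : ℝ :=
  (Fintype.card {ξ : OmegaE G (d + 1) (blocks i)
      (Classical.choose (Set.mem_range.mp σh.2)).1 //
      ∀ j : Fin r, ξ.1 (roots j) = ηh j} : ℝ) /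
  (Fintype.card (OmegaE G (d + 1) (blocks i)
      (Classical.choose (Set.mem_range.mp σh.2)).1) : ℝ)

/-- Off-diagonal entries of the reduced block dynamics `𝓡^μ_𝓔`. -/
noncomputable def redOffE (d : ℕ) (ET : Finset (Sym2 V)) (μ : Sym2 V → Fin (d + 1))
    {r : ℕ} (blocks : Fin r → Finset (Sym2 V)) (roots : Fin r → Sym2 V)
    (σh ηh : ↥(Set.range (resE G d ET μ roots))) : ℝ :=
  ∑ i : Fin r,
    if ∀ j : Fin r, j ≠ i → σh.1 j = ηh.1 j then
      blockGapE G d ET μ blocks i * projE G d ET μ blocks roots i σh ηh.1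
    else 0

/-- The reduced block dynamics `𝓡^μ_𝓔` on `Ω_𝓡 = {σ|_F : σ ∈ Ω^μ_E}`. -/
noncomputable def redDynE (d : ℕ) (ET : Finset (Sym2 V)) (μ : Sym2 V → Fin (d + 1))
    {r : ℕ} (blocks : Fin r → Finset (Sym2 V)) (roots : Fin r → Sym2 V) :
    ↥(Set.range (resE G d ET μ roots)) → ↥(Set.range (resE G d ET μ roots)) → ℝ :=
  fun σh ηh =>
    if σh = ηh then
      -∑ ηh' ∈ Finset.univ.filter fun b => b ≠ σh, redOffE G d ET μ blocks roots σh ηh'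
    else redOffE G d ET μ blocks roots σh ηh

end TreeBlocks

set_option linter.unusedSectionVars false

/-! ### Poincaré inequalities, ergodicity and relaxation times -/

section Relaxation

variable {Ω : Type*} [Fintype Ω]

lemma varForm_unif (f : Ω → ℝ) :
    VarForm (unif Ω) f =
      (1 / (2 * (Fintype.card Ω : ℝ) ^ 2)) * ∑ a : Ω, ∑ b : Ω, (f a - f b) ^ 2 := by
  simp only [VarForm, unif, mul_assoc, ← Finset.mul_sum]
  ring

lemma dirForm_unif (L : Ω → Ω → ℝ) (f : Ω → ℝ) :
    DirForm (unif Ω) L f =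
      (1 / (2 * (Fintype.card Ω : ℝ))) * ∑ a : Ω, ∑ b : Ω, L a b * (f a - f b) ^ 2 := by
  simp only [DirForm, unif, mul_assoc, ← Finset.mul_sum]
  ring

lemma varForm_pos {f : Ω → ℝ} {a b : Ω} (h : f a ≠ f b) : 0 < VarForm (unif Ω) f := by
  rw [varForm_unif]
  have hN : 0 < (Fintype.card Ω : ℝ) := by
    exact_mod_cast Fintype.card_pos_iff.mpr ⟨a⟩
  refine mul_pos (by positivity) ?_
  refine Finset.sum_pos' (fun _ _ => Finset.sum_nonneg fun _ _ => sq_nonneg _) ⟨a, mem_univ _, ?_⟩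
  refine Finset.sum_pos' (fun _ _ => sq_nonneg _) ⟨b, mem_univ _, ?_⟩
  have := sub_ne_zero.mpr h
  positivity

/-- A Poincaré inequality with constant `T` bounds the relaxation time. -/
lemma relaxTime_le_of_poincare (L : Ω → Ω → ℝ) {T : ℝ} (hT : 1 ≤ T)
    (h : ∀ f : Ω → ℝ, VarForm (unif Ω) f ≤ T * DirForm (unif Ω) L f) :
    relaxTime (unif Ω) L ≤ T := by
  unfold relaxTime
  split_ifs with hne
  · obtain ⟨a, b, hab⟩ := hne
    have hgap : 1 / T ≤ specGap (unif Ω) L := by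
      unfold specGap
      apply le_csInf
      · refine ⟨_, fun x => if x = a then 1 else 0, ⟨a, b, ?_⟩, rfl⟩
        simp [hab.symm]
      · rintro _ ⟨f, ⟨x, y, hxy⟩, rfl⟩
        rw [div_le_div_iff₀ (by linarith) (varForm_pos hxy)]
        linarith [h f]
    have : 0 < 1 / T := by positivity
    rw [div_le_iff₀ (by linarith)]
    calc (1 : ℝ) = T * (1 / T) := by field_simp
      _ ≤ _ := by gcongr
  · exact hT

/-- The squared difference of `f` between a state and one reachable from it is at most a constant,
independent of `f`, times the energy; this is what makes the spectral gap of an ergodic chain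
positive. -/
lemma exists_sq_le_of_reach (L : Ω → Ω → ℝ) (hL : ∀ x y, x ≠ y → 0 ≤ L x y) {x y : Ω}
    (h : Relation.ReflTransGen (IsTransition L) x y) :
    ∃ C : ℝ, 0 ≤ C ∧ ∀ f : Ω → ℝ, (f x - f y) ^ 2 ≤ C * ∑ a, ∑ b, L a b * (f a - f b) ^ 2 := by
  have hnn : ∀ (f : Ω → ℝ) (a b : Ω), 0 ≤ L a b * (f a - f b) ^ 2 := by
    intro f a b
    by_cases hab : a = b
    · simp [hab]
    · exact mul_nonneg (hL a b hab) (sq_nonneg _)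
  induction h with
  | refl => exact ⟨0, le_rfl, fun f => by simp⟩
  | @tail b c _ hbc ih =>
    obtain ⟨C, hC, ih⟩ := ih
    have hp := hbc.2
    refine ⟨2 * C + 2 / L b c, by positivity, fun f => ?_⟩
    have h1 : L b c * (f b - f c) ^ 2 ≤ ∑ a, ∑ b, L a b * (f a - f b) ^ 2 :=
      le_trans (Finset.single_le_sum (f := fun c => L b c * (f b - f c) ^ 2)
        (fun c _ => hnn f b c) (mem_univ c))
        (Finset.single_le_sum (f := fun b => ∑ c, L b c * (f b - f c) ^ 2)
        (fun b _ => Finset.sum_nonneg fun c _ => hnn f b c) (mem_univ b))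
    have h2 : (f b - f c) ^ 2 ≤ (∑ a, ∑ b, L a b * (f a - f b) ^ 2) / L b c := by
      rw [le_div_iff₀ hp]; linarith
    have h3 := ih f
    have h4 : (f x - f c) ^ 2 ≤ 2 * (f x - f b) ^ 2 + 2 * (f b - f c) ^ 2 := by
      nlinarith [sq_nonneg ((f x - f b) - (f b - f c))]
    calc (f x - f c) ^ 2 ≤ _ := h4
      _ ≤ 2 * (C * ∑ a, ∑ b, L a b * (f a - f b) ^ 2)
          + 2 * ((∑ a, ∑ b, L a b * (f a - f b) ^ 2) / L b c) := by gcongr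
      _ = _ := by ring

lemma dirForm_nonneg (L : Ω → Ω → ℝ) (hL : ∀ x y, x ≠ y → 0 ≤ L x y) (f : Ω → ℝ) :
    0 ≤ DirForm (unif Ω) L f := by
  rw [dirForm_unif]
  refine mul_nonneg (by positivity) (Finset.sum_nonneg fun a _ => Finset.sum_nonneg fun b _ => ?_)
  by_cases hab : a = b
  · simp [hab]
  · exact mul_nonneg (hL a b hab) (sq_nonneg _)

lemma specGap_nonneg (L : Ω → Ω → ℝ) (hL : ∀ x y, x ≠ y → 0 ≤ L x y) :
    0 ≤ specGap (unif Ω) L := by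
  apply Real.sInf_nonneg
  rintro _ ⟨f, ⟨x, y, hxy⟩, rfl⟩
  exact div_nonneg (dirForm_nonneg L hL f) (varForm_pos hxy).le

lemma relaxTime_nonneg (L : Ω → Ω → ℝ) (hL : ∀ x y, x ≠ y → 0 ≤ L x y) :
    0 ≤ relaxTime (unif Ω) L := by
  unfold relaxTime
  split_ifs
  · exact div_nonneg zero_le_one (specGap_nonneg L hL)
  · exact zero_le_one

/-- Ergodicity makes the spectral gap positive, so the relaxation time is a valid
Poincaré constant. -/
lemma varForm_le_relaxTime (L : Ω → Ω → ℝ) (hL : ∀ x y, x ≠ y → 0 ≤ L x y)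
    (herg : IsErgodicGen L) (f : Ω → ℝ) :
    VarForm (unif Ω) f ≤ relaxTime (unif Ω) L * DirForm (unif Ω) L f := by
  by_cases hf : ∃ a b, f a ≠ f b
  · obtain ⟨a, b, hab⟩ := hf
    have hne : ∃ a b : Ω, a ≠ b := ⟨a, b, fun h => hab (by rw [h])⟩
    have hN : 0 < (Fintype.card Ω : ℝ) := by
      exact_mod_cast Fintype.card_pos_iff.mpr ⟨a⟩
    choose C hC0 hC using fun x y => exists_sq_le_of_reach L hL (herg x y)
    have hgap : 0 < specGap (unif Ω) L := by
      set K : ℝ := 1 + ∑ x, ∑ y, C x y with hK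
      have hK1 : 0 < K := by
        have : 0 ≤ ∑ x, ∑ y, C x y :=
          Finset.sum_nonneg fun x _ => Finset.sum_nonneg fun y _ => hC0 x y
        linarith
      have hlow : (Fintype.card Ω : ℝ) / K ≤ specGap (unif Ω) L := by
        apply le_csInf
        · exact ⟨_, f, ⟨a, b, hab⟩, rfl⟩
        · rintro _ ⟨g, ⟨x, y, hxy⟩, rfl⟩
          rw [div_le_div_iff₀ hK1 (varForm_pos hxy), varForm_unif, dirForm_unif]
          set D := ∑ a, ∑ b, L a b * (g a - g b) ^ 2 with hD
          have hDnn : 0 ≤ D := by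
            refine Finset.sum_nonneg fun a _ => Finset.sum_nonneg fun b _ => ?_
            by_cases hab : a = b
            · simp [hab]
            · exact mul_nonneg (hL a b hab) (sq_nonneg _)
          have hV : ∑ a, ∑ b, (g a - g b) ^ 2 ≤ K * D := by
            calc ∑ a, ∑ b, (g a - g b) ^ 2 ≤ ∑ a, ∑ b, C a b * D :=
                  Finset.sum_le_sum fun a _ => Finset.sum_le_sum fun b _ => hC a b g
              _ = (∑ a, ∑ b, C a b) * D := by simp only [Finset.sum_mul]
              _ ≤ _ := by rw [hK]; nlinarith
          calc (Fintype.card Ω : ℝ) * (1 / (2 * (Fintype.card Ω : ℝ) ^ 2)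
                * ∑ a, ∑ b, (g a - g b) ^ 2)
              = 1 / (2 * (Fintype.card Ω : ℝ)) * ∑ a, ∑ b, (g a - g b) ^ 2 := by field_simp
            _ ≤ 1 / (2 * (Fintype.card Ω : ℝ)) * (K * D) := by gcongr
            _ = _ := by ring
      have : 0 < (Fintype.card Ω : ℝ) / K := by positivity
      linarith
    have hle : specGap (unif Ω) L ≤ DirForm (unif Ω) L f / VarForm (unif Ω) f := by
      apply csInf_le
      · refine ⟨0, ?_⟩
        rintro _ ⟨g, ⟨x, y, hxy⟩, rfl⟩
        exact div_nonneg (dirForm_nonneg L hL g) (varForm_pos hxy).le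
      · exact ⟨f, ⟨a, b, hab⟩, rfl⟩
    rw [le_div_iff₀ (varForm_pos hab)] at hle
    rw [relaxTime, if_pos hne, div_mul_eq_mul_div, one_mul, le_div_iff₀ hgap]
    linarith
  · push Not at hf
    have : VarForm (unif Ω) f = 0 := by
      rw [varForm_unif]
      refine mul_eq_zero_of_right _ (Finset.sum_eq_zero fun a _ => Finset.sum_eq_zero fun b _ => ?_)
      rw [hf a b]; ring
    rw [this]
    exact mul_nonneg (relaxTime_nonneg L hL) (dirForm_nonneg L hL f)

/-- A Poincaré inequality forces ergodicity of a symmetric generator: the indicator of a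
reachability class has zero Dirichlet form. -/
lemma ergodic_of_poincare (L : Ω → Ω → ℝ) (hL : ∀ x y, x ≠ y → 0 ≤ L x y)
    (hsymm : ∀ x y, L x y = L y x) {T : ℝ}
    (h : ∀ f : Ω → ℝ, VarForm (unif Ω) f ≤ T * DirForm (unif Ω) L f) : IsErgodicGen L := by
  intro x y
  by_contra hxy
  set f : Ω → ℝ := fun z => if Relation.ReflTransGen (IsTransition L) x z then 1 else 0 with hf
  have hD : DirForm (unif Ω) L f = 0 := by
    rw [dirForm_unif]
    refine mul_eq_zero_of_right _ (Finset.sum_eq_zero fun a _ => Finset.sum_eq_zero fun b _ => ?_)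
    by_cases hab : a = b
    · simp [hab]
    rcases (hL a b hab).eq_or_lt with h0 | hpos
    · rw [← h0, zero_mul]
    · have e : f a = f b := by
        have h1 : IsTransition L a b := ⟨hab, hpos⟩
        have h2 : IsTransition L b a := ⟨Ne.symm hab, by rw [hsymm]; exact hpos⟩
        have : Relation.ReflTransGen (IsTransition L) x a ↔
            Relation.ReflTransGen (IsTransition L) x b := ⟨fun h => h.tail h1, fun h => h.tail h2⟩
        simp only [hf, this]
      rw [e]; ring
  have hV : 0 < VarForm (unif Ω) f := by
    apply varForm_pos (a := x) (b := y)
    simp [hf, hxy, Relation.ReflTransGen.refl]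
  have := h f
  rw [hD, mul_zero] at this
  linarith

end Relaxation

section TreeGenerator

variable {V : Type} [Fintype V] [DecidableEq V]

/-- Two colourings differ at exactly one edge. -/
def DiffOne {k : ℕ} (a b : Sym2 V → Fin k) : Prop :=
  (Finset.univ.filter fun w => a w ≠ b w).card = 1

lemma DiffOne.symm {k : ℕ} {a b : Sym2 V → Fin k} (h : DiffOne a b) : DiffOne b a := by
  unfold DiffOne at *
  rw [← h]; congr 1; ext w; simp [ne_comm]

lemma treeGen_of_ne (G : SimpleGraph V) (k : ℕ) (E' : Finset (Sym2 V)) (χ : Sym2 V → Fin k)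
    {a b : OmegaE G k E' χ} (hab : a ≠ b) :
    treeGen G k E' χ a b = if DiffOne a.1 b.1 then 1 / (k : ℝ) else 0 := by
  unfold treeGen glauber glauberOff
  rw [if_neg hab]
  by_cases h : DiffOne a.1 b.1
  · have h' := h
    unfold DiffOne at h'
    rw [if_pos h]
    split_ifs with h2
    · rw [Finset.sum_const, nsmul_eq_mul]
      convert one_mul (1 / (k : ℝ))
      exact_mod_cast h2
    · exact absurd (by convert h') h2
  · have h' := h
    unfold DiffOne at h'
    rw [if_neg h, if_neg]
    convert h'

lemma treeGen_nonneg (G : SimpleGraph V) (k : ℕ) (E' : Finset (Sym2 V)) (χ : Sym2 V → Fin k)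
    (a b : OmegaE G k E' χ) (hab : a ≠ b) : 0 ≤ treeGen G k E' χ a b := by
  rw [treeGen_of_ne _ _ _ _ hab]; split_ifs <;> positivity

lemma treeGen_symm (G : SimpleGraph V) (k : ℕ) (E' : Finset (Sym2 V)) (χ : Sym2 V → Fin k)
    (a b : OmegaE G k E' χ) : treeGen G k E' χ a b = treeGen G k E' χ b a := by
  by_cases hab : a = b
  · rw [hab]
  · rw [treeGen_of_ne _ _ _ _ hab, treeGen_of_ne _ _ _ _ (Ne.symm hab)]
    have : DiffOne a.1 b.1 ↔ DiffOne b.1 a.1 := ⟨DiffOne.symm, DiffOne.symm⟩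
    simp only [this]

lemma treeGen_mul_sq (G : SimpleGraph V) (k : ℕ) (E' : Finset (Sym2 V)) (χ : Sym2 V → Fin k)
    (f : OmegaE G k E' χ → ℝ) (a b : OmegaE G k E' χ) :
    treeGen G k E' χ a b * (f a - f b) ^ 2 =
      (1 / (k : ℝ)) * if DiffOne a.1 b.1 then (f a - f b) ^ 2 else 0 := by
  by_cases hab : a = b
  · simp [hab]
  · rw [treeGen_of_ne _ _ _ _ hab]; split_ifs <;> simp

end TreeGenerator

/-! ### The random-transposition walk -/

section Perms

variable {α : Type*} [Fintype α] [DecidableEq α]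

/-- The permutations of `α` supported on the finite set `S`. -/
noncomputable def permsOn (S : Finset α) : Finset (Equiv.Perm α) :=
  Finset.univ.filter fun h => ∀ x ∉ S, h x = x

lemma mem_permsOn {S : Finset α} {h : Equiv.Perm α} :
    h ∈ permsOn S ↔ ∀ x ∉ S, h x = x := by simp [permsOn]

lemma permsOn_maps {S : Finset α} {h : Equiv.Perm α} (hh : h ∈ permsOn S) {x : α} (hx : x ∈ S) :
    h x ∈ S := by
  rw [mem_permsOn] at hh
  by_contra hc
  have := h.injective (hh _ hc)
  rw [this] at hc
  exact hc hx

lemma one_mem_permsOn (S : Finset α) : (1 : Equiv.Perm α) ∈ permsOn S := by simp [mem_permsOn]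

lemma mul_mem_permsOn {S : Finset α} {g h : Equiv.Perm α} (hg : g ∈ permsOn S)
    (hh : h ∈ permsOn S) : g * h ∈ permsOn S := by
  rw [mem_permsOn] at *
  intro x hx
  rw [Equiv.Perm.mul_apply, hh x hx, hg x hx]

lemma swap_mem_permsOn {S : Finset α} {i j : α} (hi : i ∈ S) (hj : j ∈ S) :
    Equiv.swap i j ∈ permsOn S := by
  rw [mem_permsOn]
  intro x hx
  exact Equiv.swap_apply_of_ne_of_ne (fun h => hx (h ▸ hi)) (fun h => hx (h ▸ hj))

lemma permsOn_mono {S T : Finset α} (h : S ⊆ T) : permsOn S ⊆ permsOn T := by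
  intro g hg
  rw [mem_permsOn] at *
  exact fun x hx => hg x fun hxS => hx (h hxS)

/-- Right multiplication by an element of `permsOn S` permutes `permsOn S`. -/
lemma sum_permsOn_mul_swap {S : Finset α} {i j : α} (hi : i ∈ S) (hj : j ∈ S)
    (φ : Equiv.Perm α → ℝ) :
    ∑ h ∈ permsOn S, φ (h * Equiv.swap i j) = ∑ h ∈ permsOn S, φ h := by
  refine Finset.sum_nbij' (fun h => h * Equiv.swap i j) (fun h => h * Equiv.swap i j) ?_ ?_ ?_ ?_ ?_
  · exact fun h hh => mul_mem_permsOn hh (swap_mem_permsOn hi hj)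
  · exact fun h hh => mul_mem_permsOn hh (swap_mem_permsOn hi hj)
  · intro h _; simp [mul_assoc]
  · intro h _; simp [mul_assoc]
  · intro h _; rfl

/-- The elements of `permsOn S` sending `j` to `y` form a coset of `permsOn (S.erase j)`. -/
lemma sum_coset {S : Finset α} {j y : α} (hj : j ∈ S) (hy : y ∈ S) (φ : Equiv.Perm α → ℝ) :
    ∑ h ∈ (permsOn S).filter (fun h => h j = y), φ h =
      ∑ h ∈ permsOn (S.erase j), φ (Equiv.swap j y * h) := by
  symm
  refine Finset.sum_nbij' (fun h => Equiv.swap j y * h) (fun h => Equiv.swap j y * h) ?_ ?_ ?_ ?_ ?_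
  · intro h hh
    rw [Finset.mem_filter]
    refine ⟨mul_mem_permsOn (swap_mem_permsOn hj hy) (permsOn_mono (Finset.erase_subset _ _) hh), ?_⟩
    rw [mem_permsOn] at hh
    rw [Equiv.Perm.mul_apply, hh j (by simp), Equiv.swap_apply_left]
  · intro h hh
    rw [Finset.mem_filter] at hh
    have h1 := mul_mem_permsOn (swap_mem_permsOn hj hy) hh.1
    rw [mem_permsOn] at h1 ⊢
    intro x hx
    by_cases hxj : x = j
    · rw [hxj, Equiv.Perm.mul_apply, hh.2, Equiv.swap_apply_right]
    · exact h1 x fun hxS => hx (Finset.mem_erase.mpr ⟨hxj, hxS⟩)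
  · intro h _; simp [← mul_assoc]
  · intro h _; simp [← mul_assoc]
  · intro h _; rfl

lemma sum_permsOn_fiber {S : Finset α} {j : α} (hj : j ∈ S) (φ : Equiv.Perm α → ℝ) :
    ∑ h ∈ permsOn S, φ h = ∑ y ∈ S, ∑ h ∈ (permsOn S).filter (fun h => h j = y), φ h :=
  (Finset.sum_fiberwise_of_maps_to (fun _ hh => permsOn_maps hh hj) φ).symm

lemma sum_permsOn_fiber' {S : Finset α} {y : α} (hy : y ∈ S) (φ : Equiv.Perm α → ℝ) :
    ∑ h ∈ permsOn S, φ h = ∑ j ∈ S, ∑ h ∈ (permsOn S).filter (fun h => h j = y), φ h := by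
  have : ∀ j, (permsOn S).filter (fun h => h j = y) =
      (permsOn S).filter (fun h => h.symm y = j) := by
    intro j; ext h; simp only [Finset.mem_filter, and_congr_right_iff]; intro _
    rw [Equiv.symm_apply_eq]; exact eq_comm
  simp only [this]
  refine (Finset.sum_fiberwise_of_maps_to (fun h hh => ?_) φ).symm
  by_contra hc
  have h1 := (mem_permsOn.mp hh) _ hc
  rw [Equiv.apply_symm_apply] at h1
  exact hc (h1 ▸ hy)

lemma card_coset {S : Finset α} {j y : α} (hj : j ∈ S) (hy : y ∈ S) :
    (((permsOn S).filter (fun h => h j = y)).card : ℝ) = (permsOn (S.erase j)).card := by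
  have := sum_coset hj hy (fun _ => (1 : ℝ))
  simpa using this

lemma card_permsOn {S : Finset α} {j : α} (hj : j ∈ S) :
    ((permsOn S).card : ℝ) = S.card * (permsOn (S.erase j)).card := by
  have := sum_permsOn_fiber hj (fun _ => (1 : ℝ))
  simp only [Finset.sum_const, nsmul_eq_mul, mul_one] at this
  rw [this, Finset.sum_congr rfl fun y hy => card_coset hj hy]
  simp

lemma card_permsOn_pos (S : Finset α) : 0 < ((permsOn S).card : ℝ) := by
  exact_mod_cast Finset.card_pos.mpr ⟨1, one_mem_permsOn S⟩

/-- `permsOn S` has a cardinality depending only on `S.card`. -/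
lemma card_permsOn_congr {S T : Finset α} (h : S.card = T.card) :
    ((permsOn S).card : ℝ) = (permsOn T).card := by
  induction hn : S.card generalizing S T with
  | zero =>
    have h1 : S = ∅ := Finset.card_eq_zero.mp hn
    have h2 : T = ∅ := Finset.card_eq_zero.mp (h ▸ hn)
    rw [h1, h2]
  | succ n ih =>
    obtain ⟨i, hi⟩ : S.Nonempty := Finset.card_pos.mp (by omega)
    obtain ⟨j, hj⟩ : T.Nonempty := Finset.card_pos.mp (by omega)
    rw [card_permsOn hi, card_permsOn hj, h]
    congr 1
    apply ih
    · rw [Finset.card_erase_of_mem hi, Finset.card_erase_of_mem hj, h]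
    · rw [Finset.card_erase_of_mem hi]; omega

lemma sum_pair_sq {ι : Type*} (s : Finset ι) (f : ι → ℝ) :
    ∑ a ∈ s, ∑ b ∈ s, (f a - f b) ^ 2 =
      2 * s.card * ∑ a ∈ s, f a ^ 2 - 2 * (∑ a ∈ s, f a) ^ 2 := by
  have h : ∀ a b, (f a - f b) ^ 2 = f a ^ 2 + f b ^ 2 - 2 * (f a * f b) := by intros; ring
  simp only [h, Finset.sum_sub_distrib, Finset.sum_add_distrib, Finset.sum_const, nsmul_eq_mul,
    ← Finset.mul_sum, ← Finset.sum_mul]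
  ring

/-- Two-point marginals of a uniform element of `permsOn S`. -/
lemma sum_two_point {S : Finset α} {j j' : α} (hj : j ∈ S) (hj' : j' ∈ S) (hne : j ≠ j')
    (φ ψ : α → ℝ) :
    ∑ h ∈ permsOn S, φ (h j) * ψ (h j') =
      (permsOn ((S.erase j).erase j')).card * ∑ y ∈ S, ∑ y' ∈ S.erase y, φ y * ψ y' := by
  rw [sum_permsOn_fiber hj, Finset.mul_sum]
  refine Finset.sum_congr rfl fun y hy => ?_
  have hj'2 : j' ∈ S.erase j := Finset.mem_erase.mpr ⟨hne.symm, hj'⟩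
  have e1 : ∑ h ∈ (permsOn S).filter (fun h => h j = y), φ (h j) * ψ (h j') =
      φ y * ∑ h ∈ (permsOn S).filter (fun h => h j = y), ψ (h j') := by
    rw [Finset.mul_sum]
    refine Finset.sum_congr rfl fun h hh => ?_
    rw [(Finset.mem_filter.mp hh).2]
  rw [e1, sum_coset hj hy, sum_permsOn_fiber hj'2]
  have e2 : ∀ z ∈ S.erase j, ∑ h ∈ (permsOn (S.erase j)).filter (fun h => h j' = z),
      ψ ((Equiv.swap j y * h) j') =
      (permsOn ((S.erase j).erase j')).card * ψ (Equiv.swap j y z) := by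
    intro z hz
    rw [← card_coset hj'2 hz, ← nsmul_eq_mul, ← Finset.sum_const]
    refine Finset.sum_congr rfl fun h hh => ?_
    rw [Equiv.Perm.mul_apply, (Finset.mem_filter.mp hh).2]
  rw [Finset.sum_congr rfl e2, ← Finset.mul_sum, ← Finset.mul_sum]
  have e3 : ∑ z ∈ S.erase j, ψ (Equiv.swap j y z) = ∑ y' ∈ S.erase y, ψ y' := by
    refine Finset.sum_nbij' (fun z => Equiv.swap j y z) (fun z => Equiv.swap j y z) ?_ ?_ ?_ ?_ ?_
    · intro z hz
      rw [Finset.mem_erase] at *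
      refine ⟨fun h => hz.1 ?_, ?_⟩
      · have := (Equiv.swap j y).injective (h.trans (Equiv.swap_apply_left j y).symm)
        exact this
      · exact permsOn_maps (swap_mem_permsOn hj hy) hz.2
    · intro z hz
      rw [Finset.mem_erase] at *
      refine ⟨fun h => hz.1 ?_, ?_⟩
      · have := (Equiv.swap j y).injective (h.trans (Equiv.swap_apply_right j y).symm)
        exact this
      · exact permsOn_maps (swap_mem_permsOn hj hy) hz.2
    · intro z _; simp
    · intro z _; simp
    · intro z _; rfl
  rw [e3]; ring

/-- The single-coordinate projections of a centred function on permutations are nearly orthogonal: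
this is the estimate that drives the induction in `transposition_gap`. -/
lemma sum_marginal_sq_le {S : Finset α} (hS : 2 ≤ S.card) (f : Equiv.Perm α → ℝ)
    (h0 : ∑ h ∈ permsOn S, f h = 0) :
    2 * ((S.card : ℝ) - 1) *
        ∑ j ∈ S, ∑ y ∈ S, (∑ h ∈ (permsOn S).filter (fun h => h j = y), f h) ^ 2 ≤
      ∑ g ∈ permsOn S, ∑ h ∈ permsOn S, (f g - f h) ^ 2 := by
  set a : α → α → ℝ := fun j y => ∑ h ∈ (permsOn S).filter (fun h => h j = y), f h with ha
  set A : ℝ := ∑ j ∈ S, ∑ y ∈ S, a j y ^ 2 with hA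
  change 2 * ((S.card : ℝ) - 1) * A ≤ _
  have hA0 : 0 ≤ A := Finset.sum_nonneg fun _ _ => Finset.sum_nonneg fun _ _ => sq_nonneg _
  have hrow : ∀ j ∈ S, ∑ y ∈ S, a j y = 0 := fun j hj => by
    rw [← h0, sum_permsOn_fiber hj]
  have hcol : ∀ y ∈ S, ∑ j ∈ S, a j y = 0 := fun y hy => by
    rw [← h0, sum_permsOn_fiber' hy]
  obtain ⟨j0, hj0⟩ : S.Nonempty := Finset.card_pos.mp (by omega)
  obtain ⟨j1, hj1⟩ : (S.erase j0).Nonempty := Finset.card_pos.mp (by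
    rw [Finset.card_erase_of_mem hj0]; omega)
  set q2 : ℝ := ((permsOn ((S.erase j0).erase j1)).card : ℝ) with hq2
  have hq2pos : 0 < q2 := card_permsOn_pos _
  have hq1 : ∀ j ∈ S, ((permsOn (S.erase j)).card : ℝ) = ((S.card : ℝ) - 1) * q2 := by
    intro j hj
    rw [card_permsOn_congr (S := S.erase j) (T := S.erase j0)
      (by rw [Finset.card_erase_of_mem hj, Finset.card_erase_of_mem hj0]), card_permsOn hj1,
      Finset.card_erase_of_mem hj0, Nat.cast_sub (by omega)]
    simp [hq2]
  have hq2' : ∀ j ∈ S, ∀ j' ∈ S.erase j,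
      ((permsOn ((S.erase j).erase j')).card : ℝ) = q2 := by
    intro j hj j' hj'
    apply card_permsOn_congr
    rw [Finset.card_erase_of_mem hj', Finset.card_erase_of_mem hj,
      Finset.card_erase_of_mem hj1, Finset.card_erase_of_mem hj0]
  have hN : ((permsOn S).card : ℝ) = S.card * (((S.card : ℝ) - 1) * q2) := by
    rw [card_permsOn hj0, hq1 j0 hj0]
  set g : Equiv.Perm α → ℝ := fun h => ∑ j ∈ S, a j (h j) with hg
  have hfg : ∑ h ∈ permsOn S, f h * g h = A := by
    simp only [hg, Finset.mul_sum]
    rw [Finset.sum_comm]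
    refine Finset.sum_congr rfl fun j hj => ?_
    rw [sum_permsOn_fiber hj]
    refine Finset.sum_congr rfl fun y _ => ?_
    rw [sq]
    nth_rewrite 2 [ha]
    simp only
    rw [Finset.mul_sum]
    refine Finset.sum_congr rfl fun h hh => ?_
    rw [(Finset.mem_filter.mp hh).2]; ring
  have hgg : ∑ h ∈ permsOn S, g h ^ 2 = S.card * q2 * A := by
    have e1 : ∀ h, g h ^ 2 = ∑ j ∈ S, ∑ j' ∈ S, a j (h j) * a j' (h j') := by
      intro h; rw [sq, hg, Finset.sum_mul_sum]
    simp only [e1]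
    rw [Finset.sum_comm]
    have e2 : ∀ j ∈ S, ∑ h ∈ permsOn S, ∑ j' ∈ S, a j (h j) * a j' (h j') =
        S.card * q2 * ∑ y ∈ S, a j y ^ 2 := by
      intro j hj
      rw [Finset.sum_comm, ← Finset.add_sum_erase _ _ hj]
      have d1 : ∑ h ∈ permsOn S, a j (h j) * a j (h j) =
          ((S.card : ℝ) - 1) * q2 * ∑ y ∈ S, a j y ^ 2 := by
        rw [sum_permsOn_fiber hj, Finset.mul_sum]
        refine Finset.sum_congr rfl fun y hy => ?_
        rw [← hq1 j hj, ← card_coset hj hy, ← nsmul_eq_mul, ← Finset.sum_const]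
        refine Finset.sum_congr rfl fun h hh => ?_
        rw [(Finset.mem_filter.mp hh).2, sq]
      have d2 : ∀ j' ∈ S.erase j, ∑ h ∈ permsOn S, a j (h j) * a j' (h j') =
          - q2 * ∑ y ∈ S, a j y * a j' y := by
        intro j' hj'
        have hj'S := Finset.mem_of_mem_erase hj'
        rw [sum_two_point hj hj'S (Finset.ne_of_mem_erase hj').symm, hq2' j hj j' hj']
        have : ∀ y ∈ S, ∑ y' ∈ S.erase y, a j y * a j' y' = - (a j y * a j' y) := by
          intro y hy
          rw [← Finset.mul_sum]
          have := Finset.add_sum_erase _ (a j') hy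
          rw [hrow j' hj'S] at this
          rw [show ∑ y' ∈ S.erase y, a j' y' = - a j' y by linarith]; ring
        rw [Finset.sum_congr rfl this, Finset.sum_neg_distrib]; ring
      rw [d1, Finset.sum_congr rfl d2, ← Finset.mul_sum]
      have d3 : ∑ j' ∈ S.erase j, ∑ y ∈ S, a j y * a j' y = - ∑ y ∈ S, a j y ^ 2 := by
        rw [Finset.sum_comm, ← Finset.sum_neg_distrib]
        refine Finset.sum_congr rfl fun y hy => ?_
        rw [← Finset.mul_sum]
        have := Finset.add_sum_erase _ (fun j => a j y) hj
        simp only [hcol y hy] at this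
        rw [show ∑ j' ∈ S.erase j, a j' y = - a j y by linarith]; ring
      rw [d3]; ring
    rw [Finset.sum_congr rfl e2, ← Finset.mul_sum]
  have hcs := Finset.sum_mul_sq_le_sq_mul_sq (permsOn S) f g
  rw [hfg, hgg] at hcs
  set F : ℝ := ∑ h ∈ permsOn S, f h ^ 2 with hF
  have hF0 : 0 ≤ F := Finset.sum_nonneg fun _ _ => sq_nonneg _
  have hcard : (2 : ℝ) ≤ S.card := by exact_mod_cast hS
  have hAle : A ≤ S.card * q2 * F := by
    rcases hA0.eq_or_lt with h | h
    · rw [← h]; positivity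
    · nlinarith
  rw [sum_pair_sq, h0, hN, ← hF]
  nlinarith [mul_le_mul_of_nonneg_left hAle (by linarith : (0:ℝ) ≤ (S.card : ℝ) - 1)]

/-- Spectral gap of the random-transposition walk on the permutations of `S`. -/
lemma transposition_gap (S : Finset α) (f : Equiv.Perm α → ℝ) :
    2 * (S.card : ℝ) * ∑ g ∈ permsOn S, ∑ h ∈ permsOn S, (f g - f h) ^ 2 ≤
      (permsOn S).card *
        ∑ i ∈ S, ∑ i' ∈ S, ∑ h ∈ permsOn S, (f h - f (h * Equiv.swap i i')) ^ 2 := by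
  induction hn : S.card generalizing S f with
  | zero =>
    simp only [Nat.cast_zero, mul_zero, zero_mul]
    positivity
  | succ n ih =>
    rcases Nat.lt_or_ge n 2 with hlt | hge
    · -- at most two positions: the permutations are explicit
      obtain ⟨j, hj⟩ : S.Nonempty := Finset.card_pos.mp (by omega)
      rcases (by omega : n = 0 ∨ n = 1) with rfl | rfl
      · have h1 : permsOn S = {1} := by
          obtain ⟨x, rfl⟩ := Finset.card_eq_one.mp hn
          ext h
          rw [Finset.mem_singleton]
          constructor
          · intro hh
            ext z
            by_cases hz : z = x
            · subst hz
              have := permsOn_maps hh (Finset.mem_singleton_self z)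
              rw [Finset.mem_singleton] at this
              rw [this]; rfl
            · exact mem_permsOn.mp hh z (by simpa using hz)
          · rintro rfl; exact one_mem_permsOn _
        rw [h1]
        simp only [Finset.sum_singleton, sub_self]
        norm_num
        positivity
      · obtain ⟨x, y, hxy, rfl⟩ := Finset.card_eq_two.mp hn
        have h1 : permsOn ({x, y} : Finset α) = {1, Equiv.swap x y} := by
          ext h
          rw [Finset.mem_insert, Finset.mem_singleton]
          constructor
          · intro hh
            have hx := permsOn_maps hh (x := x) (by simp)
            have hy := permsOn_maps hh (x := y) (by simp)
            simp only [Finset.mem_insert, Finset.mem_singleton] at hx hy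
            have hne : h x ≠ h y := fun e => hxy (h.injective e)
            have hoff : ∀ z, z ≠ x → z ≠ y → h z = z := fun z h1 h2 =>
              mem_permsOn.mp hh z (by simp [h1, h2])
            rcases hx with hx | hx
            · left
              have hy' : h y = y := by
                rcases hy with hy | hy
                · exact absurd (hx.trans hy.symm) hne
                · exact hy
              ext z
              by_cases hzx : z = x
              · rw [hzx, hx]; rfl
              by_cases hzy : z = y
              · rw [hzy, hy']; rfl
              exact hoff z hzx hzy
            · right
              have hy' : h y = x := by
                rcases hy with hy | hy
                · exact hy
                · exact absurd (hx.trans hy.symm) hne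
              ext z
              by_cases hzx : z = x
              · rw [hzx, hx, Equiv.swap_apply_left]
              by_cases hzy : z = y
              · rw [hzy, hy', Equiv.swap_apply_right]
              rw [hoff z hzx hzy, Equiv.swap_apply_of_ne_of_ne hzx hzy]
          · rintro (rfl | rfl)
            · exact one_mem_permsOn _
            · exact swap_mem_permsOn (by simp) (by simp)
        have hne1 : (1 : Equiv.Perm α) ≠ Equiv.swap x y := by
          intro e
          have := congrArg (fun s : Equiv.Perm α => s x) e
          simp at this
          exact hxy this
        rw [h1]
        rw [Finset.card_pair hne1]
        simp only [Finset.sum_pair hxy, Finset.sum_pair hne1, Equiv.swap_self, Equiv.swap_comm y x]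
        simp only [Equiv.swap_mul_self, one_mul, sub_self]
        have e : ∀ h : Equiv.Perm α, h * Equiv.refl α = h := fun h => mul_one h
        simp only [e, sub_self]
        norm_num
        nlinarith [sq_nonneg (f 1 - f (Equiv.swap x y))]
    · -- at least three positions: condition on the image of one position
      obtain ⟨j0, hj0⟩ : S.Nonempty := Finset.card_pos.mp (by omega)
      have hpos := card_permsOn_pos S
      set m : ℝ := (∑ h ∈ permsOn S, f h) / (permsOn S).card with hm
      set f0 : Equiv.Perm α → ℝ := fun h => f h - m with hf0
      have hsub : ∀ g h, f g - f h = f0 g - f0 h := by intro g h; simp [hf0]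
      simp only [hsub]
      have h0 : ∑ h ∈ permsOn S, f0 h = 0 := by
        simp only [hf0, Finset.sum_sub_distrib, Finset.sum_const, nsmul_eq_mul, hm]
        field_simp
        simp
      set V : ℝ := ∑ g ∈ permsOn S, ∑ h ∈ permsOn S, (f0 g - f0 h) ^ 2 with hV
      set e : α → α → ℝ := fun i i' =>
        ∑ h ∈ permsOn S, (f0 h - f0 (h * Equiv.swap i i')) ^ 2 with he
      set A : ℝ := ∑ j ∈ S, ∑ y ∈ S,
        (∑ h ∈ (permsOn S).filter (fun h => h j = y), f0 h) ^ 2 with hA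
      set q1 : ℝ := ((permsOn (S.erase j0)).card : ℝ) with hq1
      have hq1' : ∀ j ∈ S, ((permsOn (S.erase j)).card : ℝ) = q1 := fun j hj =>
        card_permsOn_congr (by rw [Finset.card_erase_of_mem hj, Finset.card_erase_of_mem hj0])
      have hq1pos : 0 < q1 := card_permsOn_pos _
      have hN : ((permsOn S).card : ℝ) = ((n : ℝ) + 1) * q1 := by
        rw [card_permsOn hj0, hn]; push_cast; rfl
      have hmar := sum_marginal_sq_le (by omega : 2 ≤ S.card) f0 h0
      rw [← hA, ← hV, hn] at hmar
      push_cast at hmar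
      -- the conditional variances
      have hcond : ∑ j ∈ S, ∑ y ∈ S, ∑ g ∈ (permsOn S).filter (fun h => h j = y),
          ∑ h ∈ (permsOn S).filter (fun h => h j = y), (f0 g - f0 h) ^ 2 = V - 2 * A := by
        have c1 : ∀ j ∈ S, ∀ y ∈ S, ∑ g ∈ (permsOn S).filter (fun h => h j = y),
            ∑ h ∈ (permsOn S).filter (fun h => h j = y), (f0 g - f0 h) ^ 2 =
            2 * q1 * ∑ h ∈ (permsOn S).filter (fun h => h j = y), f0 h ^ 2 -
            2 * (∑ h ∈ (permsOn S).filter (fun h => h j = y), f0 h) ^ 2 := by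
          intro j hj y hy
          rw [sum_pair_sq, card_coset hj hy, hq1' j hj]
        rw [Finset.sum_congr rfl fun j hj => Finset.sum_congr rfl (c1 j hj)]
        simp only [Finset.sum_sub_distrib, ← Finset.mul_sum]
        rw [Finset.sum_congr rfl fun j hj => (sum_permsOn_fiber hj (fun h => f0 h ^ 2)).symm]
        rw [hV, sum_pair_sq, h0, hN, Finset.sum_const, hn]
        simp only [nsmul_eq_mul]
        push_cast
        ring
      have hih : ∀ j ∈ S, ∀ y ∈ S,
          2 * (n : ℝ) * ∑ g ∈ (permsOn S).filter (fun h => h j = y),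
            ∑ h ∈ (permsOn S).filter (fun h => h j = y), (f0 g - f0 h) ^ 2 ≤
          q1 * ∑ i ∈ S.erase j, ∑ i' ∈ S.erase j,
            ∑ h ∈ (permsOn S).filter (fun h => h j = y),
              (f0 h - f0 (h * Equiv.swap i i')) ^ 2 := by
        intro j hj y hy
        have hc : (S.erase j).card = n := by rw [Finset.card_erase_of_mem hj]; omega
        have := ih (S.erase j) (fun h => f0 (Equiv.swap j y * h)) hc
        rw [hq1' j hj] at this
        simp only [sum_coset hj hy]
        simpa only [mul_assoc] using this
      have hsum : ∑ j ∈ S, ∑ y ∈ S, ∑ i ∈ S.erase j, ∑ i' ∈ S.erase j,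
            ∑ h ∈ (permsOn S).filter (fun h => h j = y),
              (f0 h - f0 (h * Equiv.swap i i')) ^ 2 =
          ((n : ℝ) - 1) * ∑ i ∈ S, ∑ i' ∈ S, e i i' := by
        have s1 : ∀ j ∈ S, ∑ y ∈ S, ∑ i ∈ S.erase j, ∑ i' ∈ S.erase j,
            ∑ h ∈ (permsOn S).filter (fun h => h j = y),
              (f0 h - f0 (h * Equiv.swap i i')) ^ 2 =
            ∑ i ∈ S.erase j, ∑ i' ∈ S.erase j, e i i' := by
          intro j hj
          rw [Finset.sum_comm]
          refine Finset.sum_congr rfl fun i _ => ?_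
          rw [Finset.sum_comm]
          refine Finset.sum_congr rfl fun i' _ => ?_
          rw [he]
          simp only
          rw [sum_permsOn_fiber hj]
        rw [Finset.sum_congr rfl s1]
        have s2 : ∀ j ∈ S, ∑ i ∈ S.erase j, ∑ i' ∈ S.erase j, e i i' =
            ∑ i ∈ S, ∑ i' ∈ S, e i i' - ∑ i' ∈ S, e j i' - ∑ i ∈ S, e i j := by
          intro j hj
          have hjj : e j j = 0 := by
            simp only [he, Equiv.swap_self]
            refine Finset.sum_eq_zero fun h _ => ?_
            rw [show h * Equiv.refl α = h from mul_one h]; ring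
          have t1 : ∀ i, ∑ i' ∈ S.erase j, e i i' = ∑ i' ∈ S, e i i' - e i j := by
            intro i; rw [← Finset.add_sum_erase _ _ hj]; ring
          rw [Finset.sum_congr rfl fun i _ => t1 i, Finset.sum_sub_distrib,
            ← Finset.add_sum_erase S (fun i => ∑ i' ∈ S, e i i') hj,
            ← Finset.add_sum_erase S (fun i => e i j) hj, hjj]
          ring
        rw [Finset.sum_congr rfl s2]
        simp only [Finset.sum_sub_distrib, Finset.sum_const, nsmul_eq_mul, hn]
        rw [Finset.sum_comm (f := fun j i => e i j)]
        push_cast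
        ring
      have htot : 2 * (n : ℝ) * (V - 2 * A) ≤ q1 * (((n : ℝ) - 1) * ∑ i ∈ S, ∑ i' ∈ S, e i i') := by
        rw [← hcond, ← hsum, Finset.mul_sum, Finset.mul_sum]
        refine Finset.sum_le_sum fun j hj => ?_
        rw [Finset.mul_sum, Finset.mul_sum]
        exact Finset.sum_le_sum fun y hy => hih j hj y hy
      have hn2 : (2 : ℝ) ≤ n := by exact_mod_cast hge
      rw [hN]
      push_cast
      change 2 * ((n : ℝ) + 1) * V ≤ ((n : ℝ) + 1) * q1 * ∑ i ∈ S, ∑ i' ∈ S, e i i'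
      have hfin : 2 * V ≤ q1 * ∑ i ∈ S, ∑ i' ∈ S, e i i' := by
        have : 2 * V * ((n : ℝ) - 1) ≤ (q1 * ∑ i ∈ S, ∑ i' ∈ S, e i i') * ((n : ℝ) - 1) := by
          nlinarith
        exact le_of_mul_le_mul_right this (by linarith)
      nlinarith

end Perms

/-! ### Averages and the star-transposition walk -/

section Avg

variable {ι : Type*}

/-- The average of `f` over the finite set `s` (zero when `s` is empty). -/
noncomputable def avg (s : Finset ι) (f : ι → ℝ) : ℝ := (∑ a ∈ s, f a) / s.card

lemma card_mul_avg (s : Finset ι) (f : ι → ℝ) : (s.card : ℝ) * avg s f = ∑ a ∈ s, f a := by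
  rcases s.eq_empty_or_nonempty with rfl | hs
  · simp [avg]
  · have : (s.card : ℝ) ≠ 0 := by exact_mod_cast hs.card_pos.ne'
    rw [avg]; field_simp

lemma sum_sq_sub_avg (s : Finset ι) (f : ι → ℝ) (c : ℝ) :
    ∑ a ∈ s, (f a - c) ^ 2 = ∑ a ∈ s, (f a - avg s f) ^ 2 + s.card * (avg s f - c) ^ 2 := by
  have h := card_mul_avg s f
  have e : ∀ a, (f a - c) ^ 2 = (f a - avg s f) ^ 2 + 2 * (avg s f - c) * f a
      + (c ^ 2 - avg s f ^ 2) := by intro a; ring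
  simp only [e]
  rw [Finset.sum_add_distrib, Finset.sum_add_distrib, ← Finset.mul_sum, ← h, Finset.sum_const,
    nsmul_eq_mul]
  ring

lemma card_mul_avg_sub_sq_le (s : Finset ι) (f : ι → ℝ) (c : ℝ) :
    s.card * (avg s f - c) ^ 2 ≤ ∑ a ∈ s, (f a - c) ^ 2 := by
  rw [sum_sq_sub_avg]
  have : 0 ≤ ∑ a ∈ s, (f a - avg s f) ^ 2 := Finset.sum_nonneg fun _ _ => sq_nonneg _
  linarith

lemma sum_sq_avg_le (s : Finset ι) (f : ι → ℝ) (c : ℝ) :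
    ∑ a ∈ s, (f a - avg s f) ^ 2 ≤ ∑ a ∈ s, (f a - c) ^ 2 := by
  rw [sum_sq_sub_avg s f c]
  have : 0 ≤ (s.card : ℝ) * (avg s f - c) ^ 2 := by positivity
  linarith

lemma sum_pair_sq_avg (s : Finset ι) (f : ι → ℝ) :
    ∑ a ∈ s, ∑ b ∈ s, (f a - f b) ^ 2 = 2 * s.card * ∑ a ∈ s, (f a - avg s f) ^ 2 := by
  have h := card_mul_avg s f
  have h2 := sum_sq_sub_avg s f 0
  simp only [sub_zero] at h2
  rw [sum_pair_sq, h2, ← h]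
  ring

lemma avg_sub (s : Finset ι) (f g : ι → ℝ) : avg s f - avg s g = avg s fun a => f a - g a := by
  simp only [avg, Finset.sum_sub_distrib, sub_div]

lemma card_mul_avg_sq_le (s : Finset ι) (f : ι → ℝ) :
    s.card * avg s f ^ 2 ≤ ∑ a ∈ s, f a ^ 2 := by
  simpa using card_mul_avg_sub_sq_le s f 0

end Avg

section Stars

variable {α : Type*} [Fintype α] [DecidableEq α]

/-- The bijections agreeing with `g` off `S`: the left coset `g * permsOn S`. -/
noncomputable def cosetOn (g : Equiv.Perm α) (S : Finset α) : Finset (Equiv.Perm α) :=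
  Finset.univ.filter fun σ => ∀ x ∉ S, σ x = g x

lemma mem_cosetOn {g σ : Equiv.Perm α} {S : Finset α} :
    σ ∈ cosetOn g S ↔ ∀ x ∉ S, σ x = g x := by simp [cosetOn]

lemma sum_cosetOn (g : Equiv.Perm α) (S : Finset α) (φ : Equiv.Perm α → ℝ) :
    ∑ σ ∈ cosetOn g S, φ σ = ∑ h ∈ permsOn S, φ (g * h) := by
  symm
  refine Finset.sum_nbij' (fun h => g * h) (fun σ => g⁻¹ * σ) ?_ ?_ ?_ ?_ ?_
  · intro h hh
    rw [mem_permsOn] at hh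
    rw [mem_cosetOn]
    intro x hx
    rw [Equiv.Perm.mul_apply, hh x hx]
  · intro σ hσ
    rw [mem_cosetOn] at hσ
    rw [mem_permsOn]
    intro x hx
    rw [Equiv.Perm.mul_apply, hσ x hx]; simp
  · intro h _; simp
  · intro h _; simp
  · intro h _; rfl

lemma card_cosetOn (g : Equiv.Perm α) (S : Finset α) :
    ((cosetOn g S).card : ℝ) = (permsOn S).card := by
  simpa using sum_cosetOn g S (fun _ => (1 : ℝ))

lemma avg_cosetOn (g : Equiv.Perm α) (S : Finset α) (φ : Equiv.Perm α → ℝ) :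
    avg (cosetOn g S) φ = avg (permsOn S) fun h => φ (g * h) := by
  rw [avg, avg, sum_cosetOn, card_cosetOn]

lemma cosetOn_filter {g : Equiv.Perm α} {S : Finset α} {p a : α} (hp : p ∈ S)
    (ha : g.symm a ∈ S) :
    (cosetOn g S).filter (fun σ => σ p = a) =
      cosetOn (g * Equiv.swap p (g.symm a)) (S.erase p) := by
  ext σ
  rw [Finset.mem_filter, mem_cosetOn, mem_cosetOn]
  constructor
  · rintro ⟨h1, h2⟩ x hx
    by_cases hxp : x = p
    · rw [hxp, h2]; simp
    · have hxS : x ∉ S := fun h => hx (Finset.mem_erase.mpr ⟨hxp, h⟩)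
      rw [Equiv.Perm.mul_apply, Equiv.swap_apply_of_ne_of_ne hxp (fun h => hxS (h ▸ ha))]
      exact h1 x hxS
  · intro h
    refine ⟨fun x hx => ?_, ?_⟩
    · have hxp : x ≠ p := fun h => hx (h ▸ hp)
      rw [h x (fun h => hx (Finset.mem_of_mem_erase h)), Equiv.Perm.mul_apply,
        Equiv.swap_apply_of_ne_of_ne hxp (fun h => hx (h ▸ ha))]
    · rw [h p (by simp)]; simp

/-- Poincaré inequality for the star transpositions `swap o j`. -/
lemma star_poincare {S : Finset α} {o : α} (ho : o ∈ S) (f : Equiv.Perm α → ℝ) :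
    ∑ h ∈ permsOn S, (f h - avg (permsOn S) f) ^ 2 ≤
      3 * ∑ j ∈ S.erase o, ∑ h ∈ permsOn S, (f h - f (h * Equiv.swap o j)) ^ 2 := by
  set E : α → α → ℝ := fun i i' => ∑ h ∈ permsOn S, (f h - f (h * Equiv.swap i i')) ^ 2 with hE
  have hE0 : ∀ i i', 0 ≤ E i i' := fun i i' => Finset.sum_nonneg fun _ _ => sq_nonneg _
  have hself : ∀ i, E i i = 0 := by
    intro i
    simp only [hE, Equiv.swap_self]
    refine Finset.sum_eq_zero fun h _ => ?_
    rw [show h * Equiv.refl α = h from mul_one h]; ring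
  have hsymm : ∀ i i', E i i' = E i' i := by
    intro i i'; simp only [hE, Equiv.swap_comm i i']
  have hbd : ∀ i ∈ S, ∀ i' ∈ S, E i i' ≤ 6 * E o i + 3 * E o i' := by
    intro i hi i' hi'
    by_cases h1 : i = o
    · subst h1; have := hE0 i i'; rw [hself]; linarith
    by_cases h2 : i' = o
    · subst h2; have := hE0 i' i; rw [hself, hsymm]; linarith
    by_cases h3 : i = i'
    · subst h3; have := hE0 o i; rw [hself]; linarith
    -- a transposition is a product of three star transpositions
    have hsw : Equiv.swap i i' = Equiv.swap o i * Equiv.swap o i' * Equiv.swap o i := by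
      ext z
      simp only [Equiv.Perm.mul_apply, Equiv.swap_apply_def]
      grind
    have e1 : E o i' = ∑ h ∈ permsOn S, (f (h * Equiv.swap o i)
        - f (h * Equiv.swap o i * Equiv.swap o i')) ^ 2 := by
      simp only [hE]
      exact (sum_permsOn_mul_swap ho hi
        (fun h => (f h - f (h * Equiv.swap o i')) ^ 2)).symm
    have e2 : E o i = ∑ h ∈ permsOn S, (f (h * Equiv.swap o i * Equiv.swap o i')
        - f (h * Equiv.swap o i * Equiv.swap o i' * Equiv.swap o i)) ^ 2 := by
      simp only [hE]
      rw [sum_permsOn_mul_swap ho hi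
        (fun h => (f (h * Equiv.swap o i') - f (h * Equiv.swap o i' * Equiv.swap o i)) ^ 2),
        sum_permsOn_mul_swap ho hi' (fun h => (f h - f (h * Equiv.swap o i)) ^ 2)]
    have e3 : E i i' ≤ 3 * E o i + 3 * E o i' + 3 * E o i := by
      nth_rewrite 2 [e2]
      rw [e1]
      simp only [hE, hsw]
      rw [Finset.mul_sum, Finset.mul_sum, Finset.mul_sum, ← Finset.sum_add_distrib,
        ← Finset.sum_add_distrib]
      refine Finset.sum_le_sum fun h _ => ?_
      rw [← mul_assoc, ← mul_assoc]
      set a := f h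
      set b := f (h * Equiv.swap o i)
      set c := f (h * Equiv.swap o i * Equiv.swap o i')
      set e := f (h * Equiv.swap o i * Equiv.swap o i' * Equiv.swap o i)
      nlinarith [sq_nonneg (a - b - (b - c)), sq_nonneg (b - c - (c - e)),
        sq_nonneg (a - b - (c - e))]
    linarith
  have hsum : ∑ i ∈ S, ∑ i' ∈ S, E i i' ≤ 9 * S.card * ∑ j ∈ S.erase o, E o j := by
    have t : ∑ j ∈ S.erase o, E o j = ∑ j ∈ S, E o j := by
      rw [← Finset.add_sum_erase _ _ ho, hself]; ring
    rw [t]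
    calc ∑ i ∈ S, ∑ i' ∈ S, E i i' ≤ ∑ i ∈ S, ∑ i' ∈ S, (6 * E o i + 3 * E o i') :=
          Finset.sum_le_sum fun i hi => Finset.sum_le_sum fun i' hi' => hbd i hi i' hi'
      _ = _ := by
          simp only [Finset.sum_add_distrib, Finset.sum_const, nsmul_eq_mul, ← Finset.mul_sum]
          ring
  have hgap := transposition_gap S f
  rw [sum_pair_sq_avg] at hgap
  have hpos := card_permsOn_pos S
  have hS : (0 : ℝ) < S.card := by exact_mod_cast Finset.card_pos.mpr ⟨o, ho⟩
  set X := ∑ h ∈ permsOn S, (f h - avg (permsOn S) f) ^ 2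
  set D := ∑ j ∈ S.erase o, E o j with hD
  change X ≤ 3 * D
  have hD0 : 0 ≤ D := Finset.sum_nonneg fun _ _ => hE0 _ _
  have h1 : (2 * (S.card : ℝ) * (2 * (permsOn S).card * X)) ≤
      (permsOn S).card * (9 * S.card * D) :=
    hgap.trans (mul_le_mul_of_nonneg_left hsum hpos.le)
  clear_value X D
  clear hgap hsum hbd
  generalize ((permsOn S).card : ℝ) = P at *
  generalize (S.card : ℝ) = s at *
  have h2 : (P * s) * (4 * X) ≤ (P * s) * (9 * D) := by linarith
  have h3 := le_of_mul_le_mul_left h2 (by positivity)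
  linarith

/-- Conditioning on the colour in the hole `o` changes the mean by at most the star energy
per state. -/
lemma star_hole {S : Finset α} {o y : α} (ho : o ∈ S) (hy : y ∈ S) (f : Equiv.Perm α → ℝ) :
    (permsOn S).card *
      (avg (permsOn S) f - avg ((permsOn S).filter fun h => h o = y) f) ^ 2 ≤
      ∑ j ∈ S.erase o, ∑ h ∈ permsOn S, (f h - f (h * Equiv.swap o j)) ^ 2 := by
  set H := (permsOn S).filter fun h => h o = y with hH
  have hHc : (H.card : ℝ) = (permsOn (S.erase o)).card := card_coset ho hy
  have hN := card_permsOn ho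
  have hpos := card_permsOn_pos S
  have hS : (0 : ℝ) < S.card := by exact_mod_cast Finset.card_pos.mpr ⟨o, ho⟩
  have hmove : ∀ j ∈ S, ∑ h ∈ (permsOn S).filter (fun h => h j = y), f h =
      ∑ h ∈ H, f (h * Equiv.swap o j) := by
    intro j hj
    refine Finset.sum_nbij' (fun h => h * Equiv.swap o j) (fun h => h * Equiv.swap o j)
      ?_ ?_ ?_ ?_ ?_
    · intro h hh
      rw [Finset.mem_filter] at hh ⊢
      exact ⟨mul_mem_permsOn hh.1 (swap_mem_permsOn ho hj), by simp [hh.2]⟩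
    · intro h hh
      rw [Finset.mem_filter] at hh ⊢
      exact ⟨mul_mem_permsOn hh.1 (swap_mem_permsOn ho hj), by simp [hh.2]⟩
    · intro h _; simp [mul_assoc]
    · intro h _; simp [mul_assoc]
    · intro h _; simp [mul_assoc]
  have hdiff : (permsOn S).card * (avg (permsOn S) f - avg H f) =
      ∑ x ∈ S ×ˢ H, (f (x.2 * Equiv.swap o x.1) - f x.2) := by
    rw [mul_sub, card_mul_avg, hN, ← hHc, mul_assoc, card_mul_avg, Finset.sum_product,
      sum_permsOn_fiber' hy, Finset.sum_congr rfl hmove]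
    simp only [Finset.sum_sub_distrib, Finset.sum_const, nsmul_eq_mul]
  have hcs := sq_sum_le_card_mul_sum_sq (s := S ×ˢ H)
    (f := fun x => f (x.2 * Equiv.swap o x.1) - f x.2)
  rw [← hdiff, Finset.card_product] at hcs
  push_cast at hcs
  rw [hHc, ← hN] at hcs
  have hle : ∑ x ∈ S ×ˢ H, (f (x.2 * Equiv.swap o x.1) - f x.2) ^ 2 ≤
      ∑ j ∈ S.erase o, ∑ h ∈ permsOn S, (f h - f (h * Equiv.swap o j)) ^ 2 := by
    rw [Finset.sum_product, ← Finset.add_sum_erase _ _ ho]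
    have z : ∑ h ∈ H, (f (h * Equiv.swap o o) - f h) ^ 2 = 0 := by
      refine Finset.sum_eq_zero fun h _ => ?_
      rw [Equiv.swap_self, show h * Equiv.refl α = h from mul_one h]; ring
    simp only
    rw [z, zero_add]
    refine Finset.sum_le_sum fun j _ => ?_
    calc ∑ h ∈ H, (f (h * Equiv.swap o j) - f h) ^ 2
        = ∑ h ∈ H, (f h - f (h * Equiv.swap o j)) ^ 2 :=
          Finset.sum_congr rfl fun _ _ => by ring
      _ ≤ _ := Finset.sum_le_sum_of_subset_of_nonneg (Finset.filter_subset _ _)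
          fun _ _ _ => sq_nonneg _
  set A := avg (permsOn S) f - avg H f
  set N : ℝ := ((permsOn S).card : ℝ)
  set R := ∑ j ∈ S.erase o, ∑ h ∈ permsOn S, (f h - f (h * Equiv.swap o j)) ^ 2
  have : N * (N * A ^ 2) ≤ N * R := by
    have := hcs.trans (mul_le_mul_of_nonneg_left hle hpos.le)
    nlinarith
  exact le_of_mul_le_mul_left this hpos

lemma star_poincare_coset (g : Equiv.Perm α) {S : Finset α} {o : α} (ho : o ∈ S)
    (f : Equiv.Perm α → ℝ) :
    ∑ σ ∈ cosetOn g S, (f σ - avg (cosetOn g S) f) ^ 2 ≤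
      3 * ∑ j ∈ S.erase o, ∑ σ ∈ cosetOn g S, (f σ - f (σ * Equiv.swap o j)) ^ 2 := by
  have := star_poincare ho (fun h => f (g * h))
  simpa only [sum_cosetOn, avg_cosetOn, mul_assoc] using this

lemma star_hole_coset (g : Equiv.Perm α) {S : Finset α} {o y : α} (ho : o ∈ S)
    (hy : g.symm y ∈ S) (f : Equiv.Perm α → ℝ) :
    (permsOn S).card *
      (avg (cosetOn g S) f - avg ((cosetOn g S).filter fun σ => σ o = y) f) ^ 2 ≤
      ∑ j ∈ S.erase o, ∑ σ ∈ cosetOn g S, (f σ - f (σ * Equiv.swap o j)) ^ 2 := by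
  have := star_hole ho hy (fun h => f (g * h))
  have e : avg ((cosetOn g S).filter fun σ => σ o = y) f =
      avg ((permsOn S).filter fun h => h o = g.symm y) fun h => f (g * h) := by
    have es : ∀ φ : Equiv.Perm α → ℝ, ∑ σ ∈ (cosetOn g S).filter (fun σ => σ o = y), φ σ =
        ∑ h ∈ (permsOn S).filter (fun h => h o = g.symm y), φ (g * h) := by
      intro φ
      rw [Finset.sum_filter, Finset.sum_filter, sum_cosetOn]
      refine Finset.sum_congr rfl fun h _ => ?_
      have : (g * h) o = y ↔ h o = g.symm y := by
        rw [Equiv.Perm.mul_apply, Equiv.eq_symm_apply]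
      simp only [this]
    have ec := es (fun _ => 1)
    simp only [Finset.sum_const, nsmul_eq_mul, mul_one] at ec
    rw [avg, avg, es, ec]
  rw [e]
  simpa only [sum_cosetOn, avg_cosetOn, mul_assoc] using this

end Stars

/-! ### Stars with one restricted position -/

section RestrictedStar

variable {α : Type*} [Fintype α] [DecidableEq α]

/-- Bijections agreeing with `g` off `S` whose value at the restricted position `p` lies in `A`. -/
noncomputable def rsSet (g : Equiv.Perm α) (S : Finset α) (p : α) (A : Finset α) :
    Finset (Equiv.Perm α) :=
  (cosetOn g S).filter fun σ => σ p ∈ A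

/-- Energy of the star moves `σ ↦ σ * swap o j` inside `rsSet g S p A`, the move at the restricted
position `p` carrying the weight `θ`. -/
noncomputable def rsForm (g : Equiv.Perm α) (S : Finset α) (o p : α) (A : Finset α) (θ : ℝ)
    (f : Equiv.Perm α → ℝ) : ℝ :=
  ∑ j ∈ (S.erase p).erase o, ∑ σ ∈ rsSet g S p A, (f σ - f (σ * Equiv.swap o j)) ^ 2 +
    θ * ∑ σ ∈ (rsSet g S p A).filter (fun σ => σ o ∈ A), (f σ - f (σ * Equiv.swap o p)) ^ 2

lemma sum_rsSet (g : Equiv.Perm α) (S : Finset α) (p : α) (A : Finset α)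
    (φ : Equiv.Perm α → ℝ) :
    ∑ σ ∈ rsSet g S p A, φ σ = ∑ a ∈ A, ∑ σ ∈ (cosetOn g S).filter (fun σ => σ p = a), φ σ := by
  rw [← Finset.sum_fiberwise_of_maps_to (s := rsSet g S p A) (t := A) (g := fun σ => σ p)
    (fun σ hσ => (Finset.mem_filter.mp hσ).2)]
  refine Finset.sum_congr rfl fun a ha => ?_
  refine Finset.sum_congr ?_ fun _ _ => rfl
  ext σ
  simp only [rsSet, Finset.mem_filter]
  constructor
  · rintro ⟨⟨h1, _⟩, h3⟩; exact ⟨h1, h3⟩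
  · rintro ⟨h1, h3⟩; exact ⟨⟨h1, h3 ▸ ha⟩, h3⟩

variable {g : Equiv.Perm α} {S : Finset α} {o p : α} {A : Finset α}

lemma symm_mul_swap_mem (hp : p ∈ S) {a y : α} (ha : g.symm a ∈ S) (hy : g.symm y ∈ S)
    (hne : y ≠ a) : (g * Equiv.swap p (g.symm a)).symm y ∈ S.erase p := by
  have e : (g * Equiv.swap p (g.symm a)).symm y = Equiv.swap p (g.symm a) (g.symm y) := by
    rw [Equiv.symm_apply_eq]; simp
  rw [e, Finset.mem_erase]
  refine ⟨fun h => hne ?_, permsOn_maps (swap_mem_permsOn hp ha) hy⟩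
  have h2 := (Equiv.swap p (g.symm a)).injective
    (h.trans (Equiv.swap_apply_right p (g.symm a)).symm)
  exact g.symm.injective h2

lemma card_fiber (hp : p ∈ S) {a : α} (ha : g.symm a ∈ S) :
    (((cosetOn g S).filter fun σ => σ p = a).card : ℝ) = (permsOn (S.erase p)).card := by
  rw [cosetOn_filter hp ha, card_cosetOn]

lemma card_fiber₂ (hp : p ∈ S) (ho : o ∈ S) (hop : o ≠ p) {a y : α} (ha : g.symm a ∈ S)
    (hy : g.symm y ∈ S) (hne : y ≠ a) :
    ((((cosetOn g S).filter fun σ => σ p = a).filter fun σ => σ o = y).card : ℝ) =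
      (permsOn ((S.erase p).erase o)).card := by
  rw [cosetOn_filter hp ha, card_fiber (Finset.mem_erase.mpr ⟨hop, ho⟩)
    (symm_mul_swap_mem hp ha hy hne)]

lemma card_rsSet (hp : p ∈ S) (hA : ∀ a ∈ A, g.symm a ∈ S) :
    ((rsSet g S p A).card : ℝ) = A.card * (permsOn (S.erase p)).card := by
  have := sum_rsSet g S p A (fun _ => 1)
  simp only [Finset.sum_const, nsmul_eq_mul, mul_one] at this
  rw [this, Finset.sum_congr rfl fun a ha => card_fiber hp (hA a ha)]
  simp

lemma sum_rsSet_filter (y : α) (φ : Equiv.Perm α → ℝ) (hop : o ≠ p) :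
    ∑ σ ∈ (rsSet g S p A).filter (fun σ => σ o = y), φ σ =
      ∑ a ∈ A.erase y, ∑ σ ∈ ((cosetOn g S).filter (fun σ => σ p = a)).filter
        (fun σ => σ o = y), φ σ := by
  have h0 : ((cosetOn g S).filter (fun σ => σ p = y)).filter (fun σ => σ o = y) = ∅ := by
    rw [Finset.filter_eq_empty_iff]
    intro σ hσ h
    exact hop (σ.injective (h.trans (Finset.mem_filter.mp hσ).2.symm))
  rw [Finset.sum_filter, sum_rsSet]
  simp only [← Finset.sum_filter]
  by_cases hy : y ∈ A
  · rw [← Finset.add_sum_erase _ _ hy, h0]; simp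
  · rw [Finset.erase_eq_of_notMem hy]

lemma card_rsSet_filter (hp : p ∈ S) (ho : o ∈ S) (hop : o ≠ p)
    (hA : ∀ a ∈ A, g.symm a ∈ S) {y : α} (hy : g.symm y ∈ S) :
    (((rsSet g S p A).filter fun σ => σ o = y).card : ℝ) =
      (A.erase y).card * (permsOn ((S.erase p).erase o)).card := by
  have := sum_rsSet_filter (g := g) (S := S) (A := A) y (fun _ => 1) hop
  simp only [Finset.sum_const, nsmul_eq_mul, mul_one] at this
  rw [this, Finset.sum_congr rfl fun a ha => card_fiber₂ hp ho hop
    (hA a (Finset.mem_of_mem_erase ha)) hy (Finset.ne_of_mem_erase ha).symm]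
  simp

lemma rsForm_nonneg {θ : ℝ} (hθ : 0 ≤ θ) (f : Equiv.Perm α → ℝ) : 0 ≤ rsForm g S o p A θ f := by
  unfold rsForm; positivity

/-- Poincaré inequality and hole estimate for a star with one restricted position. -/
lemma restricted_star (hp : p ∈ S) (ho : o ∈ S) (hop : o ≠ p) (hA : ∀ a ∈ A, g.symm a ∈ S)
    (hA0 : A.Nonempty) {θ : ℝ} (hθ : (S.card : ℝ) - 1 ≤ θ * A.card) (f : Equiv.Perm α → ℝ) :
    (∑ σ ∈ rsSet g S p A, (f σ - avg (rsSet g S p A) f) ^ 2 ≤ 6 * rsForm g S o p A θ f) ∧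
    (∀ y, g.symm y ∈ S → (A.erase y).Nonempty →
      (rsSet g S p A).card * (avg ((rsSet g S p A).filter fun σ => σ o = y) f
        - avg (rsSet g S p A) f) ^ 2 ≤ 16 * rsForm g S o p A θ f) := by
  have hoS : o ∈ S.erase p := Finset.mem_erase.mpr ⟨hop, ho⟩
  set C := rsSet g S p A with hC
  set fib : α → Finset (Equiv.Perm α) := fun a => (cosetOn g S).filter (fun σ => σ p = a)
    with hfib
  set q : ℝ := ((permsOn (S.erase p)).card : ℝ) with hq
  set q2 : ℝ := ((permsOn ((S.erase p).erase o)).card : ℝ) with hq2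
  have hqpos : 0 < q := card_permsOn_pos _
  have hq2pos : 0 < q2 := card_permsOn_pos _
  have hSpos : 1 ≤ S.card := Finset.card_pos.mpr ⟨o, ho⟩
  have hqq2 : q = ((S.card : ℝ) - 1) * q2 := by
    rw [hq, card_permsOn hoS, Finset.card_erase_of_mem hp, Nat.cast_sub hSpos]
    simp [hq2]
  set s : ℝ := (A.card : ℝ) with hs
  have hspos : 0 < s := by rw [hs]; exact_mod_cast hA0.card_pos
  have hcardC : (C.card : ℝ) = s * q := card_rsSet hp hA
  set F : α → ℝ := fun a => avg (fib a) f with hF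
  set F2 : α → α → ℝ := fun a y => avg ((fib a).filter fun σ => σ o = y) f with hF2
  set Da : α → ℝ := fun a => ∑ j ∈ (S.erase p).erase o, ∑ σ ∈ fib a,
    (f σ - f (σ * Equiv.swap o j)) ^ 2 with hDa
  set P : α → α → ℝ := fun a b => ∑ σ ∈ (fib a).filter (fun σ => σ o = b),
    (f σ - f (σ * Equiv.swap o p)) ^ 2 with hPdef
  have hDa0 : ∀ a, 0 ≤ Da a := fun a =>
    Finset.sum_nonneg fun _ _ => Finset.sum_nonneg fun _ _ => sq_nonneg _
  have hP0 : ∀ a b, 0 ≤ P a b := fun a b => Finset.sum_nonneg fun _ _ => sq_nonneg _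
  have hcf : ∀ a ∈ A, ((fib a).card : ℝ) = q := fun a ha => card_fiber hp (hA a ha)
  have hpoin : ∀ a ∈ A, ∑ σ ∈ fib a, (f σ - F a) ^ 2 ≤ 3 * Da a := by
    intro a ha
    simp only [hF, hDa, hfib]
    rw [cosetOn_filter hp (hA a ha)]
    exact star_poincare_coset _ hoS f
  have hhole : ∀ a ∈ A, ∀ y, g.symm y ∈ S → y ≠ a → q * (F a - F2 a y) ^ 2 ≤ Da a := by
    intro a ha y hy hne
    simp only [hF, hF2, hDa, hfib]
    rw [cosetOn_filter hp (hA a ha)]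
    exact star_hole_coset _ hoS (symm_mul_swap_mem hp (hA a ha) hy hne) f
  have hc2 : ∀ a ∈ A, ∀ y, g.symm y ∈ S → y ≠ a →
      (((fib a).filter fun σ => σ o = y).card : ℝ) = q2 :=
    fun a ha y hy hne => card_fiber₂ hp ho hop (hA a ha) hy hne
  -- the move at `p` exchanges the values of `o` and `p`
  have hmove : ∀ a ∈ A, ∀ b ∈ A, a ≠ b → q2 * (F2 a b - F2 b a) ^ 2 ≤ P a b := by
    intro a ha b hb hab
    have hmem : ∀ a' ∈ A, ∀ b' ∈ A, ∀ σ ∈ (fib a').filter (fun σ => σ o = b'),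
        σ * Equiv.swap o p ∈ (fib b').filter (fun σ => σ o = a') := by
      intro a' _ b' _ σ hσ
      simp only [hfib, Finset.mem_filter, mem_cosetOn] at hσ ⊢
      refine ⟨⟨fun x hx => ?_, by simpa using hσ.2⟩, by simpa using hσ.1.2⟩
      have hxo : x ≠ o := fun h => hx (h ▸ ho)
      have hxp : x ≠ p := fun h => hx (h ▸ hp)
      rw [Equiv.Perm.mul_apply, Equiv.swap_apply_of_ne_of_ne hxo hxp]
      exact hσ.1.1 x hx
    have hba : F2 b a = avg ((fib a).filter fun σ => σ o = b)
        fun σ => f (σ * Equiv.swap o p) := by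
      simp only [hF2, avg]
      rw [hc2 a ha b (hA b hb) hab.symm, hc2 b hb a (hA a ha) hab]
      congr 1
      refine Finset.sum_nbij' (fun h => h * Equiv.swap o p) (fun h => h * Equiv.swap o p)
        (hmem b hb a ha) (hmem a ha b hb) ?_ ?_ ?_
      · intro h _; simp [mul_assoc]
      · intro h _; simp [mul_assoc]
      · intro h _; simp [mul_assoc]
    rw [hba]
    simp only [hF2]
    rw [avg_sub, ← hc2 a ha b (hA b hb) hab.symm]
    exact card_mul_avg_sq_le _ _
  have hsumC : ∀ φ : Equiv.Perm α → ℝ, ∑ σ ∈ C, φ σ = ∑ a ∈ A, ∑ σ ∈ fib a, φ σ :=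
    sum_rsSet g S p A
  set m := avg C f with hm
  have hmA : avg A F = m := by
    have h1 := card_mul_avg C f
    rw [hcardC, hsumC] at h1
    have h2 : ∑ a ∈ A, ∑ σ ∈ fib a, f σ = q * ∑ a ∈ A, F a := by
      rw [Finset.mul_sum]
      refine Finset.sum_congr rfl fun a ha => ?_
      rw [← card_mul_avg (fib a) f, hcf a ha]
    rw [h2, ← card_mul_avg A F, ← hs] at h1
    have : (s * q) * avg C f = (s * q) * avg A F := by rw [h1]; ring
    exact (mul_left_cancel₀ (by positivity) this).symm
  set DD := ∑ a ∈ A, Da a with hDD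
  set PP := ∑ a ∈ A, ∑ b ∈ A, P a b with hPP
  have hDD0 : 0 ≤ DD := Finset.sum_nonneg fun _ _ => hDa0 _
  have hPP0 : 0 ≤ PP := Finset.sum_nonneg fun _ _ => Finset.sum_nonneg fun _ _ => hP0 _ _
  have hform : rsForm g S o p A θ f = DD + θ * PP := by
    rw [rsForm, hDD, hPP]
    congr 1
    · simp only [hDa]
      rw [Finset.sum_comm (s := A)]
      refine Finset.sum_congr rfl fun j _ => ?_
      exact hsumC _
    · congr 1
      rw [Finset.sum_filter, hsumC]
      refine Finset.sum_congr rfl fun a _ => ?_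
      rw [← Finset.sum_filter]
      simp only [hPdef]
      rw [← Finset.sum_fiberwise_of_maps_to (s := (fib a).filter fun σ => σ o ∈ A) (t := A)
        (g := fun σ => σ o) (fun σ hσ => (Finset.mem_filter.mp hσ).2)]
      refine Finset.sum_congr rfl fun b hb => ?_
      refine Finset.sum_congr ?_ fun _ _ => rfl
      ext σ
      simp only [Finset.mem_filter]
      constructor
      · rintro ⟨⟨h1, _⟩, h3⟩; exact ⟨h1, h3⟩
      · rintro ⟨h1, h3⟩; exact ⟨⟨h1, h3 ▸ hb⟩, h3⟩
  have hpair : ∀ a ∈ A, ∀ b ∈ A,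
      q * (F a - F b) ^ 2 ≤ 3 * Da a + 3 * Da b + 3 * ((S.card : ℝ) - 1) * P a b := by
    intro a ha b hb
    have hn1 : (0 : ℝ) ≤ (S.card : ℝ) - 1 := by
      have : (1 : ℝ) ≤ S.card := by exact_mod_cast hSpos
      linarith
    by_cases hab : a = b
    · subst hab
      have := hDa0 a
      have := mul_nonneg hn1 (hP0 a a)
      simp only [sub_self]
      nlinarith
    · have h1 := hhole a ha b (hA b hb) (Ne.symm hab)
      have h2 := hhole b hb a (hA a ha) hab
      have h3 : q * (F2 a b - F2 b a) ^ 2 ≤ ((S.card : ℝ) - 1) * P a b := by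
        rw [hqq2, mul_assoc]
        exact mul_le_mul_of_nonneg_left (hmove a ha b hb hab) hn1
      have h4 : (F a - F b) ^ 2 ≤ 3 * (F a - F2 a b) ^ 2 + 3 * (F b - F2 b a) ^ 2
          + 3 * (F2 a b - F2 b a) ^ 2 := by
        nlinarith [sq_nonneg ((F a - F2 a b) - (F2 a b - F2 b a)),
          sq_nonneg ((F a - F2 a b) + (F b - F2 b a)),
          sq_nonneg ((F2 a b - F2 b a) + (F b - F2 b a))]
      have h5 := mul_le_mul_of_nonneg_left h4 hqpos.le
      linarith
  have hB : q * ∑ a ∈ A, (F a - m) ^ 2 ≤ 3 * DD + 3 / 2 * (θ * PP) := by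
    have h1 : q * ∑ a ∈ A, ∑ b ∈ A, (F a - F b) ^ 2 ≤
        6 * s * DD + 3 * ((S.card : ℝ) - 1) * PP := by
      rw [Finset.mul_sum]
      calc ∑ a ∈ A, q * ∑ b ∈ A, (F a - F b) ^ 2
          ≤ ∑ a ∈ A, ∑ b ∈ A, (3 * Da a + 3 * Da b + 3 * ((S.card : ℝ) - 1) * P a b) := by
            refine Finset.sum_le_sum fun a ha => ?_
            rw [Finset.mul_sum]
            exact Finset.sum_le_sum fun b hb => hpair a ha b hb
        _ = _ := by
            simp only [Finset.sum_add_distrib, Finset.sum_const, nsmul_eq_mul, ← Finset.mul_sum]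
            ring
    rw [sum_pair_sq_avg, hmA, ← hs] at h1
    have h2 : 3 * ((S.card : ℝ) - 1) * PP ≤ 3 * (θ * s) * PP := by
      have := mul_le_mul_of_nonneg_right hθ hPP0
      linarith
    have h3 : (2 * s) * (q * ∑ a ∈ A, (F a - m) ^ 2) ≤
        (2 * s) * (3 * DD + 3 / 2 * (θ * PP)) := by linarith
    exact le_of_mul_le_mul_left h3 (by positivity)
  have hθ0 : 0 ≤ θ * PP := by
    have : 0 ≤ θ * s := le_trans (by
      have : (1 : ℝ) ≤ S.card := by exact_mod_cast hSpos
      linarith) hθ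
    exact mul_nonneg (nonneg_of_mul_nonneg_left this hspos) hPP0
  rw [hform]
  constructor
  · rw [hsumC]
    have h1 : ∑ a ∈ A, ∑ σ ∈ fib a, (f σ - m) ^ 2 ≤
        ∑ a ∈ A, (3 * Da a + q * (F a - m) ^ 2) := by
      refine Finset.sum_le_sum fun a ha => ?_
      rw [sum_sq_sub_avg, hcf a ha]
      have := hpoin a ha
      simp only [hF] at this ⊢
      linarith
    rw [Finset.sum_add_distrib, ← Finset.mul_sum, ← Finset.mul_sum] at h1
    linarith
  · intro y hy hAy
    have hty : s ≤ 2 * ((A.erase y).card : ℝ) := by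
      have h1 := Finset.pred_card_le_card_erase (s := A) (a := y)
      have h2 := hAy.card_pos
      have : A.card ≤ 2 * (A.erase y).card := by omega
      rw [hs]; exact_mod_cast this
    set t : ℝ := ((A.erase y).card : ℝ) with ht
    have htpos : 0 < t := by rw [ht]; exact_mod_cast hAy.card_pos
    have hCy : avg (C.filter fun σ => σ o = y) f = avg (A.erase y) fun a => F2 a y := by
      have h1 : ∑ σ ∈ C.filter (fun σ => σ o = y), f σ = q2 * ∑ a ∈ A.erase y, F2 a y := by
        rw [hC, sum_rsSet_filter y f hop, Finset.mul_sum]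
        refine Finset.sum_congr rfl fun a ha => ?_
        rw [← hc2 a (Finset.mem_of_mem_erase ha) y hy (Finset.ne_of_mem_erase ha).symm]
        simp only [hF2, hfib]
        rw [card_mul_avg]
      have h2 : ((C.filter fun σ => σ o = y).card : ℝ) = t * q2 :=
        card_rsSet_filter hp ho hop hA hy
      rw [avg, avg, h1, h2, ← ht]
      field_simp
    have h1 : t * q * (avg (A.erase y) (fun a => F2 a y) - avg (A.erase y) F) ^ 2 ≤ DD := by
      rw [avg_sub]
      have := card_mul_avg_sq_le (A.erase y) fun a => F2 a y - F a
      rw [← ht] at this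
      calc t * q * (avg (A.erase y) fun a => F2 a y - F a) ^ 2
          = q * (t * (avg (A.erase y) fun a => F2 a y - F a) ^ 2) := by ring
        _ ≤ q * ∑ a ∈ A.erase y, (F2 a y - F a) ^ 2 := mul_le_mul_of_nonneg_left this hqpos.le
        _ = ∑ a ∈ A.erase y, q * (F a - F2 a y) ^ 2 := by
            rw [Finset.mul_sum]; exact Finset.sum_congr rfl fun _ _ => by ring
        _ ≤ ∑ a ∈ A.erase y, Da a := Finset.sum_le_sum fun a ha =>
            hhole a (Finset.mem_of_mem_erase ha) y hy (Finset.ne_of_mem_erase ha).symm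
        _ ≤ DD := Finset.sum_le_sum_of_subset_of_nonneg (Finset.erase_subset _ _)
            fun _ _ _ => hDa0 _
    have h2 : t * q * (avg (A.erase y) F - m) ^ 2 ≤ 3 * DD + 3 / 2 * (θ * PP) := by
      refine le_trans ?_ hB
      have := card_mul_avg_sub_sq_le (A.erase y) F m
      calc t * q * (avg (A.erase y) F - m) ^ 2 = q * (t * (avg (A.erase y) F - m) ^ 2) := by ring
        _ ≤ q * ∑ a ∈ A.erase y, (F a - m) ^ 2 := mul_le_mul_of_nonneg_left this hqpos.le
        _ ≤ _ := mul_le_mul_of_nonneg_left (Finset.sum_le_sum_of_subset_of_nonneg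
            (Finset.erase_subset _ _) fun _ _ _ => sq_nonneg _) hqpos.le
    rw [hCy, hcardC]
    set u := avg (A.erase y) (fun a => F2 a y)
    set v := avg (A.erase y) F
    clear_value u v m DD PP s q t
    clear hpair hB hmA hsumC hmove hc2 hhole hpoin hcf hform hCy
    have h3 : (u - m) ^ 2 ≤ 2 * (u - v) ^ 2 + 2 * (v - m) ^ 2 := by
      nlinarith [sq_nonneg ((u - v) - (v - m))]
    calc s * q * (u - m) ^ 2 ≤ (2 * t) * q * (2 * (u - v) ^ 2 + 2 * (v - m) ^ 2) := by gcongr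
      _ = 4 * (t * q * (u - v) ^ 2) + 4 * (t * q * (v - m) ^ 2) := by ring
      _ ≤ 16 * (DD + θ * PP) := by linarith

end RestrictedStar

/-! ### Products of two restricted stars -/

section ProductStar

variable {α : Type*} [Fintype α] [DecidableEq α]

/-- Convexity: averaging over an independent variable does not increase the star energy. -/
lemma rsForm_avg_le (g : Equiv.Perm α) (S : Finset α) (o p : α) (A : Finset α) {θ : ℝ}
    (hθ : 0 ≤ θ) {β : Type*} (Y : Finset β) (f : Equiv.Perm α → β → ℝ) :
    Y.card * rsForm g S o p A θ (fun σ => avg Y (f σ)) ≤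
      ∑ η ∈ Y, rsForm g S o p A θ (fun σ => f σ η) := by
  have key : ∀ (C : Finset (Equiv.Perm α)) (j : α),
      (Y.card : ℝ) * ∑ σ ∈ C, (avg Y (f σ) - avg Y (f (σ * Equiv.swap o j))) ^ 2 ≤
        ∑ η ∈ Y, ∑ σ ∈ C, (f σ η - f (σ * Equiv.swap o j) η) ^ 2 := by
    intro C j
    rw [Finset.sum_comm, Finset.mul_sum]
    refine Finset.sum_le_sum fun σ _ => ?_
    rw [avg_sub]
    exact card_mul_avg_sq_le _ _
  unfold rsForm
  rw [Finset.sum_add_distrib, mul_add]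
  refine add_le_add ?_ ?_
  · rw [Finset.mul_sum, Finset.sum_comm]
    exact Finset.sum_le_sum fun j _ => key _ j
  · rw [← Finset.mul_sum, mul_left_comm]
    exact mul_le_mul_of_nonneg_left (key _ p) hθ

/-- The event that the hole `o` carries the colour `y` has probability at least `1 / (2 |S|)`. -/
lemma card_rsSet_le {g : Equiv.Perm α} {S : Finset α} {o p : α} {A : Finset α}
    (hp : p ∈ S) (ho : o ∈ S) (hop : o ≠ p)
    (hA : ∀ a ∈ A, g.symm a ∈ S) {y : α} (hy : g.symm y ∈ S) (hAy : (A.erase y).Nonempty) :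
    ((rsSet g S p A).card : ℝ) ≤
      2 * S.card * ((rsSet g S p A).filter fun σ => σ o = y).card := by
  rw [card_rsSet hp hA, card_rsSet_filter hp ho hop hA hy,
    card_permsOn (Finset.mem_erase.mpr ⟨hop, ho⟩ : o ∈ S.erase p)]
  have h1 := Finset.pred_card_le_card_erase (s := A) (a := y)
  have h2 := hAy.card_pos
  have h3 : (A.card : ℝ) ≤ 2 * (A.erase y).card := by
    have : A.card ≤ 2 * (A.erase y).card := by omega
    exact_mod_cast this
  have h4 : ((S.erase p).card : ℝ) ≤ S.card := by
    exact_mod_cast Finset.card_le_card (Finset.erase_subset _ _)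
  calc (A.card : ℝ) * ((S.erase p).card * (permsOn ((S.erase p).erase o)).card)
      ≤ (2 * (A.erase y).card) * (S.card * (permsOn ((S.erase p).erase o)).card) := by gcongr
    _ = _ := by ring

/-- Product of two restricted stars over the same coset: the Poincaré inequality, and the effect of
conditioning both holes on a common colour. -/
lemma product_star {g : Equiv.Perm α} {S : Finset α} {o px py : α} {Ax Ay : Finset α}
    (hpx : px ∈ S) (hpy : py ∈ S) (ho : o ∈ S) (hopx : o ≠ px) (hopy : o ≠ py)
    (hAx : ∀ a ∈ Ax, g.symm a ∈ S) (hAy : ∀ a ∈ Ay, g.symm a ∈ S)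
    (hAx0 : Ax.Nonempty) (hAy0 : Ay.Nonempty) {θx θy : ℝ} (hx0 : 0 ≤ θx) (hy0 : 0 ≤ θy)
    (hθx : (S.card : ℝ) - 1 ≤ θx * Ax.card) (hθy : (S.card : ℝ) - 1 ≤ θy * Ay.card)
    (f : Equiv.Perm α → Equiv.Perm α → ℝ) (B : Finset α)
    (hB : ∀ b ∈ B, g.symm b ∈ S ∧ (Ax.erase b).Nonempty ∧ (Ay.erase b).Nonempty)
    (X Y : Finset (Equiv.Perm α)) (hX : X = rsSet g S px Ax) (hY : Y = rsSet g S py Ay)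
    (Q : ℝ) (hQ : Q = ∑ η ∈ Y, rsForm g S o px Ax θx (fun σ => f σ η) +
      ∑ σ ∈ X, rsForm g S o py Ay θy (f σ))
    (m : ℝ) (hm : m = avg X fun σ => avg Y (f σ)) :
    (∑ σ ∈ X, ∑ η ∈ Y, (f σ η - m) ^ 2 ≤ 6 * Q) ∧
    (∑ b ∈ B, X.card * Y.card * ((avg (X.filter fun σ => σ o = b) fun σ =>
        avg (Y.filter fun η => η o = b) (f σ)) - m) ^ 2 ≤ 64 * S.card * Q) := by
  set Qx := ∑ η ∈ Y, rsForm g S o px Ax θx (fun σ => f σ η) with hQx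
  set Qy := ∑ σ ∈ X, rsForm g S o py Ay θy (f σ) with hQy
  have hQx0 : 0 ≤ Qx := Finset.sum_nonneg fun _ _ => rsForm_nonneg hx0 _
  have hQy0 : 0 ≤ Qy := Finset.sum_nonneg fun _ _ => rsForm_nonneg hy0 _
  set fb : Equiv.Perm α → ℝ := fun σ => avg Y (f σ) with hfb
  have hrx := restricted_star hpx ho hopx hAx hAx0 hθx fb
  rw [← hX, ← hm] at hrx
  have hconv := rsForm_avg_le g S o px Ax hx0 Y f
  rw [← hQx] at hconv
  have hry := fun σ => restricted_star hpy ho hopy hAy hAy0 hθy (f σ)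
  rw [← hY] at hry
  have hY0 : (0 : ℝ) ≤ Y.card := Nat.cast_nonneg _
  have hX0 : (0 : ℝ) ≤ X.card := Nat.cast_nonneg _
  have hS0 : (0 : ℝ) ≤ S.card := Nat.cast_nonneg _
  constructor
  · have h1 : ∀ σ ∈ X, ∑ η ∈ Y, (f σ η - m) ^ 2 ≤
        6 * rsForm g S o py Ay θy (f σ) + Y.card * (fb σ - m) ^ 2 := by
      intro σ _
      rw [sum_sq_sub_avg]
      have := (hry σ).1
      simp only [hfb]
      linarith
    calc ∑ σ ∈ X, ∑ η ∈ Y, (f σ η - m) ^ 2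
        ≤ ∑ σ ∈ X, (6 * rsForm g S o py Ay θy (f σ) + Y.card * (fb σ - m) ^ 2) :=
          Finset.sum_le_sum h1
      _ = 6 * Qy + Y.card * ∑ σ ∈ X, (fb σ - m) ^ 2 := by
          rw [Finset.sum_add_distrib, Finset.mul_sum, Finset.mul_sum]
      _ ≤ 6 * Qy + Y.card * (6 * rsForm g S o px Ax θx fb) := by
          have := mul_le_mul_of_nonneg_left hrx.1 hY0
          linarith
      _ ≤ 6 * Q := by rw [hQ]; linarith
  · set G : α → ℝ := fun b => avg (X.filter fun σ => σ o = b) fun σ =>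
        avg (Y.filter fun η => η o = b) (f σ) with hG
    have hb : ∀ b ∈ B, X.card * Y.card * (G b - m) ^ 2 ≤
        32 * Qx + 64 * S.card * ∑ σ ∈ X.filter (fun σ => σ o = b),
          rsForm g S o py Ay θy (f σ) := by
      intro b hbB
      obtain ⟨hbS, hbx, hby⟩ := hB b hbB
      set Xb := X.filter fun σ => σ o = b with hXb
      have e1 : (X.card : ℝ) * Y.card * (avg Xb fb - m) ^ 2 ≤ 16 * Qx := by
        have := hrx.2 b hbS hbx
        have := mul_le_mul_of_nonneg_left this hY0
        calc (X.card : ℝ) * Y.card * (avg Xb fb - m) ^ 2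
            = Y.card * (X.card * (avg Xb fb - m) ^ 2) := by ring
          _ ≤ _ := this
          _ ≤ _ := by linarith
      have e2 : (X.card : ℝ) * Y.card * (G b - avg Xb fb) ^ 2 ≤
          32 * S.card * ∑ σ ∈ Xb, rsForm g S o py Ay θy (f σ) := by
        have hc : (X.card : ℝ) ≤ 2 * S.card * Xb.card := by
          rw [hXb, hX]; exact card_rsSet_le hpx ho hopx hAx hbS hbx
        have hj : (Xb.card : ℝ) * (G b - avg Xb fb) ^ 2 ≤
            ∑ σ ∈ Xb, (avg (Y.filter fun η => η o = b) (f σ) - fb σ) ^ 2 := by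
          simp only [hG]
          rw [avg_sub]
          exact card_mul_avg_sq_le _ _
        calc (X.card : ℝ) * Y.card * (G b - avg Xb fb) ^ 2
            ≤ (2 * S.card * Xb.card) * Y.card * (G b - avg Xb fb) ^ 2 := by gcongr
          _ = 2 * S.card * (Y.card * (Xb.card * (G b - avg Xb fb) ^ 2)) := by ring
          _ ≤ 2 * S.card * (Y.card *
              ∑ σ ∈ Xb, (avg (Y.filter fun η => η o = b) (f σ) - fb σ) ^ 2) := by gcongr
          _ ≤ 2 * S.card * ∑ σ ∈ Xb, 16 * rsForm g S o py Ay θy (f σ) := by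
              rw [Finset.mul_sum]
              exact mul_le_mul_of_nonneg_left
                (Finset.sum_le_sum fun σ _ => (hry σ).2 b hbS hby) (by positivity)
          _ = _ := by rw [← Finset.mul_sum]; ring
      have e3 : (G b - m) ^ 2 ≤ 2 * (G b - avg Xb fb) ^ 2 + 2 * (avg Xb fb - m) ^ 2 := by
        nlinarith [sq_nonneg ((G b - avg Xb fb) - (avg Xb fb - m))]
      have e4 := mul_le_mul_of_nonneg_left e3 (mul_nonneg hX0 hY0)
      linarith
    have hBc : (B.card : ℝ) ≤ S.card := by
      have : B.card ≤ S.card := Finset.card_le_card_of_injOn g.symm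
        (fun b hb => (hB b hb).1) (g.symm.injective.injOn)
      exact_mod_cast this
    have hdis : ∑ b ∈ B, ∑ σ ∈ X.filter (fun σ => σ o = b), rsForm g S o py Ay θy (f σ) ≤ Qy := by
      rw [hQy, ← Finset.sum_fiberwise (s := X) (g := fun σ => σ o)]
      exact Finset.sum_le_sum_of_subset_of_nonneg (Finset.subset_univ _)
        fun _ _ _ => Finset.sum_nonneg fun _ _ => rsForm_nonneg hy0 _
    calc ∑ b ∈ B, X.card * Y.card * (G b - m) ^ 2
        ≤ ∑ b ∈ B, (32 * Qx + 64 * S.card * ∑ σ ∈ X.filter (fun σ => σ o = b),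
          rsForm g S o py Ay θy (f σ)) := Finset.sum_le_sum hb
      _ = B.card * (32 * Qx) + 64 * S.card * ∑ b ∈ B, ∑ σ ∈ X.filter (fun σ => σ o = b),
          rsForm g S o py Ay θy (f σ) := by
          rw [Finset.sum_add_distrib, Finset.sum_const, nsmul_eq_mul, ← Finset.mul_sum]
      _ ≤ S.card * (32 * Qx) + 64 * S.card * Qy := by gcongr
      _ ≤ 64 * S.card * Q := by
          have := mul_nonneg hS0 hQx0
          rw [hQ]; linarith

/-- The pair of colours `c ≠ b` can be exchanged at the root edge. -/
def Allowed (Ax Ay : Finset α) (c b : α) : Prop :=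
  c ≠ b ∧ ((Ax.erase c).erase b).Nonempty ∧ ((Ay.erase c).erase b).Nonempty

lemma Allowed.symm {Ax Ay : Finset α} {c b : α} (h : Allowed Ax Ay c b) : Allowed Ax Ay b c := by
  refine ⟨h.1.symm, ?_, ?_⟩
  · rw [Finset.erase_right_comm]; exact h.2.1
  · rw [Finset.erase_right_comm]; exact h.2.2

/-- An exchange of `c` and `b` blocked by the palette `Ax` means `Ax = {c, b}`; it is then replaced by
two exchanges through a third colour `u`. -/
lemma exists_mid_aux (hk : 4 ≤ Fintype.card α) {Ax Ay : Finset α} (h2x : 2 ≤ Ax.card)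
    (h2y : 2 ≤ Ay.card) {c b : α} (hcb : c ≠ b) (hx : ¬ ((Ax.erase c).erase b).Nonempty) :
    (c ∈ Ax ∧ b ∈ Ax ∧ Ax.card = 2) ∧ ∃ u, Allowed Ax Ay c u ∧ Allowed Ax Ay u b := by
  have hsub : Ax ⊆ {c, b} := by
    intro z hz
    by_contra hc
    apply hx
    refine ⟨z, ?_⟩
    simp only [Finset.mem_insert, Finset.mem_singleton, not_or] at hc
    simp [hc.1, hc.2, hz]
  have hAx : Ax = {c, b} := Finset.eq_of_subset_of_card_le hsub (by
    rw [Finset.card_pair hcb]; exact h2x)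
  have hcA : c ∈ Ax := by rw [hAx]; simp
  have hbA : b ∈ Ax := by rw [hAx]; simp
  refine ⟨⟨hcA, hbA, by rw [hAx, Finset.card_pair hcb]⟩, ?_⟩
  suffices h : ∃ u, u ≠ c ∧ u ≠ b ∧ ((Ay.erase c).erase u).Nonempty ∧
      ((Ay.erase b).erase u).Nonempty by
    obtain ⟨u, huc, hub, h1, h2⟩ := h
    refine ⟨u, ⟨huc.symm, ⟨b, ?_⟩, h1⟩, ⟨hub, ⟨c, ?_⟩, ?_⟩⟩
    · simp [hcb.symm, hub.symm, hbA]
    · simp [hcb, huc.symm, hcA]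
    · rw [Finset.erase_right_comm]; exact h2
  have herase : ∀ z w, (z ∉ Ay ∨ w ∉ Ay ∨ 3 ≤ Ay.card) → ((Ay.erase z).erase w).Nonempty := by
    intro z w h
    have h1 := Finset.pred_card_le_card_erase (s := Ay) (a := z)
    have h2 := Finset.pred_card_le_card_erase (s := Ay.erase z) (a := w)
    rcases h with h | h | h
    · rw [Finset.erase_eq_of_notMem h] at h2 ⊢
      exact Finset.card_pos.mp (by omega)
    · rw [Finset.erase_right_comm, Finset.erase_eq_of_notMem h]
      exact Finset.card_pos.mp (by omega)
    · exact Finset.card_pos.mp (by omega)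
  by_cases h3 : 3 ≤ Ay.card ∨ (c ∉ Ay ∧ b ∉ Ay)
  · obtain ⟨u, hu⟩ : ∃ u, u ∉ ({c, b} : Finset α) := by
      by_contra hc
      push Not at hc
      have := Finset.card_le_card (fun x _ => hc x : (Finset.univ : Finset α) ⊆ {c, b})
      rw [Finset.card_pair hcb, Finset.card_univ] at this
      omega
    simp only [Finset.mem_insert, Finset.mem_singleton, not_or] at hu
    refine ⟨u, hu.1, hu.2, herase _ _ ?_, herase _ _ ?_⟩ <;> tauto
  · have h4 : Ay.card = 2 ∧ (c ∈ Ay ∨ b ∈ Ay) := by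
      constructor
      · omega
      · tauto
    have hcard : (({c, b} : Finset α) ∪ Ay).card ≤ 3 := by
      have h5 := Finset.card_union_add_card_inter ({c, b} : Finset α) Ay
      have h6 : 1 ≤ (({c, b} : Finset α) ∩ Ay).card := by
        apply Finset.card_pos.mpr
        rcases h4.2 with h | h
        · exact ⟨c, by simp [h]⟩
        · exact ⟨b, by simp [h]⟩
      rw [Finset.card_pair hcb] at h5
      omega
    obtain ⟨u, hu⟩ : ∃ u, u ∉ ({c, b} : Finset α) ∪ Ay := by
      by_contra hc
      push Not at hc
      have := Finset.card_le_card (fun x _ => hc x : (Finset.univ : Finset α) ⊆ {c, b} ∪ Ay)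
      rw [Finset.card_univ] at this
      omega
    simp only [Finset.mem_union, Finset.mem_insert, Finset.mem_singleton, not_or] at hu
    exact ⟨u, hu.1.1, hu.1.2, herase _ _ (Or.inr (Or.inl hu.2)), herase _ _ (Or.inr (Or.inl hu.2))⟩

lemma Allowed.comm {Ax Ay : Finset α} {c b : α} (h : Allowed Ay Ax c b) : Allowed Ax Ay c b :=
  ⟨h.1, h.2.2, h.2.1⟩

/-- At most eight ordered pairs are not allowed, and these are bridged by allowed pairs. -/
lemma sum_pairs_le_allowed (hk : 4 ≤ Fintype.card α) {Ax Ay : Finset α} (h2x : 2 ≤ Ax.card)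
    (h2y : 2 ≤ Ay.card) (m : α → ℝ) :
    ∑ c, ∑ b, (m c - m b) ^ 2 ≤
      33 * ∑ c, ∑ b ∈ Finset.univ.filter (fun b => Allowed Ax Ay c b), (m c - m b) ^ 2 := by
  set Sa := ∑ c, ∑ b ∈ Finset.univ.filter (fun b => Allowed Ax Ay c b), (m c - m b) ^ 2 with hSa
  have hSa0 : 0 ≤ Sa := Finset.sum_nonneg fun _ _ => Finset.sum_nonneg fun _ _ => sq_nonneg _
  have hle : ∀ c b, Allowed Ax Ay c b → (m c - m b) ^ 2 ≤ Sa := by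
    intro c b h
    refine le_trans ?_ (Finset.single_le_sum (f := fun c => ∑ b ∈ Finset.univ.filter
      (fun b => Allowed Ax Ay c b), (m c - m b) ^ 2)
      (fun _ _ => Finset.sum_nonneg fun _ _ => sq_nonneg _) (Finset.mem_univ c))
    exact Finset.single_le_sum (f := fun b => (m c - m b) ^ 2) (fun _ _ => sq_nonneg _)
      (Finset.mem_filter.mpr ⟨Finset.mem_univ b, h⟩)
  have hmid : ∀ c b, (∃ u, Allowed Ax Ay c u ∧ Allowed Ax Ay u b) → (m c - m b) ^ 2 ≤ 4 * Sa := by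
    rintro c b ⟨u, h1, h2⟩
    have := hle _ _ h1
    have := hle _ _ h2
    nlinarith [sq_nonneg ((m c - m u) - (m u - m b))]
  have hpt : ∀ c b, (m c - m b) ^ 2 ≤ (if Allowed Ax Ay c b then (m c - m b) ^ 2 else 0) +
      (if Ax.card = 2 then (if c ∈ Ax then (if b ∈ Ax then 4 * Sa else 0) else 0) else 0) +
      (if Ay.card = 2 then (if c ∈ Ay then (if b ∈ Ay then 4 * Sa else 0) else 0) else 0) := by
    intro c b
    have p1 : 0 ≤ (if Ax.card = 2 then (if c ∈ Ax then (if b ∈ Ax then 4 * Sa else 0) else 0)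
      else 0) := by split_ifs <;> linarith
    have p2 : 0 ≤ (if Ay.card = 2 then (if c ∈ Ay then (if b ∈ Ay then 4 * Sa else 0) else 0)
      else 0) := by split_ifs <;> linarith
    by_cases hcb : c = b
    · subst hcb
      have : 0 ≤ (if Allowed Ax Ay c c then (m c - m c) ^ 2 else 0) := by
        split_ifs <;> positivity
      have e : (m c - m c) ^ 2 = 0 := by ring
      linarith
    by_cases ha : Allowed Ax Ay c b
    · rw [if_pos ha]; linarith
    rw [if_neg ha]
    by_cases hx : ((Ax.erase c).erase b).Nonempty
    · have hy : ¬ ((Ay.erase c).erase b).Nonempty := fun hy => ha ⟨hcb, hx, hy⟩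
      obtain ⟨⟨h1, h2, h3⟩, u, hu1, hu2⟩ := exists_mid_aux hk h2y h2x hcb hy
      rw [if_pos h3, if_pos h1, if_pos h2]
      have := hmid c b ⟨u, hu1.comm, hu2.comm⟩
      linarith
    · obtain ⟨⟨h1, h2, h3⟩, hu⟩ := exists_mid_aux hk h2x h2y hcb hx
      rw [if_pos h3, if_pos h1, if_pos h2]
      have := hmid c b hu
      linarith
  have hind : ∀ A : Finset α, ∑ c : α, ∑ b : α,
      (if A.card = 2 then (if c ∈ A then (if b ∈ A then 4 * Sa else 0) else 0) else 0) ≤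
      16 * Sa := by
    intro A
    by_cases h : A.card = 2
    · simp [h]; linarith
    · simp [h]; linarith
  calc ∑ c, ∑ b, (m c - m b) ^ 2 ≤ _ :=
        Finset.sum_le_sum fun c _ => Finset.sum_le_sum fun b _ => hpt c b
    _ ≤ Sa + 16 * Sa + 16 * Sa := by
        simp only [Finset.sum_add_distrib]
        refine add_le_add (add_le_add (le_of_eq ?_) (hind Ax)) (hind Ay)
        simp only [hSa, Finset.sum_filter]
    _ = 33 * Sa := by ring

end ProductStar

/-! ### Double stars -/

section DoubleStar

variable {α : Type*} [Fintype α] [DecidableEq α]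

/-- Bijections with value `c` at `e` and a value of `A` at `p`. -/
noncomputable def dsSet (e p : α) (A : Finset α) (c : α) : Finset (Equiv.Perm α) :=
  Finset.univ.filter fun σ => σ e = c ∧ σ p ∈ A

lemma dsSet_eq {e p : α} (hpe : p ≠ e) (A : Finset α) (c : α) :
    dsSet e p A c = rsSet (Equiv.swap e c) (Finset.univ.erase e) p (A.erase c) := by
  ext σ
  simp only [dsSet, rsSet, Finset.mem_filter, Finset.mem_univ, true_and, mem_cosetOn,
    Finset.mem_erase, and_true, not_not]
  constructor
  · rintro ⟨h1, h2⟩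
    refine ⟨fun x hx => by rw [hx, h1]; simp, fun h => hpe (σ.injective (h.trans h1.symm)), h2⟩
  · rintro ⟨h1, _, h3⟩
    exact ⟨by rw [h1 e rfl]; simp, h3⟩

/-- Energy of the star moves of one side of the double star, the other side being frozen. -/
noncomputable def sideForm (e o p : α) (A : Finset α) (θ : ℝ) (c : α)
    (f : Equiv.Perm α → ℝ) : ℝ :=
  ∑ j ∈ ((Finset.univ.erase e).erase p).erase o, ∑ σ ∈ dsSet e p A c,
      (f σ - f (σ * Equiv.swap o j)) ^ 2 +
    θ * ∑ σ ∈ (dsSet e p A c).filter (fun σ => σ o ∈ A), (f σ - f (σ * Equiv.swap o p)) ^ 2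

lemma sideForm_eq {e o p : α} (hpe : p ≠ e) (hoe : o ≠ e) (A : Finset α) (θ : ℝ) (c : α)
    (f : Equiv.Perm α → ℝ) :
    sideForm e o p A θ c f =
      rsForm (Equiv.swap e c) (Finset.univ.erase e) o p (A.erase c) θ f := by
  rw [sideForm, rsForm, dsSet_eq hpe]
  congr 2
  refine Finset.sum_congr ?_ fun _ _ => rfl
  refine Finset.filter_congr fun σ hσ => ?_
  rw [← dsSet_eq hpe] at hσ
  have h1 : σ e = c := by simpa [dsSet] using (Finset.mem_filter.mp hσ).2.1
  rw [Finset.mem_erase]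
  exact ⟨fun h => ⟨fun h' => hoe (σ.injective (h'.trans h1.symm)), h⟩, fun h => h.2⟩

lemma sideForm_nonneg {e o p : α} {A : Finset α} {θ : ℝ} (hθ : 0 ≤ θ) {c : α}
    (f : Equiv.Perm α → ℝ) : 0 ≤ sideForm e o p A θ c f := by
  unfold sideForm; positivity

lemma avg_bij {ι κ : Type*} {s : Finset ι} {t : Finset κ} (i : ι → κ) (j : κ → ι)
    (hi : ∀ a ∈ s, i a ∈ t) (hj : ∀ a ∈ t, j a ∈ s) (h1 : ∀ a ∈ s, j (i a) = a)
    (h2 : ∀ a ∈ t, i (j a) = a) (f : κ → ℝ) : avg t f = avg s fun a => f (i a) := by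
  have hc : s.card = t.card := Finset.card_nbij' i j hi hj h1 h2
  rw [avg, avg, hc]
  congr 1
  exact (Finset.sum_nbij' i j hi hj h1 h2 fun _ _ => rfl).symm

lemma card_mul_avg_avg_sq_le {ι κ : Type*} (s : Finset ι) (t : Finset κ) (f : ι → κ → ℝ) :
    (s.card : ℝ) * t.card * (avg s fun a => avg t (f a)) ^ 2 ≤
      ∑ a ∈ s, ∑ b ∈ t, f a b ^ 2 := by
  calc (s.card : ℝ) * t.card * (avg s fun a => avg t (f a)) ^ 2
      = t.card * (s.card * (avg s fun a => avg t (f a)) ^ 2) := by ring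
    _ ≤ t.card * ∑ a ∈ s, avg t (f a) ^ 2 :=
        mul_le_mul_of_nonneg_left (card_mul_avg_sq_le _ _) (Nat.cast_nonneg _)
    _ ≤ _ := by
        rw [Finset.mul_sum]
        exact Finset.sum_le_sum fun a _ => card_mul_avg_sq_le _ _

/-- Decomposition of a double sum of squared differences over a union of products `X c × Y c` into
fluctuations within the pieces, around arbitrary centres `m c`, and differences of the centres. -/
lemma sum_sq_le_within_between {ι κ : Type*} (X : α → Finset ι) (Y : α → Finset κ)
    (f : ι → κ → ℝ) (m : α → ℝ) :
    ∑ c, ∑ c', ∑ σ ∈ X c, ∑ η ∈ Y c, ∑ σ' ∈ X c', ∑ η' ∈ Y c', (f σ η - f σ' η') ^ 2 ≤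
      6 * (∑ c, ((X c).card : ℝ) * (Y c).card) *
          (∑ c, ∑ σ ∈ X c, ∑ η ∈ Y c, (f σ η - m c) ^ 2) +
        3 * (∑ c, ∑ c', (((X c).card : ℝ) * (Y c).card) * (((X c').card : ℝ) * (Y c').card) *
          (m c - m c') ^ 2) := by
  set N : α → ℝ := fun c => ((X c).card : ℝ) * (Y c).card with hN
  set w : α → ℝ := fun c => ∑ σ ∈ X c, ∑ η ∈ Y c, (f σ η - m c) ^ 2 with hw
  have hcc : ∀ c c', ∑ σ ∈ X c, ∑ η ∈ Y c, ∑ σ' ∈ X c', ∑ η' ∈ Y c', (f σ η - f σ' η') ^ 2 ≤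
      3 * N c' * w c + 3 * N c * w c' + 3 * (N c * N c' * (m c - m c') ^ 2) := by
    intro c c'
    calc ∑ σ ∈ X c, ∑ η ∈ Y c, ∑ σ' ∈ X c', ∑ η' ∈ Y c', (f σ η - f σ' η') ^ 2
        ≤ ∑ σ ∈ X c, ∑ η ∈ Y c, ∑ σ' ∈ X c', ∑ η' ∈ Y c',
          (3 * (f σ η - m c) ^ 2 + 3 * (f σ' η' - m c') ^ 2 + 3 * (m c - m c') ^ 2) := by
          refine Finset.sum_le_sum fun σ _ => Finset.sum_le_sum fun η _ =>
            Finset.sum_le_sum fun σ' _ => Finset.sum_le_sum fun η' _ => ?_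
          nlinarith [sq_nonneg ((f σ η - m c) + (f σ' η' - m c')),
            sq_nonneg ((f σ η - m c) - (m c - m c')),
            sq_nonneg ((f σ' η' - m c') + (m c - m c'))]
      _ = _ := by
          simp only [Finset.sum_add_distrib, Finset.sum_const, nsmul_eq_mul, ← Finset.mul_sum,
            hw, hN]
          ring
  calc ∑ c, ∑ c', ∑ σ ∈ X c, ∑ η ∈ Y c, ∑ σ' ∈ X c', ∑ η' ∈ Y c', (f σ η - f σ' η') ^ 2
      ≤ ∑ c, ∑ c', (3 * N c' * w c + 3 * N c * w c' + 3 * (N c * N c' * (m c - m c') ^ 2)) :=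
        Finset.sum_le_sum fun c _ => Finset.sum_le_sum fun c' _ => hcc c c'
    _ = 6 * (∑ c, N c) * (∑ c, w c) + 3 * ∑ c, ∑ c', N c * N c' * (m c - m c') ^ 2 := by
        simp only [Finset.sum_add_distrib, ← Finset.mul_sum, ← Finset.sum_mul, mul_assoc]
        ring

set_option maxHeartbeats 2000000 in
/-- Poincaré inequality for two stars glued along the position `e`: the two sides share their value
at `e`, the value at `e` can be changed when both holes carry the same colour, and this move has
weight `k`, the number of colours. -/
theorem double_star {e o px py : α} (hk : 4 ≤ Fintype.card α) (hoe : o ≠ e) (hxe : px ≠ e)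
    (hye : py ≠ e) (hox : o ≠ px) (hoy : o ≠ py) {Ax Ay : Finset α} (h2x : 2 ≤ Ax.card)
    (h2y : 2 ≤ Ay.card) {θx θy : ℝ} (hx0 : 0 ≤ θx) (hy0 : 0 ≤ θy)
    (hθx : (Fintype.card α : ℝ) - 2 ≤ θx * ((Ax.card : ℝ) - 1))
    (hθy : (Fintype.card α : ℝ) - 2 ≤ θy * ((Ay.card : ℝ) - 1))
    (f : Equiv.Perm α → Equiv.Perm α → ℝ) :
    ∑ c, ∑ c', ∑ σ ∈ dsSet e px Ax c, ∑ η ∈ dsSet e py Ay c, ∑ σ' ∈ dsSet e px Ax c',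
        ∑ η' ∈ dsSet e py Ay c', (f σ η - f σ' η') ^ 2 ≤
      700000 * (∑ c, ((dsSet e px Ax c).card : ℝ) * (dsSet e py Ay c).card) *
        (∑ c, (∑ η ∈ dsSet e py Ay c, sideForm e o px Ax θx c (fun σ => f σ η) +
            ∑ σ ∈ dsSet e px Ax c, sideForm e o py Ay θy c (f σ)) +
          Fintype.card α * ∑ c, ∑ b, ∑ σ ∈ (dsSet e px Ax c).filter (fun σ => σ o = b),
            ∑ η ∈ (dsSet e py Ay c).filter (fun η => η o = b),
              (f σ η - f (σ * Equiv.swap o e) (η * Equiv.swap o e)) ^ 2) := by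
  set X : α → Finset (Equiv.Perm α) := fun c => dsSet e px Ax c with hX
  set Y : α → Finset (Equiv.Perm α) := fun c => dsSet e py Ay c with hY
  set k : ℝ := (Fintype.card α : ℝ) with hkdef
  have hk4 : (4 : ℝ) ≤ k := by rw [hkdef]; exact_mod_cast hk
  set Q : α → ℝ := fun c => ∑ η ∈ Y c, sideForm e o px Ax θx c (fun σ => f σ η) +
            ∑ σ ∈ X c, sideForm e o py Ay θy c (f σ) with hQ
  set E : α → α → ℝ := fun c b => ∑ σ ∈ (X c).filter (fun σ => σ o = b),
            ∑ η ∈ (Y c).filter (fun η => η o = b),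
              (f σ η - f (σ * Equiv.swap o e) (η * Equiv.swap o e)) ^ 2 with hE
  have hE0 : ∀ c b, 0 ≤ E c b := fun c b =>
    Finset.sum_nonneg fun _ _ => Finset.sum_nonneg fun _ _ => sq_nonneg _
  have hQ0 : ∀ c, 0 ≤ Q c := fun c => add_nonneg
    (Finset.sum_nonneg fun _ _ => sideForm_nonneg hx0 _)
    (Finset.sum_nonneg fun _ _ => sideForm_nonneg hy0 _)
  set N : α → ℝ := fun c => ((X c).card : ℝ) * (Y c).card with hN
  set NN := ∑ c, N c with hNN
  set m : α → ℝ := fun c => avg (X c) fun σ => avg (Y c) (f σ) with hm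
  set G : α → α → ℝ := fun c b => avg ((X c).filter fun σ => σ o = b) fun σ =>
        avg ((Y c).filter fun η => η o = b) (f σ) with hG
  set S : Finset α := Finset.univ.erase e with hS
  have hScard : (S.card : ℝ) = k - 1 := by
    rw [hS, Finset.card_erase_of_mem (Finset.mem_univ _), Finset.card_univ, Nat.cast_sub (by omega)]
    simp [hkdef]
  have hmemS : ∀ x, x ≠ e → x ∈ S := fun x hx => Finset.mem_erase.mpr ⟨hx, Finset.mem_univ _⟩
  have hsw : ∀ c b, b ≠ c → (Equiv.swap e c).symm b ∈ S := by
    intro c b hbc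
    refine hmemS _ fun h => hbc ?_
    rw [Equiv.symm_apply_eq] at h
    rw [h]; simp
  have hAc : ∀ (A : Finset α) c, ∀ a ∈ A.erase c, (Equiv.swap e c).symm a ∈ S :=
    fun A c a ha => hsw c a (Finset.ne_of_mem_erase ha)
  have hAne : ∀ (A : Finset α) c, 2 ≤ A.card → (A.erase c).Nonempty := by
    intro A c h
    have := Finset.pred_card_le_card_erase (s := A) (a := c)
    exact Finset.card_pos.mp (by omega)
  have hcardA : ∀ (A : Finset α) c, 2 ≤ A.card → (A.card : ℝ) - 1 ≤ ((A.erase c).card : ℝ) := by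
    intro A c h
    have h1 := Finset.pred_card_le_card_erase (s := A) (a := c)
    have h2 : (A.card : ℝ) ≤ (A.erase c).card + 1 := by
      have : A.card ≤ (A.erase c).card + 1 := by omega
      exact_mod_cast this
    linarith
  have hθc : ∀ (A : Finset α) c θ, 2 ≤ A.card → 0 ≤ θ → k - 2 ≤ θ * ((A.card : ℝ) - 1) →
      (S.card : ℝ) - 1 ≤ θ * (A.erase c).card := by
    intro A c θ h h0 h1
    have := mul_le_mul_of_nonneg_left (hcardA A c h) h0
    rw [hScard]; linarith
  set B : α → Finset α := fun c => Finset.univ.filter (fun b => Allowed Ax Ay c b) with hB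
  have hstep := fun c => product_star (hmemS _ hxe) (hmemS _ hye) (hmemS _ hoe) hox hoy
    (hAc Ax c) (hAc Ay c) (hAne Ax c h2x) (hAne Ay c h2y) hx0 hy0 (hθc Ax c θx h2x hx0 hθx)
    (hθc Ay c θy h2y hy0 hθy) f (B c)
    (fun b hb => by
      have := (Finset.mem_filter.mp hb).2
      exact ⟨hsw c b this.1.symm, this.2.1, this.2.2⟩)
    (X c) (Y c) (dsSet_eq hxe Ax c) (dsSet_eq hye Ay c) (Q c)
    (by simp only [hQ, sideForm_eq hxe hoe, sideForm_eq hye hoe, hS]) (m c) rfl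
  -- the sets `X c × Y c` have between `n0` and `4 * n0` elements
  set q : α → ℝ := fun p => ((permsOn (S.erase p)).card : ℝ) with hq
  have hqpos : ∀ p, 0 < q p := fun p => card_permsOn_pos _
  have hcX : ∀ c, ((X c).card : ℝ) = (Ax.erase c).card * q px := fun c => by
    simp only [hX]
    rw [dsSet_eq hxe]; exact card_rsSet (hmemS _ hxe) (hAc Ax c)
  have hcY : ∀ c, ((Y c).card : ℝ) = (Ay.erase c).card * q py := fun c => by
    simp only [hY]
    rw [dsSet_eq hye]; exact card_rsSet (hmemS _ hye) (hAc Ay c)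
  have hAx1 : (1 : ℝ) ≤ (Ax.card : ℝ) - 1 := by
    have : (2 : ℝ) ≤ Ax.card := by exact_mod_cast h2x
    linarith
  have hAy1 : (1 : ℝ) ≤ (Ay.card : ℝ) - 1 := by
    have : (2 : ℝ) ≤ Ay.card := by exact_mod_cast h2y
    linarith
  set n0 : ℝ := (((Ax.card : ℝ) - 1) * q px) * (((Ay.card : ℝ) - 1) * q py) with hn0
  have hn0pos : 0 < n0 := by
    have := hqpos px
    have := hqpos py
    positivity
  have hup : ∀ (A : Finset α) c, 1 ≤ (A.card : ℝ) - 1 →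
      ((A.erase c).card : ℝ) ≤ 2 * ((A.card : ℝ) - 1) := by
    intro A c h
    have : ((A.erase c).card : ℝ) ≤ A.card := by
      exact_mod_cast Finset.card_le_card (Finset.erase_subset _ _)
    linarith
  have hNlow : ∀ c, n0 ≤ N c := by
    intro c
    simp only [hN, hn0, hcX, hcY]
    have h1 := hqpos px
    have h2 := hqpos py
    have h3 := hcardA Ax c h2x
    have h4 := hcardA Ay c h2y
    have h5 : (0 : ℝ) ≤ (Ay.card : ℝ) - 1 := by linarith
    gcongr
  have hNup : ∀ c, N c ≤ 4 * n0 := by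
    intro c
    simp only [hN, hn0, hcX, hcY]
    have h1 := hqpos px
    have h2 := hqpos py
    calc _ ≤ ((2 * ((Ax.card : ℝ) - 1)) * q px) * ((2 * ((Ay.card : ℝ) - 1)) * q py) := by
          gcongr
          · exact hup Ax c hAx1
          · exact hup Ay c hAy1
      _ = _ := by ring
  have hN0 : ∀ c, 0 ≤ N c := fun c => hn0pos.le.trans (hNlow c)
  have hNNlow : k * n0 ≤ NN := by
    calc k * n0 = ∑ _c : α, n0 := by simp [hkdef]
      _ ≤ NN := Finset.sum_le_sum fun c _ => hNlow c
  have hNN0 : 0 ≤ NN := Finset.sum_nonneg fun c _ => hN0 c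
  set QQ := ∑ c, Q c with hQQ
  set EE := ∑ c, ∑ b, E c b with hEE
  have hQQ0 : 0 ≤ QQ := Finset.sum_nonneg fun c _ => hQ0 c
  have hEE0 : 0 ≤ EE := Finset.sum_nonneg fun c _ => Finset.sum_nonneg fun b _ => hE0 c b
  -- Exchanging hole and root edge on both sides maps the event that the holes carry `b` and the root
  -- `c` to the event with `b` and `c` interchanged.
  have hroot : ∀ c b, Allowed Ax Ay c b → n0 * (G c b - G b c) ^ 2 ≤ 4 * k ^ 2 * E c b := by
    intro c b hcb
    have hmem : ∀ (p : α) (A : Finset α), p ≠ e → o ≠ p → ∀ c b,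
        ∀ σ ∈ (dsSet e p A c).filter (fun σ => σ o = b),
        σ * Equiv.swap o e ∈ (dsSet e p A b).filter (fun σ => σ o = c) := by
      intro p A hpe hop c b σ hσ
      simp only [dsSet, Finset.mem_filter, Finset.mem_univ, true_and] at hσ ⊢
      refine ⟨⟨by simpa using hσ.2, ?_⟩, by simpa using hσ.1.1⟩
      rw [Equiv.Perm.mul_apply, Equiv.swap_apply_of_ne_of_ne hop.symm hpe]
      exact hσ.1.2
    have hinv : ∀ σ : Equiv.Perm α, σ * Equiv.swap o e * Equiv.swap o e = σ := by
      intro σ; rw [mul_assoc, Equiv.swap_mul_self, mul_one]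
    have hGb : G b c = avg ((X c).filter fun σ => σ o = b) fun σ =>
        avg ((Y c).filter fun η => η o = b) fun η =>
          f (σ * Equiv.swap o e) (η * Equiv.swap o e) := by
      simp only [hG]
      rw [avg_bij (s := (X c).filter fun σ => σ o = b) (fun σ => σ * Equiv.swap o e)
        (fun σ => σ * Equiv.swap o e) (hmem px Ax hxe hox c b) (hmem px Ax hxe hox b c)
        (fun σ _ => hinv σ) (fun σ _ => hinv σ)]
      congr 1
      funext σ
      exact avg_bij (s := (Y c).filter fun σ => σ o = b) (fun σ => σ * Equiv.swap o e)
        (fun σ => σ * Equiv.swap o e) (hmem py Ay hye hoy c b) (hmem py Ay hye hoy b c)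
        (fun σ _ => hinv σ) (fun σ _ => hinv σ) _
    have h1 := card_mul_avg_avg_sq_le ((X c).filter fun σ => σ o = b)
      ((Y c).filter fun η => η o = b)
      (fun σ η => f σ η - f (σ * Equiv.swap o e) (η * Equiv.swap o e))
    simp only [← avg_sub] at h1
    rw [← hGb] at h1
    have h2 : ((X c).card : ℝ) ≤ 2 * k * ((X c).filter fun σ => σ o = b).card := by
      have := card_rsSet_le (hmemS _ hxe) (hmemS _ hoe) hox (hAc Ax c) (hsw c b hcb.1.symm) hcb.2.1
      rw [← dsSet_eq hxe, hScard] at this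
      refine this.trans ?_
      gcongr
      linarith
    have h3 : ((Y c).card : ℝ) ≤ 2 * k * ((Y c).filter fun σ => σ o = b).card := by
      have := card_rsSet_le (hmemS _ hye) (hmemS _ hoe) hoy (hAc Ay c) (hsw c b hcb.1.symm) hcb.2.2
      rw [← dsSet_eq hye, hScard] at this
      refine this.trans ?_
      gcongr
      linarith
    calc n0 * (G c b - G b c) ^ 2 ≤ N c * (G c b - G b c) ^ 2 :=
          mul_le_mul_of_nonneg_right (hNlow c) (sq_nonneg _)
      _ ≤ ((2 * k * ((X c).filter fun σ => σ o = b).card) *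
          (2 * k * ((Y c).filter fun σ => σ o = b).card)) * (G c b - G b c) ^ 2 := by
          refine mul_le_mul_of_nonneg_right ?_ (sq_nonneg _)
          exact mul_le_mul h2 h3 (Nat.cast_nonneg _) (by positivity)
      _ = 4 * k ^ 2 * (((X c).filter fun σ => σ o = b).card *
          ((Y c).filter fun σ => σ o = b).card * (G c b - G b c) ^ 2) := by ring
      _ ≤ 4 * k ^ 2 * E c b := mul_le_mul_of_nonneg_left h1 (by positivity)
  have hGm : ∑ c, ∑ b ∈ B c, n0 * (G c b - m c) ^ 2 ≤ 64 * k * QQ := by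
    rw [hQQ, Finset.mul_sum]
    refine Finset.sum_le_sum fun c _ => ?_
    calc ∑ b ∈ B c, n0 * (G c b - m c) ^ 2 ≤ ∑ b ∈ B c, N c * (G c b - m c) ^ 2 :=
          Finset.sum_le_sum fun b _ => mul_le_mul_of_nonneg_right (hNlow c) (sq_nonneg _)
      _ ≤ 64 * S.card * Q c := (hstep c).2
      _ ≤ 64 * k * Q c := by
          have := hQ0 c
          rw [hScard]; gcongr; linarith
  have hGm' : ∑ c, ∑ b ∈ B c, n0 * (G b c - m b) ^ 2 ≤ 64 * k * QQ := by
    refine le_trans (le_of_eq ?_) hGm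
    simp only [hB, Finset.sum_filter]
    rw [Finset.sum_comm]
    refine Finset.sum_congr rfl fun c _ => Finset.sum_congr rfl fun b _ => ?_
    have : Allowed Ax Ay b c ↔ Allowed Ax Ay c b := ⟨fun h => h.symm, fun h => h.symm⟩
    simp only [this]
  have hEs : ∑ c, ∑ b ∈ B c, n0 * (G c b - G b c) ^ 2 ≤ 4 * k ^ 2 * EE := by
    rw [hEE, Finset.mul_sum]
    refine Finset.sum_le_sum fun c _ => ?_
    rw [Finset.mul_sum]
    calc ∑ b ∈ B c, n0 * (G c b - G b c) ^ 2 ≤ ∑ b ∈ B c, 4 * k ^ 2 * E c b :=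
          Finset.sum_le_sum fun b hb => hroot c b (Finset.mem_filter.mp hb).2
      _ ≤ _ := Finset.sum_le_sum_of_subset_of_nonneg (Finset.subset_univ _)
          fun b _ _ => by have := hE0 c b; positivity
  have hSa : n0 * ∑ c, ∑ b ∈ B c, (m c - m b) ^ 2 ≤ 384 * k * QQ + 12 * k ^ 2 * EE := by
    calc n0 * ∑ c, ∑ b ∈ B c, (m c - m b) ^ 2
        ≤ ∑ c, ∑ b ∈ B c, (3 * (n0 * (G c b - m c) ^ 2) + 3 * (n0 * (G b c - m b) ^ 2) +
            3 * (n0 * (G c b - G b c) ^ 2)) := by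
          rw [Finset.mul_sum]
          refine Finset.sum_le_sum fun c _ => ?_
          rw [Finset.mul_sum]
          refine Finset.sum_le_sum fun b _ => ?_
          have : (m c - m b) ^ 2 ≤ 3 * (G c b - m c) ^ 2 + 3 * (G b c - m b) ^ 2 +
              3 * (G c b - G b c) ^ 2 := by
            nlinarith [sq_nonneg ((G c b - m c) + (G b c - m b)),
              sq_nonneg ((G c b - m c) + (G c b - G b c)),
              sq_nonneg ((G b c - m b) - (G c b - G b c))]
          have := mul_le_mul_of_nonneg_left this hn0pos.le
          linarith
      _ = 3 * ∑ c, ∑ b ∈ B c, n0 * (G c b - m c) ^ 2 +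
          3 * ∑ c, ∑ b ∈ B c, n0 * (G b c - m b) ^ 2 +
          3 * ∑ c, ∑ b ∈ B c, n0 * (G c b - G b c) ^ 2 := by
          simp only [Finset.sum_add_distrib, Finset.mul_sum]
      _ ≤ _ := by linarith
  have hall := sum_pairs_le_allowed hk h2x h2y m
  have hbetween : ∑ c, ∑ c', N c * N c' * (m c - m c') ^ 2 ≤
      16 * 33 * NN * (384 * QQ + 12 * k * EE) := by
    calc ∑ c, ∑ c', N c * N c' * (m c - m c') ^ 2
        ≤ ∑ c, ∑ c', (4 * n0) * (4 * n0) * (m c - m c') ^ 2 := by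
          refine Finset.sum_le_sum fun c _ => Finset.sum_le_sum fun c' _ => ?_
          have := hNup c
          have := hNup c'
          have := hN0 c
          have := hN0 c'
          gcongr
      _ = 16 * n0 ^ 2 * ∑ c, ∑ c', (m c - m c') ^ 2 := by
          simp only [Finset.mul_sum]
          exact Finset.sum_congr rfl fun c _ => Finset.sum_congr rfl fun c' _ => by ring
      _ ≤ 16 * n0 ^ 2 * (33 * ∑ c, ∑ b ∈ B c, (m c - m b) ^ 2) := by gcongr
      _ = 16 * 33 * n0 * (n0 * ∑ c, ∑ b ∈ B c, (m c - m b) ^ 2) := by ring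
      _ ≤ 16 * 33 * n0 * (384 * k * QQ + 12 * k ^ 2 * EE) := by gcongr
      _ = 16 * 33 * (k * n0) * (384 * QQ + 12 * k * EE) := by ring
      _ ≤ _ := by gcongr
  have hwithin : ∑ c, ∑ σ ∈ X c, ∑ η ∈ Y c, (f σ η - m c) ^ 2 ≤ 6 * QQ := by
    rw [hQQ, Finset.mul_sum]
    exact Finset.sum_le_sum fun c _ => (hstep c).1
  refine (sum_sq_le_within_between X Y f m).trans ?_
  change 6 * NN * (∑ c, ∑ σ ∈ X c, ∑ η ∈ Y c, (f σ η - m c) ^ 2) +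
    3 * (∑ c, ∑ c', N c * N c' * (m c - m c') ^ 2) ≤ 700000 * NN * (QQ + k * EE)
  generalize (∑ c, ∑ σ ∈ X c, ∑ η ∈ Y c, (f σ η - m c) ^ 2) = w at hwithin ⊢
  generalize (∑ c, ∑ c', N c * N c' * (m c - m c') ^ 2) = w' at hbetween ⊢
  have hk0 : 0 ≤ k := by linarith
  clear_value k NN QQ EE
  have h1 : 0 ≤ NN * QQ := mul_nonneg hNN0 hQQ0
  have h2 : 0 ≤ NN * (k * EE) := mul_nonneg hNN0 (mul_nonneg hk0 hEE0)
  have h3 := mul_le_mul_of_nonneg_left hwithin hNN0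
  linarith

end DoubleStar

/-! ### Colour vectors at the root: vertex-rooted case -/

section ColourLevel

variable {r d : ℕ}

/-- Local energy at coordinate `i` of a function on a set `C` of colour vectors. -/
noncomputable def colEnAt {κ : Type*} [Fintype κ] (C : Finset (Fin r → κ)) (i : Fin r)
    (F : (Fin r → κ) → ℝ) (c : Fin r → κ) : ℝ :=
  ∑ b ∈ Finset.univ.filter (fun b => Function.update c i b ∈ C),
    (F c - F (Function.update c i b)) ^ 2

/-- Energy, on a set `C` of colour vectors, of the moves that change coordinate `i` only. -/
noncomputable def colEn {κ : Type*} [Fintype κ] (C : Finset (Fin r → κ)) (i : Fin r)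
    (F : (Fin r → κ) → ℝ) : ℝ :=
  ∑ c ∈ C, colEnAt C i F c

lemma colEnAt_nonneg {κ : Type*} [Fintype κ] (C : Finset (Fin r → κ)) (i : Fin r)
    (F : (Fin r → κ) → ℝ) (c : Fin r → κ) : 0 ≤ colEnAt C i F c :=
  Finset.sum_nonneg fun _ _ => sq_nonneg _

lemma colEn_nonneg {κ : Type*} [Fintype κ] (C : Finset (Fin r → κ)) (i : Fin r)
    (F : (Fin r → κ) → ℝ) : 0 ≤ colEn C i F :=
  Finset.sum_nonneg fun _ _ => colEnAt_nonneg _ _ _ _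

lemma sq_le_colEnAt {κ : Type*} [Fintype κ] {C : Finset (Fin r → κ)} {i : Fin r}
    (F : (Fin r → κ) → ℝ) {c c' : Fin r → κ} {b : κ} (h : c' = Function.update c i b)
    (hc' : c' ∈ C) : (F c - F c') ^ 2 ≤ colEnAt C i F c := by
  subst h
  exact Finset.single_le_sum (f := fun b => (F c - F (Function.update c i b)) ^ 2)
    (fun _ _ => sq_nonneg _) (Finset.mem_filter.mpr ⟨Finset.mem_univ b, hc'⟩)

/-- An injective colouring of `d` edges by `d + 1` colours is a permutation of `d + 1` points, the
unused colour being placed at `0`. -/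
lemma exists_perm_extend (c : Fin d → Fin (d + 1)) (hc : Function.Injective c) :
    ∃ σ : Equiv.Perm (Fin (d + 1)), ∀ j : Fin d, σ j.succ = c j := by
  obtain ⟨b, hb⟩ : ∃ b, b ∉ Set.range c := by
    by_contra h
    push Not at h
    have := Fintype.card_le_of_surjective c h
    simp at this
  have hinj : Function.Injective (Fin.cons b c : Fin (d + 1) → Fin (d + 1)) :=
    Fin.cons_injective_iff.mpr ⟨hb, hc⟩
  exact ⟨Equiv.ofBijective _ (Finite.injective_iff_bijective.mp hinj), fun j => by simp⟩

lemma perm_eq_of_succ {σ τ : Equiv.Perm (Fin (d + 1))} (h : ∀ j : Fin d, σ j.succ = τ j.succ) :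
    σ = τ := by
  ext x
  refine congrArg _ ?_
  refine Fin.cases ?_ h x
  by_contra h0
  obtain ⟨y, hy⟩ := τ.surjective (σ 0)
  rcases Fin.eq_zero_or_eq_succ y with rfl | ⟨j, rfl⟩
  · exact h0 hy.symm
  · rw [← h j] at hy
    exact (Fin.succ_ne_zero j) (σ.injective hy)

lemma swap_succ_apply (σ : Equiv.Perm (Fin (d + 1))) (j j' : Fin d) :
    (σ * Equiv.swap 0 j.succ) j'.succ = if j' = j then σ 0 else σ j'.succ := by
  rw [Equiv.Perm.mul_apply]
  split_ifs with h
  · rw [h, Equiv.swap_apply_right]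
  · rw [Equiv.swap_apply_of_ne_of_ne (Fin.succ_ne_zero _)
      (fun hj => h (Fin.succ_injective _ hj))]

/-- Poincaré inequality for injective colourings of a star with `d` edges by `d + 1` colours, where
the edge `p` has a restricted palette `A p`. -/
theorem col_vertex (s : Fin d ≃ Fin r) (A : Fin r → Finset (Fin (d + 1))) (p : Fin r) {θ : ℝ}
    (hA : ∀ i, i ≠ p → A i = Finset.univ) (hAp : (A p).Nonempty)
    (hθ : (d : ℝ) ≤ θ * (A p).card) {w : Fin r → ℝ} (hw : ∀ i, 1 ≤ w i) (hwp : θ ≤ w p)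
    (C : Finset (Fin r → Fin (d + 1)))
    (hC : ∀ c, c ∈ C ↔ Function.Injective (c ∘ s) ∧ ∀ i, c i ∈ A i)
    (F : (Fin r → Fin (d + 1)) → ℝ) :
    ∑ c ∈ C, ∑ c' ∈ C, (F c - F c') ^ 2 ≤ 12 * C.card * ∑ i, w i * colEn C i F := by
  set P : Fin d := s.symm p with hP
  have hsP : s P = p := by simp [hP]
  set X := rsSet (1 : Equiv.Perm (Fin (d + 1))) Finset.univ P.succ (A p) with hX
  have hmemX : ∀ σ, σ ∈ X ↔ σ P.succ ∈ A p := by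
    intro σ; simp [hX, rsSet, mem_cosetOn]
  set gl : Equiv.Perm (Fin (d + 1)) → Fin r → Fin (d + 1) :=
    fun σ i => σ (s.symm i).succ with hgl
  have hglC : ∀ σ ∈ X, gl σ ∈ C := by
    intro σ hσ
    rw [hC]
    constructor
    · intro a b hab
      simpa [hgl] using hab
    · intro i
      by_cases hi : i = p
      · subst hi; exact (hmemX σ).mp hσ
      · rw [hA i hi]; exact Finset.mem_univ _
  have hsum : ∀ φ : (Fin r → Fin (d + 1)) → ℝ, ∑ σ ∈ X, φ (gl σ) = ∑ c ∈ C, φ c := by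
    intro φ
    refine Finset.sum_nbij gl hglC ?_ ?_ fun _ _ => rfl
    · intro σ _ τ _ h
      refine perm_eq_of_succ fun j => ?_
      have := congrFun h (s j)
      simpa [hgl] using this
    · intro c hc
      rw [Finset.mem_coe, hC] at hc
      obtain ⟨σ, hσ⟩ := exists_perm_extend _ hc.1
      have he : gl σ = c := by
        funext i
        simp [hgl, hσ]
      refine ⟨σ, ?_, he⟩
      rw [Finset.mem_coe, hmemX]
      have := hc.2 p
      rw [hσ]; simpa [hsP] using this
  have hcard : (X.card : ℝ) = C.card := by simpa using hsum fun _ => 1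
  have hmove : ∀ (σ : Equiv.Perm (Fin (d + 1))) (j : Fin d), gl (σ * Equiv.swap 0 j.succ) =
      Function.update (gl σ) (s j) (σ 0) := by
    intro σ j
    funext i
    simp only [hgl, Function.update_apply, swap_succ_apply, Equiv.symm_apply_eq]
  have hstar := (restricted_star (g := 1) (S := Finset.univ) (o := 0) (p := P.succ) (A := A p)
    (Finset.mem_univ _) (Finset.mem_univ _) (Fin.succ_ne_zero P).symm
    (fun _ _ => Finset.mem_univ _) hAp (θ := θ)
    (by simpa using hθ) (fun σ => F (gl σ))).1
  have hform : rsForm (1 : Equiv.Perm (Fin (d + 1))) Finset.univ 0 P.succ (A p) θ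
      (fun σ => F (gl σ)) ≤ ∑ i, w i * colEn C i F := by
    rw [rsForm, ← hX]
    have hset : ((Finset.univ.erase P.succ).erase (0 : Fin (d + 1))) =
        (Finset.univ.erase P).map (Fin.succEmb d) := by
      ext x
      refine Fin.cases ?_ (fun j => ?_) x <;> simp
    rw [hset, Finset.sum_map, ← Equiv.sum_comp s, ← Finset.sum_erase_add _ _ (Finset.mem_univ P)]
    refine add_le_add (Finset.sum_le_sum fun j hj => ?_) ?_
    · have hjP := Finset.ne_of_mem_erase hj
      calc _ ≤ ∑ σ ∈ X, colEnAt C (s j) F (gl σ) := by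
            refine Finset.sum_le_sum fun σ hσ => sq_le_colEnAt F (hmove σ j) (hglC _ ?_)
            rw [hmemX, Fin.coe_succEmb, swap_succ_apply, if_neg hjP.symm]
            exact (hmemX σ).mp hσ
        _ = colEn C (s j) F := hsum _
        _ ≤ _ := le_mul_of_one_le_left (colEn_nonneg _ _ _) (hw _)
    · rw [hsP]
      refine mul_le_mul hwp ?_ (Finset.sum_nonneg fun _ _ => sq_nonneg _)
        (zero_le_one.trans (hw p))
      calc _ ≤ ∑ σ ∈ X.filter (fun σ => σ 0 ∈ A p), colEnAt C p F (gl σ) := by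
            refine Finset.sum_le_sum fun σ hσ => sq_le_colEnAt F (b := σ 0) ?_ (hglC _ ?_)
            · rw [hmove, hsP]
            · rw [hmemX, swap_succ_apply, if_pos rfl]
              exact (Finset.mem_filter.mp hσ).2
        _ ≤ ∑ σ ∈ X, colEnAt C p F (gl σ) :=
            Finset.sum_le_sum_of_subset_of_nonneg (Finset.filter_subset _ _)
              fun _ _ _ => colEnAt_nonneg _ _ _ _
        _ = _ := hsum _
  have hpair := sum_pair_sq_avg X (fun σ => F (gl σ))
  rw [hcard] at hpair
  have h1 : ∑ c ∈ C, ∑ c' ∈ C, (F c - F c') ^ 2 =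
      ∑ σ ∈ X, ∑ τ ∈ X, (F (gl σ) - F (gl τ)) ^ 2 := by
    rw [← hsum]
    exact Finset.sum_congr rfl fun σ _ => (hsum fun c => (F (gl σ) - F c) ^ 2).symm
  rw [h1, hpair]
  have h2 : (0 : ℝ) ≤ 2 * C.card := by positivity
  calc _ ≤ 2 * (C.card : ℝ) * (6 * ∑ i, w i * colEn C i F) :=
        mul_le_mul_of_nonneg_left (hstar.trans (by linarith)) h2
    _ = _ := by ring

/-- The star energy of one side is bounded termwise by any local energies that dominate the
individual moves; the position `0` is the hole and `j.succ` is the edge `j`. -/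
lemma sideForm_le {z p : Fin d} (hpz : p ≠ z) {A : Finset (Fin (d + 1))} {θ : ℝ}
    {c : Fin (d + 1)} {f : Equiv.Perm (Fin (d + 1)) → ℝ}
    {En : Fin d → Equiv.Perm (Fin (d + 1)) → ℝ} (hEn : ∀ j σ, 0 ≤ En j σ) {w : Fin d → ℝ}
    (hw : ∀ i, 1 ≤ w i) (hwp : θ ≤ w p)
    (h : ∀ j, j ≠ z → ∀ σ ∈ dsSet z.succ p.succ A c, (j = p → σ 0 ∈ A) →
      (f σ - f (σ * Equiv.swap 0 j.succ)) ^ 2 ≤ En j σ) :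
    sideForm z.succ 0 p.succ A θ c f ≤ ∑ j, w j * ∑ σ ∈ dsSet z.succ p.succ A c, En j σ := by
  have hw0 : ∀ j, 0 ≤ w j := fun j => zero_le_one.trans (hw j)
  have hs0 : ∀ j, 0 ≤ ∑ σ ∈ dsSet z.succ p.succ A c, En j σ :=
    fun j => Finset.sum_nonneg fun _ _ => hEn _ _
  have hset : (((Finset.univ.erase z.succ).erase p.succ).erase (0 : Fin (d + 1))) =
      ((Finset.univ.erase z).erase p).map (Fin.succEmb d) := by
    ext x
    refine Fin.cases ?_ (fun j => ?_) x <;> simp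
  rw [sideForm, hset, Finset.sum_map, ← Finset.sum_erase_add _ _ (Finset.mem_univ z),
    ← Finset.sum_erase_add _ _ (Finset.mem_erase.mpr ⟨hpz, Finset.mem_univ p⟩)]
  refine le_add_of_le_of_nonneg (add_le_add (Finset.sum_le_sum fun j hj => ?_) ?_)
    (mul_nonneg (hw0 _) (hs0 _))
  · have hjp := Finset.ne_of_mem_erase hj
    have hjz := Finset.ne_of_mem_erase (Finset.mem_of_mem_erase hj)
    refine le_trans (Finset.sum_le_sum fun σ hσ => h j hjz σ hσ fun h' => absurd h' hjp) ?_
    exact le_mul_of_one_le_left (hs0 _) (hw _)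
  · refine mul_le_mul hwp ?_ (Finset.sum_nonneg fun _ _ => sq_nonneg _) (hw0 _)
    refine le_trans (Finset.sum_le_sum fun σ hσ => h p hpz σ (Finset.mem_filter.mp hσ).1
      fun _ => (Finset.mem_filter.mp hσ).2) ?_
    exact Finset.sum_le_sum_of_subset_of_nonneg (Finset.filter_subset _ _) fun _ _ _ => hEn _ _

/-- Two bijections, one for each star, agreeing at the common edge determine a colour vector. -/
lemma exists_glue (sx sy : Fin d → Fin r) (hx : Function.Injective sx)
    (hy : Function.Injective sy) (z : Fin d)
    (hdis : ∀ j j', sx j = sy j' → j = z ∧ j' = z) :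
    ∃ gl : Equiv.Perm (Fin (d + 1)) → Equiv.Perm (Fin (d + 1)) → Fin r → Fin (d + 1),
      (∀ σ η j, gl σ η (sx j) = σ j.succ) ∧
      (∀ σ η, σ z.succ = η z.succ → ∀ j, gl σ η (sy j) = η j.succ) := by
  refine ⟨fun σ η i => if h : ∃ j, sx j = i then σ h.choose.succ else
    if h : ∃ j, sy j = i then η h.choose.succ else 0, ?_, ?_⟩
  · intro σ η j
    have h : ∃ j', sx j' = sx j := ⟨j, rfl⟩
    beta_reduce
    rw [dif_pos h, hx h.choose_spec]
  · intro σ η hση j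
    beta_reduce
    by_cases h : ∃ j', sx j' = sy j
    · rw [dif_pos h]
      obtain ⟨h1, h2⟩ := hdis _ _ h.choose_spec
      rw [h1, hση, h2]
    · have h' : ∃ j', sy j' = sy j := ⟨j, rfl⟩
      rw [dif_neg h, dif_pos h', hy h'.choose_spec]

end ColourLevel

/-! ### Colour vectors at the root: edge-rooted case -/

section ColourLevelTwo

variable {r d : ℕ}

set_option maxHeartbeats 1000000 in
/-- Poincaré inequality for colourings of the double star around an edge `i0`, with restricted
palettes at one edge of each side. The edges of the two stars are enumerated by `sx` and `sy`, both
of which send `z` to the common edge. -/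
theorem col_edge (hd : 3 ≤ d) (sx sy : Fin d → Fin r) (hx : Function.Injective sx)
    (hy : Function.Injective sy) (z : Fin d) (hz : sx z = sy z)
    (hdis : ∀ j j', sx j = sy j' → j = z ∧ j' = z)
    (hcov : ∀ i, (∃ j, sx j = i) ∨ ∃ j, sy j = i)
    (A : Fin r → Finset (Fin (d + 1))) (px py : Fin d) (hpx : px ≠ z) (hpy : py ≠ z)
    (hA : ∀ i, i ≠ sx px → i ≠ sy py → A i = Finset.univ)
    (h2x : 2 ≤ (A (sx px)).card) (h2y : 2 ≤ (A (sy py)).card)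
    {θx θy : ℝ} (hx0 : 0 ≤ θx) (hy0 : 0 ≤ θy)
    (hθx : (d : ℝ) - 1 ≤ θx * (((A (sx px)).card : ℝ) - 1))
    (hθy : (d : ℝ) - 1 ≤ θy * (((A (sy py)).card : ℝ) - 1))
    {w : Fin r → ℝ} (hw : ∀ i, 1 ≤ w i) (hwx : θx ≤ w (sx px)) (hwy : θy ≤ w (sy py))
    (hwz : (d : ℝ) + 1 ≤ w (sx z)) (C : Finset (Fin r → Fin (d + 1)))
    (hC : ∀ c, c ∈ C ↔ Function.Injective (c ∘ sx) ∧ Function.Injective (c ∘ sy) ∧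
      ∀ i, c i ∈ A i)
    (F : (Fin r → Fin (d + 1)) → ℝ) :
    ∑ c ∈ C, ∑ c' ∈ C, (F c - F c') ^ 2 ≤ 2100000 * C.card * ∑ i, w i * colEn C i F := by
  obtain ⟨gl, hglx, hgly⟩ := exists_glue sx sy hx hy z hdis
  set X := dsSet z.succ px.succ (A (sx px)) with hX
  set Y := dsSet z.succ py.succ (A (sy py)) with hY
  have hmX : ∀ c σ, σ ∈ X c ↔ σ z.succ = c ∧ σ px.succ ∈ A (sx px) := by
    intro c σ; simp [hX, dsSet]
  have hmY : ∀ c σ, σ ∈ Y c ↔ σ z.succ = c ∧ σ py.succ ∈ A (sy py) := by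
    intro c σ; simp [hY, dsSet]
  have hxy : ∀ c σ η, σ ∈ X c → η ∈ Y c → σ z.succ = η z.succ := fun c σ η h1 h2 =>
    ((hmX _ _).mp h1).1.trans ((hmY _ _).mp h2).1.symm
  have hext : ∀ (σ η : Equiv.Perm (Fin (d + 1))) (c : Fin r → Fin (d + 1)),
      σ z.succ = η z.succ → (∀ j, c (sx j) = σ j.succ) → (∀ j, c (sy j) = η j.succ) →
      gl σ η = c := by
    intro σ η c h h1 h2
    funext i
    rcases hcov i with ⟨j, rfl⟩ | ⟨j, rfl⟩
    · rw [hglx, h1]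
    · rw [hgly _ _ h, h2]
  have hglC : ∀ c, ∀ σ ∈ X c, ∀ η ∈ Y c, gl σ η ∈ C := by
    intro c σ hσ η hη
    have he := hxy c σ η hσ hη
    rw [hC]
    refine ⟨fun a b hab => ?_, fun a b hab => ?_, fun i => ?_⟩
    · simpa [hglx] using hab
    · simpa [hgly _ _ he] using hab
    · by_cases h1 : i = sx px
      · subst h1; rw [hglx]; exact ((hmX _ _).mp hσ).2
      by_cases h2 : i = sy py
      · subst h2; rw [hgly _ _ he]; exact ((hmY _ _).mp hη).2
      rw [hA i h1 h2]; exact Finset.mem_univ _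
  have hsum : ∀ φ : (Fin r → Fin (d + 1)) → ℝ,
      ∑ c, ∑ σ ∈ X c, ∑ η ∈ Y c, φ (gl σ η) = ∑ c ∈ C, φ c := by
    intro φ
    rw [← Finset.sum_fiberwise C (fun c => c (sx z)) φ]
    refine Finset.sum_congr rfl fun c _ => ?_
    rw [← Finset.sum_product']
    refine Finset.sum_nbij (fun q => gl q.1 q.2) ?_ ?_ ?_ fun _ _ => rfl
    · intro q hq
      rw [Finset.mem_product] at hq
      rw [Finset.mem_filter]
      refine ⟨hglC c _ hq.1 _ hq.2, ?_⟩
      rw [hglx]; exact ((hmX _ _).mp hq.1).1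
    · intro q hq q' hq' h
      rw [Finset.mem_coe, Finset.mem_product] at hq hq'
      simp only at h
      refine Prod.ext (perm_eq_of_succ fun j => ?_) (perm_eq_of_succ fun j => ?_)
      · rw [← hglx q.1 q.2, ← hglx q'.1 q'.2, h]
      · rw [← hgly q.1 q.2 (hxy c _ _ hq.1 hq.2), ← hgly q'.1 q'.2 (hxy c _ _ hq'.1 hq'.2), h]
    · intro v hv
      rw [Finset.mem_coe, Finset.mem_filter, hC] at hv
      obtain ⟨⟨h1, h2, h3⟩, h4⟩ := hv
      obtain ⟨σ, hσ⟩ := exists_perm_extend _ h1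
      obtain ⟨η, hη⟩ := exists_perm_extend _ h2
      simp only [Function.comp_apply] at hσ hη
      refine ⟨(σ, η), ?_, hext σ η v (by rw [hσ, hη, hz]) (fun j => (hσ j).symm)
        fun j => (hη j).symm⟩
      rw [Finset.mem_coe, Finset.mem_product, hmX, hmY]
      simp only [hσ, hη]
      exact ⟨⟨h4, h3 _⟩, ⟨by rw [← hz]; exact h4, h3 _⟩⟩
  -- the three kinds of moves
  have hmx : ∀ c, ∀ σ ∈ X c, ∀ η ∈ Y c, ∀ j, j ≠ z → (j = px → σ 0 ∈ A (sx px)) →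
      (F (gl σ η) - F (gl (σ * Equiv.swap 0 j.succ) η)) ^ 2 ≤ colEnAt C (sx j) F (gl σ η) := by
    intro c σ hσ η hη j hj hjA
    have he := hxy c σ η hσ hη
    have hσ' : σ * Equiv.swap 0 j.succ ∈ X c := by
      rw [hmX] at hσ ⊢
      rw [swap_succ_apply, swap_succ_apply, if_neg hj.symm]
      refine ⟨hσ.1, ?_⟩
      split_ifs with h
      · exact hjA h.symm
      · exact hσ.2
    refine sq_le_colEnAt F (b := σ 0) (hext _ _ _ (hxy c _ _ hσ' hη) (fun j' => ?_) fun j' => ?_)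
      (hglC c _ hσ' _ hη)
    · simp only [Function.update_apply, swap_succ_apply, hglx, hx.eq_iff]
    · rw [Function.update_of_ne, hgly _ _ he]
      exact fun h => hj (hdis _ _ h.symm).1
  have hmy : ∀ c, ∀ σ ∈ X c, ∀ η ∈ Y c, ∀ j, j ≠ z → (j = py → η 0 ∈ A (sy py)) →
      (F (gl σ η) - F (gl σ (η * Equiv.swap 0 j.succ))) ^ 2 ≤ colEnAt C (sy j) F (gl σ η) := by
    intro c σ hσ η hη j hj hjA
    have he := hxy c σ η hσ hη
    have hη' : η * Equiv.swap 0 j.succ ∈ Y c := by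
      rw [hmY] at hη ⊢
      rw [swap_succ_apply, swap_succ_apply, if_neg hj.symm]
      refine ⟨hη.1, ?_⟩
      split_ifs with h
      · exact hjA h.symm
      · exact hη.2
    refine sq_le_colEnAt F (b := η 0) (hext _ _ _ (hxy c _ _ hσ hη') (fun j' => ?_) fun j' => ?_)
      (hglC c _ hσ _ hη')
    · rw [Function.update_of_ne, hglx]
      exact fun h => hj (hdis _ _ h).2
    · simp only [Function.update_apply, swap_succ_apply, hgly _ _ he, hy.eq_iff]
  have hmz : ∀ c, ∀ σ ∈ X c, ∀ η ∈ Y c, σ 0 = η 0 →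
      (F (gl σ η) - F (gl (σ * Equiv.swap 0 z.succ) (η * Equiv.swap 0 z.succ))) ^ 2 ≤
        colEnAt C (sx z) F (gl σ η) := by
    intro c σ hσ η hη h0
    have he := hxy c σ η hσ hη
    have hσ' : σ * Equiv.swap 0 z.succ ∈ X (σ 0) := by
      rw [hmX] at hσ ⊢
      rw [swap_succ_apply, swap_succ_apply, if_pos rfl, if_neg hpx]
      exact ⟨rfl, hσ.2⟩
    have hη' : η * Equiv.swap 0 z.succ ∈ Y (σ 0) := by
      rw [hmY] at hη ⊢
      rw [swap_succ_apply, swap_succ_apply, if_pos rfl, if_neg hpy]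
      exact ⟨h0.symm, hη.2⟩
    refine sq_le_colEnAt F (b := σ 0) (hext _ _ _ (hxy _ _ _ hσ' hη') (fun j' => ?_) fun j' => ?_)
      (hglC _ _ hσ' _ hη')
    · simp only [Function.update_apply, swap_succ_apply, hglx, hx.eq_iff]
    · simp only [Function.update_apply, swap_succ_apply, hgly _ _ he, hz, hy.eq_iff, h0]
  have hkc : (Fintype.card (Fin (d + 1)) : ℝ) = d + 1 := by simp
  have hds := double_star (e := z.succ) (o := (0 : Fin (d + 1))) (px := px.succ) (py := py.succ)
    (by rw [Fintype.card_fin]; omega) (Fin.succ_ne_zero _).symm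
    (fun h => hpx (Fin.succ_injective _ h)) (fun h => hpy (Fin.succ_injective _ h))
    (Fin.succ_ne_zero _).symm (Fin.succ_ne_zero _).symm h2x h2y hx0 hy0
    (by rw [hkc]; linarith) (by rw [hkc]; linarith) (fun σ η => F (gl σ η))
  rw [hkc] at hds
  have hcard : ∑ c, ((X c).card : ℝ) * (Y c).card = C.card := by
    have := hsum fun _ => 1
    simpa using this
  have hlhs : ∑ c ∈ C, ∑ c' ∈ C, (F c - F c') ^ 2 =
      ∑ c, ∑ c', ∑ σ ∈ X c, ∑ η ∈ Y c, ∑ σ' ∈ X c', ∑ η' ∈ Y c',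
        (F (gl σ η) - F (gl σ' η')) ^ 2 := by
    rw [← hsum]
    refine Finset.sum_congr rfl fun c _ => ?_
    symm
    rw [Finset.sum_comm]
    refine Finset.sum_congr rfl fun σ _ => ?_
    rw [Finset.sum_comm]
    refine Finset.sum_congr rfl fun η _ => ?_
    symm
    exact (hsum fun v => (F (gl σ η) - F v) ^ 2).symm
  set W := ∑ i, w i * colEn C i F with hW
  have hw0 : ∀ i, 0 ≤ w i * colEn C i F := fun i =>
    mul_nonneg (zero_le_one.trans (hw i)) (colEn_nonneg _ _ _)
  have hinj : ∀ s : Fin d → Fin r, Function.Injective s →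
      ∑ j, w (s j) * colEn C (s j) F ≤ W := by
    intro s hs
    rw [← Finset.sum_image (s := Finset.univ) (f := fun i => w i * colEn C i F) hs.injOn]
    exact Finset.sum_le_sum_of_subset_of_nonneg (Finset.subset_univ _) fun i _ _ => hw0 i
  have hQx : ∑ c, ∑ η ∈ Y c, sideForm z.succ 0 px.succ (A (sx px)) θx c
      (fun σ => F (gl σ η)) ≤ W := by
    refine le_trans ?_ (hinj sx hx)
    calc _ ≤ ∑ c, ∑ η ∈ Y c, ∑ j, w (sx j) * ∑ σ ∈ X c, colEnAt C (sx j) F (gl σ η) := by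
          refine Finset.sum_le_sum fun c _ => Finset.sum_le_sum fun η hη => ?_
          exact sideForm_le hpx (En := fun j σ => colEnAt C (sx j) F (gl σ η))
            (w := fun j => w (sx j)) (fun _ _ => colEnAt_nonneg _ _ _ _) (fun j => hw _) hwx
            fun j hj σ hσ h => hmx c σ hσ η hη j hj h
      _ = ∑ j, w (sx j) * ∑ c, ∑ σ ∈ X c, ∑ η ∈ Y c, colEnAt C (sx j) F (gl σ η) := by
          simp only [Finset.mul_sum]
          rw [Finset.sum_comm]
          refine Finset.sum_congr rfl fun c _ => ?_
          rw [Finset.sum_comm]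
          refine Finset.sum_congr rfl fun j _ => ?_
          rw [Finset.sum_comm]
      _ = _ := Finset.sum_congr rfl fun j _ => by rw [hsum]; rfl
  have hQy : ∑ c, ∑ σ ∈ X c, sideForm z.succ 0 py.succ (A (sy py)) θy c
      (fun η => F (gl σ η)) ≤ W := by
    refine le_trans ?_ (hinj sy hy)
    calc _ ≤ ∑ c, ∑ σ ∈ X c, ∑ j, w (sy j) * ∑ η ∈ Y c, colEnAt C (sy j) F (gl σ η) := by
          refine Finset.sum_le_sum fun c _ => Finset.sum_le_sum fun σ hσ => ?_
          exact sideForm_le hpy (En := fun j η => colEnAt C (sy j) F (gl σ η))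
            (w := fun j => w (sy j)) (fun _ _ => colEnAt_nonneg _ _ _ _) (fun j => hw _) hwy
            fun j hj η hη h => hmy c σ hσ η hη j hj h
      _ = ∑ j, w (sy j) * ∑ c, ∑ σ ∈ X c, ∑ η ∈ Y c, colEnAt C (sy j) F (gl σ η) := by
          simp only [Finset.mul_sum]
          rw [Finset.sum_comm]
          refine Finset.sum_congr rfl fun c _ => ?_
          rw [Finset.sum_comm]
      _ = _ := Finset.sum_congr rfl fun j _ => by rw [hsum]; rfl
  have hE : ((d : ℝ) + 1) * ∑ c, ∑ b, ∑ σ ∈ (X c).filter (fun σ => σ 0 = b),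
      ∑ η ∈ (Y c).filter (fun η => η 0 = b),
        (F (gl σ η) - F (gl (σ * Equiv.swap 0 z.succ) (η * Equiv.swap 0 z.succ))) ^ 2 ≤ W := by
    refine le_trans ?_ (Finset.single_le_sum (f := fun i => w i * colEn C i F)
      (fun i _ => hw0 i) (Finset.mem_univ (sx z)))
    refine mul_le_mul hwz ?_ (by positivity) (zero_le_one.trans (hw _))
    calc _ ≤ ∑ c, ∑ b, ∑ σ ∈ (X c).filter (fun σ => σ 0 = b), ∑ η ∈ Y c,
          colEnAt C (sx z) F (gl σ η) := by
          refine Finset.sum_le_sum fun c _ => Finset.sum_le_sum fun b _ =>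
            Finset.sum_le_sum fun σ hσ => ?_
          refine le_trans (Finset.sum_le_sum fun η hη => ?_)
            (Finset.sum_le_sum_of_subset_of_nonneg (Finset.filter_subset
              (fun η : Equiv.Perm (Fin (d + 1)) => η 0 = b) _)
              fun _ _ _ => colEnAt_nonneg _ _ _ _)
          rw [Finset.mem_filter] at hσ hη
          exact hmz c σ hσ.1 η hη.1 (hσ.2.trans hη.2.symm)
      _ = ∑ c, ∑ σ ∈ X c, ∑ η ∈ Y c, colEnAt C (sx z) F (gl σ η) := by
          refine Finset.sum_congr rfl fun c _ => ?_
          exact Finset.sum_fiberwise (X c) (fun σ => σ 0) _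
      _ = _ := hsum _
  rw [hlhs]
  refine hds.trans ?_
  change 700000 * (∑ c, ((X c).card : ℝ) * (Y c).card) * _ ≤ _
  rw [hcard, Finset.sum_add_distrib]
  have hc0 : (0 : ℝ) ≤ 700000 * C.card := by positivity
  calc _ ≤ 700000 * (C.card : ℝ) * ((W + W) + W) :=
        mul_le_mul_of_nonneg_left (add_le_add (add_le_add hQx hQy) hE) hc0
    _ = _ := by ring

end ColourLevelTwo

/-! ### Efron–Stein inequality and fibred configurations -/

section Product

variable {r : ℕ} {B : Type*} {Z : Fin r → Finset B}

/-- Resampling coordinate `i` of a function on a product of finite sets. -/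
noncomputable def resample (Z : Fin r → Finset B) (i : Fin r) (f : (Fin r → B) → ℝ)
    (y : Fin r → B) : ℝ := avg (Z i) fun t => f (Function.update y i t)

lemma update_mem_pi {y : Fin r → B} (hy : y ∈ Fintype.piFinset Z) {i : Fin r} {t : B}
    (ht : t ∈ Z i) : Function.update y i t ∈ Fintype.piFinset Z := by
  rw [Fintype.mem_piFinset] at hy ⊢
  intro j
  by_cases h : j = i
  · subst h; simpa using ht
  · rw [Function.update_of_ne h]; exact hy j

lemma sum_sum_update (i : Fin r) (h : (Fin r → B) → ℝ) :
    ∑ y ∈ Fintype.piFinset Z, ∑ t ∈ Z i, h (Function.update y i t) =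
      (Z i).card * ∑ y ∈ Fintype.piFinset Z, h y := by
  calc _ = ∑ y ∈ Fintype.piFinset Z, ∑ t ∈ Z i, h y := by
        rw [← Finset.sum_product', ← Finset.sum_product']
        refine Finset.sum_nbij' (fun q => (Function.update q.1 i q.2, q.1 i))
          (fun q => (Function.update q.1 i q.2, q.1 i)) ?_ ?_ ?_ ?_ fun _ _ => rfl
        · intro q hq
          rw [Finset.mem_product] at hq ⊢
          exact ⟨update_mem_pi hq.1 hq.2, (Fintype.mem_piFinset.mp hq.1) i⟩
        · intro q hq
          rw [Finset.mem_product] at hq ⊢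
          exact ⟨update_mem_pi hq.1 hq.2, (Fintype.mem_piFinset.mp hq.1) i⟩
        · intro q _; simp
        · intro q _; simp
    _ = _ := by simp [Finset.mul_sum]

lemma sum_resample (hZ : ∀ i, (Z i).Nonempty) (i : Fin r) (h : (Fin r → B) → ℝ) :
    ∑ y ∈ Fintype.piFinset Z, resample Z i h y = ∑ y ∈ Fintype.piFinset Z, h y := by
  have hc : ((Z i).card : ℝ) ≠ 0 := by exact_mod_cast (hZ i).card_pos.ne'
  simp only [resample, avg]
  rw [← Finset.sum_div, sum_sum_update]
  field_simp

lemma resample_update (i : Fin r) (f : (Fin r → B) → ℝ) (y : Fin r → B) (t : B) :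
    resample Z i f (Function.update y i t) = resample Z i f y := by
  simp [resample]

lemma sum_resample_sq_le (hZ : ∀ i, (Z i).Nonempty) (i : Fin r) (f : (Fin r → B) → ℝ) :
    ∑ y ∈ Fintype.piFinset Z, resample Z i f y ^ 2 ≤ ∑ y ∈ Fintype.piFinset Z, f y ^ 2 := by
  rw [← sum_resample hZ i fun y => f y ^ 2]
  refine Finset.sum_le_sum fun y _ => ?_
  have hc : (0 : ℝ) < (Z i).card := by exact_mod_cast (hZ i).card_pos
  have := card_mul_avg_sq_le (Z i) fun t => f (Function.update y i t)
  rw [resample, resample]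
  conv_rhs => rw [avg]
  rw [le_div_iff₀ hc, mul_comm]
  exact this

/-- Resampling is an orthogonal projection. -/
lemma sum_sub_resample_sq (hZ : ∀ i, (Z i).Nonempty) (i : Fin r) (f g : (Fin r → B) → ℝ) :
    ∑ y ∈ Fintype.piFinset Z, (f y - resample Z i g y) ^ 2 =
      ∑ y ∈ Fintype.piFinset Z, (f y - resample Z i f y) ^ 2 +
        ∑ y ∈ Fintype.piFinset Z, resample Z i (fun y => f y - g y) y ^ 2 := by
  have hsub : ∀ y, resample Z i (fun y => f y - g y) y = resample Z i f y - resample Z i g y :=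
    fun y => (avg_sub _ _ _).symm
  have horth : ∑ y ∈ Fintype.piFinset Z,
      (f y - resample Z i f y) * (resample Z i f y - resample Z i g y) = 0 := by
    rw [← sum_resample hZ i]
    refine Finset.sum_eq_zero fun y _ => ?_
    rw [resample, avg]
    simp only [resample_update]
    rw [← Finset.sum_mul, Finset.sum_sub_distrib]
    have : ∑ t ∈ Z i, f (Function.update y i t) = (Z i).card * resample Z i f y :=
      (card_mul_avg _ _).symm
    rw [this]
    simp
  have e : ∀ y, (f y - resample Z i g y) ^ 2 = (f y - resample Z i f y) ^ 2 +
      resample Z i (fun y => f y - g y) y ^ 2 +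
      2 * ((f y - resample Z i f y) * (resample Z i f y - resample Z i g y)) := by
    intro y; rw [hsub]; ring
  simp only [e, Finset.sum_add_distrib, ← Finset.mul_sum, horth]
  ring

/-- Efron–Stein inequality on a product of finite sets. -/
theorem efron_stein (hZ : ∀ i, (Z i).Nonempty) (f : (Fin r → B) → ℝ) :
    ∑ y ∈ Fintype.piFinset Z, (f y - avg (Fintype.piFinset Z) f) ^ 2 ≤
      ∑ i, ∑ y ∈ Fintype.piFinset Z, (1 / ((Z i).card : ℝ)) *
        ∑ t ∈ Z i, (f y - f (Function.update y i t)) ^ 2 := by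
  have key : ∀ s : Finset (Fin r), ∃ g : (Fin r → B) → ℝ,
      (∀ j ∈ s, ∀ y t, g (Function.update y j t) = g y) ∧
      ∑ y ∈ Fintype.piFinset Z, (f y - g y) ^ 2 ≤
        ∑ i ∈ s, ∑ y ∈ Fintype.piFinset Z, (f y - resample Z i f y) ^ 2 := by
    intro s
    induction s using Finset.induction_on with
    | empty => exact ⟨f, by simp, by simp⟩
    | insert i s hi ih =>
      obtain ⟨g, hg, hle⟩ := ih
      refine ⟨resample Z i g, ?_, ?_⟩
      · intro j hj y t
        by_cases hji : j = i
        · subst hji; exact resample_update _ _ _ _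
        · have hjs : j ∈ s := (Finset.mem_insert.mp hj).resolve_left hji
          simp only [resample]
          congr 1
          funext u
          rw [Function.update_comm hji, hg j hjs]
      · rw [Finset.sum_insert hi, sum_sub_resample_sq hZ]
        refine add_le_add le_rfl ((sum_resample_sq_le hZ i _).trans hle)
  obtain ⟨g, hg, hle⟩ := key Finset.univ
  have hne : (Fintype.piFinset Z).Nonempty := Fintype.piFinset_nonempty.mpr hZ
  have hconst : ∀ y z, g y = g z := by
    intro y z
    have : ∀ s : Finset (Fin r), g (s.piecewise y z) = g z := by
      intro s
      induction s using Finset.induction_on with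
      | empty => simp
      | insert i s hi ih =>
        rw [Finset.piecewise_insert, hg i (Finset.mem_univ _), ih]
    simpa using this Finset.univ
  obtain ⟨y0, -⟩ := hne
  calc _ ≤ ∑ y ∈ Fintype.piFinset Z, (f y - g y0) ^ 2 := sum_sq_avg_le _ _ _
    _ = ∑ y ∈ Fintype.piFinset Z, (f y - g y) ^ 2 :=
        Finset.sum_congr rfl fun y _ => by rw [hconst y0 y]
    _ ≤ _ := hle
    _ ≤ _ := by
        refine Finset.sum_le_sum fun i _ => Finset.sum_le_sum fun y _ => ?_
        have hc : (0 : ℝ) < (Z i).card := by exact_mod_cast (hZ i).card_pos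
        have := card_mul_avg_sub_sq_le (Z i) (fun t => f (Function.update y i t)) (f y)
        rw [one_div, ← div_eq_inv_mul, le_div_iff₀ hc, mul_comm, sub_sq_comm]
        refine this.trans (le_of_eq (Finset.sum_congr rfl fun t _ => sub_sq_comm _ _))

end Product

section Lifting

variable {r : ℕ} {B κ : Type*}

/-- Configurations with one component in each `X i`, whose vector of colours `ρ i (y i)` lies in
`C`. -/
noncomputable def liftSet (X : Fin r → Finset B) (ρ : Fin r → B → κ)
    (C : Finset (Fin r → κ)) : Finset (Fin r → B) :=
  (Fintype.piFinset X).filter fun y => (fun i => ρ i (y i)) ∈ C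

/-- The components in `X i` that may replace `y i` without leaving `liftSet X ρ C`. -/
noncomputable def liftOpts (X : Fin r → Finset B) (ρ : Fin r → B → κ)
    (C : Finset (Fin r → κ)) (i : Fin r) (y : Fin r → B) : Finset B :=
  (X i).filter fun t => Function.update y i t ∈ liftSet X ρ C

/-- The energy of the heat-bath moves in component `i`. -/
noncomputable def liftEn (X : Fin r → Finset B) (ρ : Fin r → B → κ)
    (C : Finset (Fin r → κ)) (i : Fin r) (f : (Fin r → B) → ℝ) : ℝ :=
  ∑ y ∈ liftSet X ρ C, (1 / ((liftOpts X ρ C i y).card : ℝ)) *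
    ∑ t ∈ liftOpts X ρ C i y, (f y - f (Function.update y i t)) ^ 2

/-- Elements of `X i` with colour `b`. -/
noncomputable def colFib (X : Fin r → Finset B) (ρ : Fin r → B → κ) (i : Fin r) (b : κ) :
    Finset B := (X i).filter fun t => ρ i t = b

variable {X : Fin r → Finset B} {ρ : Fin r → B → κ} {C : Finset (Fin r → κ)}

lemma mem_liftSet {y : Fin r → B} :
    y ∈ liftSet X ρ C ↔ (∀ i, y i ∈ X i) ∧ (fun i => ρ i (y i)) ∈ C := by
  simp [liftSet, Fintype.mem_piFinset]

lemma mem_fib {y : Fin r → B} {c : Fin r → κ} :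
    y ∈ Fintype.piFinset (fun i => colFib X ρ i (c i)) ↔
      (∀ i, y i ∈ X i) ∧ (fun i => ρ i (y i)) = c := by
  simp only [Fintype.mem_piFinset, colFib, Finset.mem_filter, funext_iff, forall_and]

lemma sum_liftSet (φ : (Fin r → B) → ℝ) : ∑ y ∈ liftSet X ρ C, φ y =
    ∑ c ∈ C, ∑ y ∈ Fintype.piFinset (fun i => colFib X ρ i (c i)), φ y := by
  rw [← Finset.sum_fiberwise_of_maps_to (s := liftSet X ρ C) (t := C)
    (g := fun y i => ρ i (y i)) fun y hy => (mem_liftSet.mp hy).2]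
  refine Finset.sum_congr rfl fun c hc => Finset.sum_congr ?_ fun _ _ => rfl
  ext y
  rw [Finset.mem_filter, mem_liftSet, mem_fib]
  constructor
  · rintro ⟨⟨h1, _⟩, h2⟩; exact ⟨h1, h2⟩
  · rintro ⟨h1, h2⟩; exact ⟨⟨h1, by rw [h2]; exact hc⟩, h2⟩

lemma color_update (y : Fin r → B) (i : Fin r) (t : B) :
    (fun j => ρ j (Function.update y i t j)) =
      Function.update (fun j => ρ j (y j)) i (ρ i t) := by
  funext j
  by_cases h : j = i
  · subst h; simp
  · simp [Function.update_of_ne h]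

/-- The options at `i` split according to the colours allowed at `i`. -/
lemma sum_liftOpts [Fintype κ] {y : Fin r → B} {c : Fin r → κ}
    (hy : y ∈ Fintype.piFinset (fun i => colFib X ρ i (c i))) (i : Fin r) (φ : B → ℝ) :
    ∑ t ∈ liftOpts X ρ C i y, φ t =
      ∑ b ∈ Finset.univ.filter (fun b => Function.update c i b ∈ C),
        ∑ t ∈ colFib X ρ i b, φ t := by
  obtain ⟨h1, h2⟩ := mem_fib.mp hy
  have hmem : ∀ t, t ∈ liftOpts X ρ C i y ↔ t ∈ X i ∧ Function.update c i (ρ i t) ∈ C := by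
    intro t
    rw [liftOpts, Finset.mem_filter, mem_liftSet, color_update, h2]
    refine ⟨fun h => ⟨h.1, h.2.2⟩, fun h => ⟨h.1, fun j => ?_, h.2⟩⟩
    by_cases hj : j = i
    · subst hj; simpa using h.1
    · rw [Function.update_of_ne hj]; exact h1 j
  rw [← Finset.sum_fiberwise_of_maps_to (s := liftOpts X ρ C i y)
    (t := Finset.univ.filter (fun b => Function.update c i b ∈ C)) (g := ρ i)
    fun t ht => Finset.mem_filter.mpr ⟨Finset.mem_univ _, ((hmem t).mp ht).2⟩]
  refine Finset.sum_congr rfl fun b hb => Finset.sum_congr ?_ fun _ _ => rfl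
  ext t
  rw [Finset.mem_filter, hmem, colFib, Finset.mem_filter]
  constructor
  · rintro ⟨⟨h3, _⟩, h4⟩; exact ⟨h3, h4⟩
  · rintro ⟨h3, h4⟩; exact ⟨⟨h3, by rw [h4]; exact (Finset.mem_filter.mp hb).2⟩, h4⟩

end Lifting

/-! ### Lifting a Poincaré inequality through the fibres -/

section Lifting2

variable {r : ℕ} {B κ : Type*}
variable {X : Fin r → Finset B} {ρ : Fin r → B → κ} {C : Finset (Fin r → κ)}

/-- The configurations in `∏ X i` with colour vector `c`. -/
noncomputable def vecFib (X : Fin r → Finset B) (ρ : Fin r → B → κ) (c : Fin r → κ) :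
    Finset (Fin r → B) := Fintype.piFinset fun i => colFib X ρ i (c i)

lemma sum_update_fib (c : Fin r → κ) (i : Fin r) (b : κ) (f : (Fin r → B) → ℝ) :
    ∑ y ∈ vecFib X ρ c, ∑ t ∈ colFib X ρ i b, f (Function.update y i t) =
      (colFib X ρ i (c i)).card * ∑ z ∈ vecFib X ρ (Function.update c i b), f z := by
  have hmem : ∀ (c : Fin r → κ) (b : κ) (y : Fin r → B), y ∈ vecFib X ρ c → ∀ t ∈ colFib X ρ i b,
      Function.update y i t ∈ vecFib X ρ (Function.update c i b) := by
    intro c b y hy t ht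
    simp only [vecFib, Fintype.mem_piFinset] at hy ⊢
    intro j
    by_cases h : j = i
    · subst h; simpa using ht
    · rw [Function.update_of_ne h, Function.update_of_ne h]; exact hy j
  calc _ = ∑ z ∈ vecFib X ρ (Function.update c i b), ∑ t ∈ colFib X ρ i (c i), f z := by
        rw [← Finset.sum_product', ← Finset.sum_product']
        refine Finset.sum_nbij' (fun q => (Function.update q.1 i q.2, q.1 i))
          (fun q => (Function.update q.1 i q.2, q.1 i)) ?_ ?_ ?_ ?_ fun _ _ => rfl
        · intro q hq
          rw [Finset.mem_product] at hq ⊢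
          exact ⟨hmem _ _ _ hq.1 _ hq.2, (Fintype.mem_piFinset.mp hq.1) i⟩
        · intro q hq
          rw [Finset.mem_product] at hq ⊢
          refine ⟨?_, ?_⟩
          · have := hmem _ _ _ hq.1 _ hq.2
            simpa using this
          · have := (Fintype.mem_piFinset.mp hq.1) i
            simpa using this
        · intro q _; simp
        · intro q _; simp
    _ = _ := by simp [Finset.mul_sum]

/-- Averaging over the fibre of `update c i b` is averaging over the fibre of `c` followed by
resampling component `i` among the elements of colour `b`. -/
lemma avg_fib_update {c : Fin r → κ} {i : Fin r} {b : κ} (hci : (colFib X ρ i (c i)).Nonempty)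
    (f : (Fin r → B) → ℝ) :
    avg (vecFib X ρ (Function.update c i b)) f =
      avg (vecFib X ρ c) fun y => avg (colFib X ρ i b) fun t => f (Function.update y i t) := by
  have hc : ((colFib X ρ i (c i)).card : ℝ) ≠ 0 := by exact_mod_cast hci.card_pos.ne'
  have h1 := sum_update_fib (X := X) (ρ := ρ) c i b f
  have h2 := sum_update_fib (X := X) (ρ := ρ) c i b fun _ => 1
  simp only [Finset.sum_const, nsmul_eq_mul, mul_one] at h2
  simp only [avg]
  rw [← Finset.sum_div, h1, div_div, mul_comm ((colFib X ρ i b).card : ℝ), h2,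
    mul_div_mul_left _ _ hc]

/-- The difference of the means over two fibres that differ in the colour at `i` is bounded by the
energy of the moves of component `i` between them. -/
lemma fib_energy {c : Fin r → κ} {i : Fin r} {b : κ} (hci : (colFib X ρ i (c i)).Nonempty)
    (hb : (colFib X ρ i b).Nonempty) (f : (Fin r → B) → ℝ) :
    ((vecFib X ρ c).card : ℝ) *
      (avg (vecFib X ρ c) f - avg (vecFib X ρ (Function.update c i b)) f) ^ 2 ≤
    ∑ y ∈ vecFib X ρ c, (1 / ((colFib X ρ i b).card : ℝ)) *
      ∑ t ∈ colFib X ρ i b, (f y - f (Function.update y i t)) ^ 2 := by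
  have hc : (0 : ℝ) < (colFib X ρ i b).card := by exact_mod_cast hb.card_pos
  have h := card_mul_avg_avg_sq_le (vecFib X ρ c) (colFib X ρ i b)
    fun y t => f y - f (Function.update y i t)
  have e : (avg (vecFib X ρ c) fun a => avg (colFib X ρ i b) fun t =>
      f a - f (Function.update a i t)) =
      avg (vecFib X ρ c) f - avg (vecFib X ρ (Function.update c i b)) f := by
    rw [avg_fib_update hci, avg_sub]
    congr 1
    funext y
    rw [← avg_sub]
    congr 1
    rw [avg, Finset.sum_const, nsmul_eq_mul]
    field_simp
  rw [e] at h
  rw [← Finset.mul_sum, one_div, ← div_eq_inv_mul, le_div_iff₀ hc]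
  calc _ = _ := by ring
    _ ≤ _ := h

lemma liftEn_nonneg (i : Fin r) (f : (Fin r → B) → ℝ) : 0 ≤ liftEn X ρ C i f :=
  Finset.sum_nonneg fun _ _ => mul_nonneg (one_div_nonneg.mpr (Nat.cast_nonneg _))
    (Finset.sum_nonneg fun _ _ => sq_nonneg _)

set_option maxHeartbeats 1000000 in
/-- Lifting a Poincaré inequality from colour vectors to configurations: `K` is the constant for
colour vectors, `Λ` bounds the ratio of the sizes of two fibres, and `1 / Q` bounds from below the
share of any colour among the options at a component. -/
theorem lift_poincare [Fintype κ] {w : Fin r → ℝ} {K Q Λ : ℝ} (hK : 0 ≤ K) (hQ0 : 0 ≤ Q) (hΛ : 0 ≤ Λ)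
    (hw : ∀ i, 1 ≤ w i)
    (hC : ∀ F : (Fin r → κ) → ℝ, ∑ c ∈ C, ∑ c' ∈ C, (F c - F c') ^ 2 ≤
      K * C.card * ∑ i, w i * colEn C i F)
    (hn : ∀ c ∈ C, ∀ i, (colFib X ρ i (c i)).Nonempty)
    (hQ : ∀ c ∈ C, ∀ i b, Function.update c i b ∈ C →
      ∑ b' ∈ Finset.univ.filter (fun b' => Function.update c i b' ∈ C),
        ((colFib X ρ i b').card : ℝ) ≤ Q * (colFib X ρ i b).card)
    (hP : ∀ c ∈ C, ∀ c' ∈ C, ((vecFib X ρ c).card : ℝ) ≤ Λ * (vecFib X ρ c').card)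
    (f : (Fin r → B) → ℝ) :
    ∑ y ∈ liftSet X ρ C, ∑ z ∈ liftSet X ρ C, (f y - f z) ^ 2 ≤
      (6 + 3 * Λ ^ 2 * K) * Q * (liftSet X ρ C).card * ∑ i, w i * liftEn X ρ C i f := by
  set F : (Fin r → κ) → ℝ := fun c => avg (vecFib X ρ c) f with hF
  set al : (Fin r → κ) → Fin r → Finset κ :=
    fun c i => Finset.univ.filter fun b => Function.update c i b ∈ C with hal
  set loc : (Fin r → κ) → Fin r → κ → ℝ := fun c i b =>
    ∑ y ∈ vecFib X ρ c, (1 / ((colFib X ρ i b).card : ℝ)) *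
      ∑ t ∈ colFib X ρ i b, (f y - f (Function.update y i t)) ^ 2 with hloc
  have hloc0 : ∀ c i b, 0 ≤ loc c i b := fun c i b =>
    Finset.sum_nonneg fun _ _ => mul_nonneg (one_div_nonneg.mpr (Nat.cast_nonneg _))
      (Finset.sum_nonneg fun _ _ => sq_nonneg _)
  have hnb : ∀ c ∈ C, ∀ i, ∀ b ∈ al c i, (colFib X ρ i b).Nonempty := by
    intro c hc i b hb
    have := hn _ (Finset.mem_filter.mp hb).2 i
    simpa using this
  have hlE : ∀ i, 0 ≤ liftEn X ρ C i f := fun i => liftEn_nonneg i f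
  have hN : ((liftSet X ρ C).card : ℝ) = ∑ c ∈ C, ((vecFib X ρ c).card : ℝ) := by
    have := sum_liftSet (X := X) (ρ := ρ) (C := C) fun _ => 1
    simpa [vecFib] using this
  -- the heat-bath energies control the local energies
  have hstar : ∀ i, ∑ c ∈ C, ∑ b ∈ al c i, loc c i b ≤ Q * liftEn X ρ C i f := by
    intro i
    rw [liftEn, sum_liftSet, Finset.mul_sum]
    refine Finset.sum_le_sum fun c hc => ?_
    simp only [hloc]
    rw [Finset.sum_comm, Finset.mul_sum]
    refine Finset.sum_le_sum fun y hy => ?_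
    rw [sum_liftOpts hy, Finset.mul_sum, Finset.mul_sum]
    refine Finset.sum_le_sum fun b hb => ?_
    rw [← mul_assoc]
    refine mul_le_mul_of_nonneg_right ?_ (Finset.sum_nonneg fun _ _ => sq_nonneg _)
    have hcard : ((liftOpts X ρ C i y).card : ℝ) =
        ∑ b' ∈ al c i, ((colFib X ρ i b').card : ℝ) := by
      have := sum_liftOpts (C := C) hy i fun _ => 1
      simpa using this
    have hp : (0 : ℝ) < (colFib X ρ i b).card := by exact_mod_cast (hnb c hc i b hb).card_pos
    have hle := hQ c hc i b (Finset.mem_filter.mp hb).2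
    have hpo : (0 : ℝ) < (liftOpts X ρ C i y).card := by
      rw [hcard]
      exact hp.trans_le (Finset.single_le_sum
        (f := fun b' => ((colFib X ρ i b').card : ℝ)) (fun _ _ => by positivity) hb)
    rw [mul_one_div, div_le_div_iff₀ hp hpo, one_mul, hcard]
    exact hle
  have hS : ∑ i, Q * liftEn X ρ C i f ≤ Q * ∑ i, w i * liftEn X ρ C i f := by
    rw [Finset.mul_sum]
    refine Finset.sum_le_sum fun i _ => mul_le_mul_of_nonneg_left ?_ hQ0
    nlinarith [hlE i, hw i]
  have hself : ∀ c ∈ C, ∀ i, c i ∈ al c i := fun c hc i =>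
    Finset.mem_filter.mpr ⟨Finset.mem_univ _, by simpa using hc⟩
  -- fluctuations inside the fibres
  have hR : ∑ c ∈ C, ∑ y ∈ vecFib X ρ c, (f y - F c) ^ 2 ≤
      Q * ∑ i, w i * liftEn X ρ C i f := by
    calc _ ≤ ∑ c ∈ C, ∑ i, loc c i (c i) :=
          Finset.sum_le_sum fun c hc => efron_stein (fun i => hn c hc i) f
      _ ≤ ∑ c ∈ C, ∑ i, ∑ b ∈ al c i, loc c i b := by
          refine Finset.sum_le_sum fun c hc => Finset.sum_le_sum fun i _ => ?_
          exact Finset.single_le_sum (f := fun b => loc c i b) (fun b _ => hloc0 c i b)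
            (hself c hc i)
      _ = ∑ i, ∑ c ∈ C, ∑ b ∈ al c i, loc c i b := Finset.sum_comm
      _ ≤ _ := (Finset.sum_le_sum fun i _ => hstar i).trans hS
  rcases C.eq_empty_or_nonempty with rfl | hCne
  · simp [liftSet]
  obtain ⟨c0, hc0, hmin⟩ := Finset.exists_min_image C (fun c => ((vecFib X ρ c).card : ℝ)) hCne
  -- all fibres have between `m` and `Λ * m` elements
  set m : ℝ := ((vecFib X ρ c0).card : ℝ) with hm
  have hm0 : 0 ≤ m := by positivity
  have hmE : ∀ i, m * colEn C i F ≤ Q * liftEn X ρ C i f := by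
    intro i
    refine le_trans ?_ (hstar i)
    rw [colEn, Finset.mul_sum]
    refine Finset.sum_le_sum fun c hc => ?_
    rw [colEnAt, Finset.mul_sum]
    refine Finset.sum_le_sum fun b hb => ?_
    exact (mul_le_mul_of_nonneg_right (hmin c hc) (sq_nonneg _)).trans
      (fib_energy (hn c hc i) (hnb c hc i b hb) f)
  have hmC : m * C.card ≤ (liftSet X ρ C).card := by
    rw [hN, mul_comm, ← nsmul_eq_mul]
    exact Finset.card_nsmul_le_sum C _ _ fun c hc => hmin c hc
  have hcol : ∑ c ∈ C, ∑ c' ∈ C, ((vecFib X ρ c).card : ℝ) * (vecFib X ρ c').card *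
      (F c - F c') ^ 2 ≤
      Λ ^ 2 * K * (liftSet X ρ C).card * (Q * ∑ i, w i * liftEn X ρ C i f) := by
    calc _ ≤ ∑ c ∈ C, ∑ c' ∈ C, (Λ * m) * (Λ * m) * (F c - F c') ^ 2 := by
          refine Finset.sum_le_sum fun c hc => Finset.sum_le_sum fun c' hc' => ?_
          refine mul_le_mul_of_nonneg_right ?_ (sq_nonneg _)
          exact mul_le_mul (hP c hc c0 hc0) (hP c' hc' c0 hc0) (by positivity) (by positivity)
      _ = (Λ * m) * (Λ * m) * ∑ c ∈ C, ∑ c' ∈ C, (F c - F c') ^ 2 := by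
          simp only [Finset.mul_sum]
      _ ≤ (Λ * m) * (Λ * m) * (K * C.card * ∑ i, w i * colEn C i F) :=
          mul_le_mul_of_nonneg_left (hC F) (by positivity)
      _ = Λ ^ 2 * K * (m * C.card) * ∑ i, w i * (m * colEn C i F) := by
          simp only [mul_left_comm _ m, ← Finset.mul_sum]; ring
      _ ≤ _ := by
          refine mul_le_mul (mul_le_mul_of_nonneg_left hmC (by positivity)) ?_ ?_ (by positivity)
          · rw [Finset.mul_sum]
            refine Finset.sum_le_sum fun i _ => ?_
            have := mul_le_mul_of_nonneg_left (hmE i) (zero_le_one.trans (hw i))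
            linarith
          · exact Finset.sum_nonneg fun i _ => mul_nonneg (zero_le_one.trans (hw i))
              (mul_nonneg hm0 (colEn_nonneg _ _ _))
  have hsplit : ∑ y ∈ liftSet X ρ C, ∑ z ∈ liftSet X ρ C, (f y - f z) ^ 2 ≤
      6 * (liftSet X ρ C).card * (∑ c ∈ C, ∑ y ∈ vecFib X ρ c, (f y - F c) ^ 2) +
      3 * ∑ c ∈ C, ∑ c' ∈ C, ((vecFib X ρ c).card : ℝ) * (vecFib X ρ c').card *
        (F c - F c') ^ 2 := by
    set Φ : (Fin r → B) → ℝ := fun y => F fun i => ρ i (y i) with hΦ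
    have hΦc : ∀ c, ∀ y ∈ vecFib X ρ c, Φ y = F c := by
      intro c y hy
      simp only [hΦ, (mem_fib.mp hy).2]
    have e1 : ∑ c ∈ C, ∑ y ∈ vecFib X ρ c, (f y - F c) ^ 2 =
        ∑ y ∈ liftSet X ρ C, (f y - Φ y) ^ 2 := by
      rw [sum_liftSet]
      exact Finset.sum_congr rfl fun c _ => Finset.sum_congr rfl fun y hy => by rw [hΦc c y hy]
    have e2 : ∑ c ∈ C, ∑ c' ∈ C, ((vecFib X ρ c).card : ℝ) * (vecFib X ρ c').card *
        (F c - F c') ^ 2 =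
        ∑ y ∈ liftSet X ρ C, ∑ z ∈ liftSet X ρ C, (Φ y - Φ z) ^ 2 := by
      rw [sum_liftSet]
      refine Finset.sum_congr rfl fun c _ => ?_
      have : ∀ y ∈ vecFib X ρ c, ∑ z ∈ liftSet X ρ C, (Φ y - Φ z) ^ 2 =
          ∑ c' ∈ C, ((vecFib X ρ c').card : ℝ) * (F c - F c') ^ 2 := by
        intro y hy
        rw [sum_liftSet]
        refine Finset.sum_congr rfl fun c' _ => ?_
        rw [← nsmul_eq_mul, ← Finset.sum_const]
        exact Finset.sum_congr rfl fun z hz => by rw [hΦc c y hy, hΦc c' z hz]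
      change _ = ∑ y ∈ vecFib X ρ c, ∑ z ∈ liftSet X ρ C, (Φ y - Φ z) ^ 2
      rw [Finset.sum_congr rfl this, Finset.sum_const, nsmul_eq_mul, Finset.mul_sum]
      exact Finset.sum_congr rfl fun c' _ => mul_assoc _ _ _
    rw [e1, e2]
    calc _ ≤ ∑ y ∈ liftSet X ρ C, ∑ z ∈ liftSet X ρ C,
          (3 * (f y - Φ y) ^ 2 + 3 * (f z - Φ z) ^ 2 + 3 * (Φ y - Φ z) ^ 2) := by
          refine Finset.sum_le_sum fun y _ => Finset.sum_le_sum fun z _ => ?_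
          nlinarith [sq_nonneg ((f y - Φ y) + (f z - Φ z)), sq_nonneg ((f y - Φ y) - (Φ y - Φ z)),
            sq_nonneg ((f z - Φ z) + (Φ y - Φ z))]
      _ = _ := by
          simp only [Finset.sum_add_distrib, Finset.sum_const, nsmul_eq_mul, ← Finset.mul_sum]
          ring
  have h6 := mul_le_mul_of_nonneg_left hR
    (show (0 : ℝ) ≤ 6 * (liftSet X ρ C).card by positivity)
  nlinarith [hsplit, h6, hcol]

end Lifting2

/-! ### Hanging subtrees and boundaries -/

section Hang

variable {V : Type} [Fintype V] [DecidableEq V] {G : SimpleGraph V} [DecidableRel G.Adj]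

lemma EdgeInc.symm {e f : Sym2 V} (h : EdgeInc e f) : EdgeInc f e :=
  ⟨h.1.symm, h.2.imp fun _ hv => ⟨hv.2, hv.1⟩⟩

lemma mem_hangBlock_self {ET : Finset (Sym2 V)} {R : Finset V} {e0 : Sym2 V} (h : e0 ∈ ET) :
    e0 ∈ hangBlock ET R e0 :=
  Finset.mem_filter.mpr ⟨h, Relation.ReflTransGen.refl⟩

lemma hangBlock_subset (ET : Finset (Sym2 V)) (R : Finset V) (e0 : Sym2 V) :
    hangBlock ET R e0 ⊆ ET := Finset.filter_subset _ _

lemma mem_hangBlock_step {ET : Finset (Sym2 V)} {R : Finset V} {e0 a b : Sym2 V}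
    (ha : a ∈ hangBlock ET R e0) (hb : b ∈ ET) {u : V} (hua : u ∈ a) (hub : u ∈ b)
    (huR : u ∉ R) : b ∈ hangBlock ET R e0 := by
  obtain ⟨ha1, ha2⟩ := Finset.mem_filter.mp ha
  by_cases hab : a = b
  · subst hab; exact ha
  · exact Finset.mem_filter.mpr ⟨hb, ha2.tail ⟨ha1, hb, ⟨hab, u, hua, hub⟩, u, hua, hub, huR⟩⟩

/-- In a forest, an edge hanging from `e0 = s(ρ, w)`, other than `e0`, lies beyond `w`: it
contains none of the root vertices. -/
lemma hang_avoid (hG : G.IsAcyclic) {ET : Finset (Sym2 V)} (hET : ET ⊆ G.edgeFinset)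
    {R : Finset V} {ρ w : V} (he0 : s(ρ, w) ∈ G.edgeSet)
    (hR : ∀ v ∈ R, (G.deleteEdges {s(ρ, w)}).Reachable ρ v) (hρ : ρ ∈ R)
    {f : Sym2 V} (hf : f ∈ hangBlock ET R s(ρ, w)) (hne : f ≠ s(ρ, w)) : ∀ v ∈ f, v ∉ R := by
  have hbr : ¬ (G.deleteEdges {s(ρ, w)}).Reachable ρ w := by
    have := SimpleGraph.isAcyclic_iff_forall_isBridge.mp hG he0
    rw [SimpleGraph.isBridge_iff] at this
    exact this
  have key : ∀ f, Relation.ReflTransGen (fun a b => a ∈ ET ∧ b ∈ ET ∧ EdgeInc a b ∧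
      ∃ v : V, v ∈ a ∧ v ∈ b ∧ v ∉ R) s(ρ, w) f →
      f = s(ρ, w) ∨ ∀ v ∈ f, (G.deleteEdges {s(ρ, w)}).Reachable w v := by
    intro f h
    induction h with
    | refl => exact Or.inl rfl
    | @tail a b _ hab ih =>
      obtain ⟨_, hb, hinc, u, hua, hub, huR⟩ := hab
      by_cases hb0 : b = s(ρ, w)
      · exact Or.inl hb0
      right
      have hwu : (G.deleteEdges {s(ρ, w)}).Reachable w u := by
        rcases ih with rfl | ih
        · rcases Sym2.mem_iff.mp hua with rfl | rfl
          · exact absurd hρ huR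
          · exact SimpleGraph.Reachable.refl _
        · exact ih u hua
      obtain ⟨t, rfl⟩ := Sym2.mem_iff_exists.mp hub
      have hadj : (G.deleteEdges {s(ρ, w)}).Adj u t := by
        rw [SimpleGraph.deleteEdges_adj]
        exact ⟨by simpa using hET hb, by simpa using hb0⟩
      intro v hv
      rcases Sym2.mem_iff.mp hv with rfl | rfl
      · exact hwu
      · exact hwu.trans hadj.reachable
  intro v hv hvR
  rcases key f (Finset.mem_filter.mp hf).2 with h | h
  · exact hne h
  · exact hbr ((hR v hvR).trans (h v hv).symm)

/-- Two hanging blocks that meet have the same root edge. -/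
lemma hang_eq_of_mem {ET : Finset (Sym2 V)} {R : Finset V} {q q' f : Sym2 V}
    (hav : ∀ g ∈ hangBlock ET R q, g ≠ q → ∀ v ∈ g, v ∉ R)
    (hq' : q' ∈ ET) (hR : ∃ v ∈ q', v ∈ R)
    (h : f ∈ hangBlock ET R q) (h' : f ∈ hangBlock ET R q') : q' = q := by
  have hsymm : Relation.ReflTransGen (fun a b => a ∈ ET ∧ b ∈ ET ∧ EdgeInc a b ∧
      ∃ v : V, v ∈ a ∧ v ∈ b ∧ v ∉ R) f q' := by
    have := Relation.reflTransGen_swap.mpr (Finset.mem_filter.mp h').2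
    refine Relation.ReflTransGen.mono ?_ _ _ this
    rintro a b ⟨h1, h2, h3, v, h4, h5, h6⟩
    exact ⟨h2, h1, h3.symm, v, h5, h4, h6⟩
  have hmem : q' ∈ hangBlock ET R q :=
    Finset.mem_filter.mpr ⟨hq', (Finset.mem_filter.mp h).2.trans hsymm⟩
  by_contra hne
  obtain ⟨v, hv, hvR⟩ := hR
  exact hav q' hmem hne v hv hvR

/-- Every edge hangs from an edge at `v`. -/
lemma hang_cover {ET : Finset (Sym2 V)} (hc : EdgeConnectedSet ET) {v : V} {e0 : Sym2 V}
    (he0 : e0 ∈ ET) (hv : v ∈ e0) {f : Sym2 V} (hf : f ∈ ET) :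
    ∃ q ∈ ET, v ∈ q ∧ f ∈ hangBlock ET {v} q := by
  have h := hc e0 he0 f hf
  induction h with
  | refl => exact ⟨e0, he0, hv, mem_hangBlock_self he0⟩
  | @tail a b _ hab ih =>
    obtain ⟨ha, hb, hinc, u, hua, hub⟩ := hab
    obtain ⟨q, hq, hvq, haq⟩ := ih ha
    by_cases huv : u = v
    · subst huv; exact ⟨b, hb, hub, mem_hangBlock_self hb⟩
    · exact ⟨q, hq, hvq, mem_hangBlock_step haq hb hua hub (by simpa using huv)⟩

/-- Every edge other than `e` hangs from an edge incident to `e`. -/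
lemma hang_cover_edge {ET : Finset (Sym2 V)} (hc : EdgeConnectedSet ET) {e : Sym2 V}
    (he : e ∈ ET) {f : Sym2 V} (hf : f ∈ ET) :
    f = e ∨ ∃ q ∈ ET, q ≠ e ∧ EdgeInc e q ∧
      f ∈ hangBlock (ET.erase e) (Finset.univ.filter fun v => v ∈ e) q := by
  have h := hc e he f hf
  induction h with
  | refl => exact Or.inl rfl
  | @tail a b _ hab ih =>
    obtain ⟨ha, hb, hinc, u, hua, hub⟩ := hab
    by_cases hbe : b = e
    · exact Or.inl hbe
    right
    have hbE : b ∈ ET.erase e := Finset.mem_erase.mpr ⟨hbe, hb⟩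
    by_cases hue : u ∈ e
    · exact ⟨b, hb, hbe, ⟨Ne.symm hbe, u, hue, hub⟩, mem_hangBlock_self hbE⟩
    · rcases ih ha with rfl | ⟨q, hq, hqe, hinc', haq⟩
      · exact absurd hua hue
      · exact ⟨q, hq, hqe, hinc', mem_hangBlock_step haq hbE hua hub (by simpa using hue)⟩

end Hang

section Boundary

variable {V : Type} [Fintype V] [DecidableEq V] {G : SimpleGraph V} [DecidableRel G.Adj]

lemma mem_intBd_of {ET : Finset (Sym2 V)} {e g : Sym2 V} (he : e ∈ ET) (hg : g ∈ G.edgeSet)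
    (hgET : g ∉ ET) (h : EdgeInc e g) : e ∈ intBd G ET := by
  have hg' : g ∈ G.edgeFinset := SimpleGraph.mem_edgeFinset.mpr hg
  exact Finset.mem_filter.mpr ⟨he, g, Finset.mem_filter.mpr
    ⟨Finset.mem_sdiff.mpr ⟨hg', hgET⟩, e, he, h.symm⟩, h⟩

lemma exists_ext_of_mem_intBd {ET : Finset (Sym2 V)} {e : Sym2 V} (h : e ∈ intBd G ET) :
    e ∈ ET ∧ ∃ g ∈ G.edgeSet, g ∉ ET ∧ EdgeInc e g := by
  obtain ⟨he, g, hg, hinc⟩ := Finset.mem_filter.mp h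
  obtain ⟨hg1, _⟩ := Finset.mem_filter.mp hg
  obtain ⟨hg2, hg3⟩ := Finset.mem_sdiff.mp hg1
  exact ⟨he, g, SimpleGraph.mem_edgeFinset.mp hg2, hg3, hinc⟩

/-- A vertex internal to a splitting subtree has all its edges in the subtree. -/
lemma full_of_degT {ET : Finset (Sym2 V)} (hs : IsSplitting G ET) (h2 : 2 ≤ ET.card) {v : V}
    (hv : 2 ≤ degT ET v) {g : Sym2 V} (hg : g ∈ G.edgeSet) (hvg : v ∈ g) : g ∈ ET := by
  by_contra hgE
  obtain ⟨a, ha, b, hb, hab⟩ := Finset.one_lt_card.mp (show 1 < (ET.filter fun e => v ∈ e).card from hv)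
  rw [Finset.mem_filter] at ha hb
  have ha' := mem_intBd_of ha.1 hg hgE ⟨fun h => hgE (h ▸ ha.1), v, ha.2, hvg⟩
  have hb' := mem_intBd_of hb.1 hg hgE ⟨fun h => hgE (h ▸ hb.1), v, hb.2, hvg⟩
  rcases hs.2.2.2 with h | h
  · omega
  · exact h.2.2 a ha' b hb' hab ⟨hab, v, ha.2, hb.2⟩

lemma card_edges_at {ET : Finset (Sym2 V)} (hs : IsSplitting G ET) (h2 : 2 ≤ ET.card)
    {d : ℕ} (hdeg : ∀ v : V, 2 ≤ G.degree v → G.degree v = d) {v : V}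
    (hv : 2 ≤ degT ET v) : (ET.filter fun e => v ∈ e).card = d := by
  have : ET.filter (fun e => v ∈ e) = G.incidenceFinset v := by
    ext e
    rw [Finset.mem_filter, SimpleGraph.mem_incidenceFinset, SimpleGraph.incidenceSet]
    constructor
    · rintro ⟨h, h'⟩; exact ⟨by simpa using hs.1 h, h'⟩
    · rintro ⟨h, h'⟩; exact ⟨full_of_degT hs h2 hv h h', h'⟩
  rw [degT, this, SimpleGraph.card_incidenceFinset_eq_degree] at hv
  rw [this, SimpleGraph.card_incidenceFinset_eq_degree]
  exact hdeg v hv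

/-- An interior boundary edge of a splitting subtree meets the outside only at its leaf. -/
lemma intBd_leaf {ET : Finset (Sym2 V)} (hs : IsSplitting G ET) (h2 : 2 ≤ ET.card)
    {b : Sym2 V} (hb : b ∈ intBd G ET) :
    ∃ v ∈ b, degT ET v = 1 ∧ ∀ g ∈ G.edgeSet, g ∉ ET → EdgeInc b g → v ∈ g := by
  rcases hs.2.2.2 with h | h
  · omega
  obtain ⟨v, hvb, hv1⟩ := h.1 b hb
  have hbE : b ∈ ET := (Finset.mem_filter.mp hb).1
  refine ⟨v, hvb, hv1, fun g hg hgE hinc => ?_⟩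
  obtain ⟨_, u, hub, hug⟩ := hinc
  by_contra hvg
  have huv : u ≠ v := fun h => hvg (h ▸ hug)
  -- the edge `b` has a neighbour in the subtree, necessarily at `u`
  obtain ⟨c, hc, hcb⟩ := Finset.exists_mem_ne (by omega : 1 < ET.card) b
  obtain ⟨c', ⟨_, hc'E, hinc'⟩, _⟩ := (hs.2.2.1 b hbE c hc).cases_head.resolve_left
    (fun h => hcb h.symm)
  obtain ⟨hne', t, htb, htc⟩ := hinc'
  have hone : ∀ a ∈ ET, v ∈ a → a = b := by
    intro a ha hva
    obtain ⟨z, hz⟩ := Finset.card_eq_one.mp hv1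
    have h1 : a ∈ ET.filter fun e => v ∈ e := Finset.mem_filter.mpr ⟨ha, hva⟩
    have h2 : b ∈ ET.filter fun e => v ∈ e := Finset.mem_filter.mpr ⟨hbE, hvb⟩
    rw [hz, Finset.mem_singleton] at h1 h2
    rw [h1, h2]
  have htv : t ≠ v := fun h => hne' (hone c' hc'E (h ▸ htc)).symm
  have hb' : b = s(v, u) := ((Sym2.mem_and_mem_iff huv.symm).mp ⟨hvb, hub⟩)
  have htu : t = u := by
    rw [hb'] at htb
    exact (Sym2.mem_iff.mp htb).resolve_left htv
  have hdu : 2 ≤ degT ET u := Finset.one_lt_card.mpr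
    ⟨b, Finset.mem_filter.mpr ⟨hbE, hub⟩, c', Finset.mem_filter.mpr ⟨hc'E, htu ▸ htc⟩, hne'⟩
  exact hgE (full_of_degT hs h2 hdu hg hug)

/-- Colours at `b` not used by `μ` on the edges outside `ET` incident to `b`. -/
noncomputable def allowedCol (G : SimpleGraph V) (ET : Finset (Sym2 V)) {k : ℕ}
    (μ : Sym2 V → Fin k) (b : Sym2 V) : Finset (Fin k) :=
  Finset.univ.filter fun c => ∀ g ∈ G.edgeSet, g ∉ ET → EdgeInc b g → c ≠ μ g

lemma mem_allowedCol {ET : Finset (Sym2 V)} {k : ℕ} {μ : Sym2 V → Fin k} {b : Sym2 V}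
    {c : Fin k} : c ∈ allowedCol G ET μ b ↔
      ∀ g ∈ G.edgeSet, g ∉ ET → EdgeInc b g → c ≠ μ g := by
  simp [allowedCol]

/-- An interior boundary edge meets at most `d - 1` edges outside the tree, which leaves at least two
of the `d + 1` colours. -/
lemma two_le_card_allowedCol {ET : Finset (Sym2 V)} (hs : IsSplitting G ET) (h2 : 2 ≤ ET.card)
    {d : ℕ} (hd : 3 ≤ d) (hdeg : ∀ v : V, 2 ≤ G.degree v → G.degree v = d)
    (μ : Sym2 V → Fin (d + 1)) {b : Sym2 V} (hb : b ∈ intBd G ET) :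
    2 ≤ (allowedCol G ET μ b).card := by
  obtain ⟨v, hvb, -, hv⟩ := intBd_leaf hs h2 hb
  have hbE : b ∈ ET := (Finset.mem_filter.mp hb).1
  have hsub : (allowedCol G ET μ b)ᶜ ⊆ ((G.incidenceFinset v).erase b).image μ := by
    intro c hc
    rw [Finset.mem_compl, mem_allowedCol] at hc
    push Not at hc
    obtain ⟨g, hg, hgE, hinc, rfl⟩ := hc
    refine Finset.mem_image_of_mem _ (Finset.mem_erase.mpr ⟨hinc.1.symm, ?_⟩)
    rw [SimpleGraph.mem_incidenceFinset]
    exact ⟨hg, hv g hg hgE hinc⟩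
  have h3 := (Finset.card_le_card hsub).trans Finset.card_image_le
  have hmem : b ∈ G.incidenceFinset v := by
    rw [SimpleGraph.mem_incidenceFinset]; exact ⟨by simpa using hs.1 hbE, hvb⟩
  rw [Finset.card_erase_of_mem hmem, SimpleGraph.card_incidenceFinset_eq_degree,
    Finset.card_compl, Fintype.card_fin] at h3
  have h4 : G.degree v ≤ d := by
    by_cases h : 2 ≤ G.degree v
    · exact (hdeg v h).le
    · omega
  omega

lemma allowedCol_eq_univ {ET : Finset (Sym2 V)} {k : ℕ} (μ : Sym2 V → Fin k) {b : Sym2 V}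
    (hbE : b ∈ ET) (hb : b ∉ intBd G ET) : allowedCol G ET μ b = Finset.univ := by
  refine Finset.eq_univ_iff_forall.mpr fun c => mem_allowedCol.mpr fun g hg hgE hinc => ?_
  exact absurd (mem_intBd_of hbE hg hgE hinc) hb

end Boundary

/-! ### Structure of the two kinds of block partition -/

section BlockStructure

variable {V : Type} [Fintype V] [DecidableEq V] {G : SimpleGraph V} [DecidableRel G.Adj]

/-- The combinatorial structure of the block partition that the analysis uses: the blocks
partition `ET` and touch each other only at their root edges, every root edge lies in a star of
`d` root edges, each block continues its root edge at one endpoint only, and a block whose root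
edge lies in the interior boundary of `ET` is a single edge. -/
structure BlockData (G : SimpleGraph V) [DecidableRel G.Adj] (d : ℕ) (ET : Finset (Sym2 V)) {r : ℕ}
    (blocks : Fin r → Finset (Sym2 V)) (roots : Fin r → Sym2 V) : Prop where
  inj : Function.Injective roots
  sub : ∀ i, blocks i ⊆ ET
  mem : ∀ i, roots i ∈ blocks i
  cov : ∀ e ∈ ET, ∃ i, e ∈ blocks i
  disj : ∀ i j e, e ∈ blocks i → e ∈ blocks j → i = j
  inc : ∀ i j e f, e ∈ blocks i → f ∈ blocks j → i ≠ j → EdgeInc e f →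
    e = roots i ∧ f = roots j
  tip : ∀ i, blocks i = {roots i} ∨ ∃ w ∈ roots i, ∀ f ∈ blocks i, EdgeInc (roots i) f → w ∈ f
  special : ∀ i, roots i ∈ intBd G ET → blocks i = {roots i}
  clique : ∀ i, ∃ s : Fin d → Fin r, Function.Injective s ∧ (∃ j, s j = i) ∧
    ∀ j l, j ≠ l → EdgeInc (roots (s j)) (roots (s l))

/-- A hanging block continues its root edge `s(ρ, w)` only at the endpoint `w`. -/
lemma hang_tip {ET' : Finset (Sym2 V)} {R : Finset V} {ρ w : V} (hρ : ρ ∈ R)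
    (hav : ∀ g ∈ hangBlock ET' R s(ρ, w), g ≠ s(ρ, w) → ∀ v ∈ g, v ∉ R)
    {f : Sym2 V} (hf : f ∈ hangBlock ET' R s(ρ, w)) (hinc : EdgeInc s(ρ, w) f) : w ∈ f := by
  obtain ⟨hne, u, hu, huf⟩ := hinc
  rcases Sym2.mem_iff.mp hu with rfl | rfl
  · exact absurd hρ (hav f hf hne.symm _ huf)
  · exact huf

/-- If the root edge of a hanging block is an interior boundary edge, its far endpoint is a leaf of
the tree, so the block is a single edge. -/
lemma hang_special {ET ET' : Finset (Sym2 V)} (hs : IsSplitting G ET) (h2 : 2 ≤ ET.card)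
    (hsub : ET' ⊆ ET) {R : Finset V} {ρ w : V} (hq : s(ρ, w) ∈ ET') (hρ : ρ ∈ R)
    (hdeg : 2 ≤ degT ET ρ) (hb : s(ρ, w) ∈ intBd G ET) :
    hangBlock ET' R s(ρ, w) = {s(ρ, w)} := by
  refine Finset.eq_singleton_iff_unique_mem.mpr ⟨mem_hangBlock_self hq, fun f hf => ?_⟩
  obtain ⟨v, hv, hv1, -⟩ := intBd_leaf hs h2 hb
  have hvw : v = w := by
    rcases Sym2.mem_iff.mp hv with rfl | rfl
    · omega
    · rfl
  subst hvw
  by_contra hne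
  obtain ⟨a, ⟨_, ha, hinc, u, hu, hua, huR⟩, _⟩ :=
    (Finset.mem_filter.mp hf).2.cases_head.resolve_left (fun h => hne h.symm)
  have huv : u = v := by
    rcases Sym2.mem_iff.mp hu with rfl | rfl
    · exact absurd hρ huR
    · rfl
  subst huv
  have : 2 ≤ degT ET u := Finset.one_lt_card.mpr
    ⟨_, Finset.mem_filter.mpr ⟨hsub hq, hu⟩, a, Finset.mem_filter.mpr ⟨hsub ha, hua⟩, hinc.1⟩
  omega

/-- An enumeration of the root edges at an internal vertex. -/
lemma star_enum {ET : Finset (Sym2 V)} (hs : IsSplitting G ET) (h2 : 2 ≤ ET.card)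
    {d : ℕ} (hdeg : ∀ v : V, 2 ≤ G.degree v → G.degree v = d) {v : V} (hv : 2 ≤ degT ET v)
    {r : ℕ} {roots : Fin r → Sym2 V} (hinj : Function.Injective roots)
    (hmem : ∀ i, roots i ∈ ET) (hall : ∀ f ∈ ET, v ∈ f → ∃ i, roots i = f) :
    ∃ s : Fin d → Fin r, Function.Injective s ∧ ∀ i, (∃ j, s j = i) ↔ v ∈ roots i := by
  have hcard := card_edges_at hs h2 hdeg hv
  let φ := (Finset.equivFinOfCardEq hcard).symm
  have hφ : ∀ j, ∃ i, roots i = (φ j).1 := fun j =>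
    hall _ (Finset.mem_filter.mp (φ j).2).1 (Finset.mem_filter.mp (φ j).2).2
  choose s hs' using hφ
  refine ⟨s, fun a b hab => ?_, fun i => ⟨?_, fun hi => ?_⟩⟩
  · apply φ.injective
    apply Subtype.ext
    rw [← hs', ← hs', hab]
  · rintro ⟨j, rfl⟩
    rw [hs']; exact (Finset.mem_filter.mp (φ j).2).2
  · refine ⟨φ.symm ⟨roots i, Finset.mem_filter.mpr ⟨hmem i, hi⟩⟩, hinj ?_⟩
    rw [hs']; simp

lemma blockData_vertex (hG : G.IsAcyclic) {ET : Finset (Sym2 V)} (hs : IsSplitting G ET)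
    (h2 : 2 ≤ ET.card) {d : ℕ} (hdeg : ∀ v : V, 2 ≤ G.degree v → G.degree v = d)
    {r : ℕ} {blocks : Fin r → Finset (Sym2 V)} {roots : Fin r → Sym2 V}
    (h : IsVertexRooted ET blocks roots) : BlockData G d ET blocks roots := by
  obtain ⟨r0, hr0, hinj, hroots, hall, hbl⟩ := h
  have hform : ∀ i, ∃ w, roots i = s(r0, w) := fun i =>
    Sym2.mem_iff_exists.mp (hroots i).2
  have hedge : ∀ i, roots i ∈ G.edgeSet := fun i => by simpa using hs.1 (hroots i).1
  have hav : ∀ i, ∀ g ∈ hangBlock ET {r0} (roots i), g ≠ roots i → ∀ v ∈ g,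
      v ∉ ({r0} : Finset V) := by
    intro i g hg hne
    obtain ⟨w, hw⟩ := hform i
    have he := hedge i
    rw [hw] at hg hne he
    refine hang_avoid hG hs.1 he ?_ (by simp) hg hne
    intro v hv
    rw [Finset.mem_singleton.mp hv]
  have hdisj : ∀ i j e, e ∈ blocks i → e ∈ blocks j → i = j := by
    intro i j e hi hj
    rw [hbl] at hi hj
    exact (hinj (hang_eq_of_mem (hav i) (hroots j).1 ⟨r0, (hroots j).2, by simp⟩ hi hj)).symm
  have hsub : ∀ i, blocks i ⊆ ET := fun i => by rw [hbl]; exact hangBlock_subset _ _ _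
  refine ⟨hinj, hsub, ?_, ?_, hdisj, ?_, ?_, ?_, ?_⟩
  · intro i; rw [hbl]; exact mem_hangBlock_self (hroots i).1
  · intro e he
    obtain ⟨q, hq, hrq⟩ := Finset.card_pos.mp (show 0 < (ET.filter fun e => r0 ∈ e).card by
      have : (ET.filter fun e => r0 ∈ e).card = degT ET r0 := rfl
      omega) |>.imp fun q hq => Finset.mem_filter.mp hq
    obtain ⟨q', hq', hr', hmem⟩ := hang_cover hs.2.2.1 hq hrq he
    obtain ⟨i, hi⟩ := hall q' hq' hr'
    exact ⟨i, by rw [hbl, hi]; exact hmem⟩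
  · intro i j e f he hf hij hinc
    obtain ⟨hne, u, hue, huf⟩ := hinc
    have hfE := hsub j hf
    by_cases hu : u = r0
    · rw [hbl] at he hf
      subst hu
      constructor
      · by_contra hh; exact hav i e he hh u hue (by simp)
      · by_contra hh; exact hav j f hf hh u huf (by simp)
    · exfalso
      refine hij (hdisj i j f ?_ hf)
      rw [hbl] at he ⊢
      exact mem_hangBlock_step he hfE hue huf (by simpa using hu)
  · intro i
    right
    obtain ⟨w, hw⟩ := hform i
    have hh := hav i
    refine ⟨w, by rw [hw]; simp, fun f hf hinc => ?_⟩
    rw [hbl] at hf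
    rw [hw] at hf hh hinc
    exact hang_tip (by simp) hh hf hinc
  · intro i hi
    obtain ⟨w, hw⟩ := hform i
    have hm := (hroots i).1
    rw [hbl, hw]
    rw [hw] at hi hm
    exact hang_special hs h2 subset_rfl hm (by simp) hr0 hi
  · intro i
    obtain ⟨s, hsi, hsr⟩ := star_enum hs h2 hdeg hr0 hinj (fun i => (hroots i).1) hall
    refine ⟨s, hsi, (hsr i).mpr (hroots i).2, fun j j' hj => ⟨fun h => hj (hsi (hinj h)), r0,
      (hroots _).2, (hroots _).2⟩⟩

/-- Geometry of the root edges of an edge-rooted partition. -/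
lemma edge_rooted_facts (hG : G.IsAcyclic) {ET : Finset (Sym2 V)} (hs : IsSplitting G ET)
    {e q : Sym2 V} (he : e ∈ ET) (hq : q ∈ ET) (hne : q ≠ e) (hinc : EdgeInc e q) :
    ∃ ρ w, q = s(ρ, w) ∧ ρ ∈ e ∧ w ∉ e ∧
      ∀ g ∈ hangBlock (ET.erase e) (Finset.univ.filter fun v => v ∈ e) q, g ≠ q → ∀ v ∈ g,
        v ∉ Finset.univ.filter fun v => v ∈ e := by
  obtain ⟨_, ρ, hρe, hρq⟩ := hinc
  obtain ⟨w, rfl⟩ := Sym2.mem_iff_exists.mp hρq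
  have hqG : s(ρ, w) ∈ G.edgeSet := by simpa using hs.1 hq
  have heG : e ∈ G.edgeSet := by simpa using hs.1 he
  have hρw : ρ ≠ w := (SimpleGraph.mem_edgeSet G |>.mp hqG).ne
  refine ⟨ρ, w, rfl, hρe, fun hw => hne ((Sym2.mem_and_mem_iff hρw).mp ⟨hρe, hw⟩).symm, ?_⟩
  intro g hg hgne
  refine hang_avoid hG ((Finset.erase_subset _ _).trans hs.1) hqG ?_ (by simpa using hρe) hg hgne
  intro v hv
  have hve : v ∈ e := by simpa using hv
  by_cases hvρ : v = ρ
  · rw [hvρ]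
  · have hee : e = s(ρ, v) := (Sym2.mem_and_mem_iff (Ne.symm hvρ)).mp ⟨hρe, hve⟩
    apply SimpleGraph.Adj.reachable
    rw [SimpleGraph.deleteEdges_adj]
    rw [hee] at heG hne
    exact ⟨heG, by simpa using hne.symm⟩

lemma blockData_edge (hG : G.IsAcyclic) {ET : Finset (Sym2 V)} (hs : IsSplitting G ET)
    (h2 : 2 ≤ ET.card) {d : ℕ} (hdeg : ∀ v : V, 2 ≤ G.degree v → G.degree v = d)
    {r : ℕ} {blocks : Fin r → Finset (Sym2 V)} {roots : Fin r → Sym2 V}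
    (h : IsEdgeRooted G ET blocks roots) : BlockData G d ET blocks roots := by
  obtain ⟨e, he, hebd, hv2, hinj, ⟨i0, hi0, hb0⟩, hroots, hall⟩ := h
  set R : Finset V := Finset.univ.filter fun v => v ∈ e with hR
  have hRm : ∀ v, v ∈ R ↔ v ∈ e := fun v => by simp [hR]
  have hcase : ∀ i, i = i0 ∨ (roots i ∈ ET ∧ roots i ≠ e ∧ EdgeInc e (roots i) ∧
      blocks i = hangBlock (ET.erase e) R (roots i)) := by
    intro i
    rcases hroots i with h | h
    · exact Or.inl (hinj (h.trans hi0.symm))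
    · exact Or.inr h
  have hrE : ∀ i, roots i ∈ ET := by
    intro i
    rcases hcase i with rfl | h
    · rw [hi0]; exact he
    · exact h.1
  have hne0 : ∀ i, i ≠ i0 → roots i ∈ ET ∧ roots i ≠ e ∧ EdgeInc e (roots i) ∧
      blocks i = hangBlock (ET.erase e) R (roots i) := fun i hi => (hcase i).resolve_left hi
  have hfacts : ∀ i, i ≠ i0 → ∃ ρ w, roots i = s(ρ, w) ∧ ρ ∈ e ∧ w ∉ e ∧
      ∀ g ∈ hangBlock (ET.erase e) R (roots i), g ≠ roots i → ∀ v ∈ g, v ∉ R := by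
    intro i hi
    obtain ⟨h1, h3, h4, -⟩ := hne0 i hi
    exact edge_rooted_facts hG hs he h1 h3 h4
  have hsub : ∀ i, blocks i ⊆ ET := by
    intro i
    by_cases hi : i = i0
    · subst hi; rw [hb0]; simpa using he
    · rw [(hne0 i hi).2.2.2]; exact (hangBlock_subset _ _ _).trans (Finset.erase_subset _ _)
  have hne : ∀ i, i ≠ i0 → e ∉ blocks i := by
    intro i hi hmem
    rw [(hne0 i hi).2.2.2] at hmem
    exact (Finset.mem_erase.mp (hangBlock_subset _ _ _ hmem)).1 rfl
  have hdisj : ∀ i j f, f ∈ blocks i → f ∈ blocks j → i = j := by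
    intro i j f hi hj
    by_cases hii : i = i0
    · by_cases hjj : j = i0
      · rw [hii, hjj]
      · rw [hii, hb0, Finset.mem_singleton] at hi
        exact absurd (hi ▸ hj) (hne j hjj)
    · by_cases hjj : j = i0
      · rw [hjj, hb0, Finset.mem_singleton] at hj
        exact absurd (hj ▸ hi) (hne i hii)
      · obtain ⟨_, _, _, _, _, hav⟩ := hfacts i hii
        obtain ⟨ρ, w, hq, hρ, _, _⟩ := hfacts j hjj
        rw [(hne0 i hii).2.2.2] at hi
        rw [(hne0 j hjj).2.2.2] at hj
        exact (hinj (hang_eq_of_mem hav (Finset.mem_erase.mpr ⟨(hne0 j hjj).2.1, hrE j⟩)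
          ⟨ρ, by rw [hq]; simp, (hRm ρ).mpr hρ⟩ hi hj)).symm
  -- a block meets the endpoints of `e` only through its root edge
  have hroot : ∀ i f, f ∈ blocks i → (∃ u ∈ f, u ∈ e) → f = roots i := by
    intro i f hf hu
    by_cases hi : i = i0
    · rw [hi, hb0, Finset.mem_singleton] at hf
      rw [hf, hi, hi0]
    · obtain ⟨_, _, _, _, _, hav⟩ := hfacts i hi
      rw [(hne0 i hi).2.2.2] at hf
      by_contra hh
      obtain ⟨u, hu, hue⟩ := hu
      exact hav f hf hh u hu ((hRm u).mpr hue)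
  refine ⟨hinj, hsub, ?_, ?_, hdisj, ?_, ?_, ?_, ?_⟩
  · intro i
    by_cases hi : i = i0
    · rw [hi, hb0, hi0]; simp
    · rw [(hne0 i hi).2.2.2]
      exact mem_hangBlock_self (Finset.mem_erase.mpr ⟨(hne0 i hi).2.1, hrE i⟩)
  · intro f hf
    rcases hang_cover_edge hs.2.2.1 he hf with rfl | ⟨q, hq, hqe, hinc, hmem⟩
    · exact ⟨i0, by rw [hb0]; simp⟩
    · obtain ⟨i, rfl⟩ := hall q hq hqe hinc
      have hi : i ≠ i0 := fun h => hqe (h ▸ hi0)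
      exact ⟨i, by rw [(hne0 i hi).2.2.2]; exact hmem⟩
  · intro i j f g hf hg hij hinc
    obtain ⟨hfg, u, huf, hug⟩ := hinc
    by_cases hu : u ∈ e
    · exact ⟨hroot i f hf ⟨u, huf, hu⟩, hroot j g hg ⟨u, hug, hu⟩⟩
    · exfalso
      have hii : i ≠ i0 := by
        rintro rfl
        rw [hb0, Finset.mem_singleton] at hf
        exact hu (hf ▸ huf)
      have hjj : j ≠ i0 := by
        rintro rfl
        rw [hb0, Finset.mem_singleton] at hg
        exact hu (hg ▸ hug)
      refine hij (hdisj i j g ?_ hg)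
      have hgE : g ∈ ET.erase e :=
        Finset.mem_erase.mpr ⟨fun h => hu (h ▸ hug), hsub j hg⟩
      rw [(hne0 i hii).2.2.2] at hf ⊢
      exact mem_hangBlock_step hf hgE huf hug (fun h => hu ((hRm u).mp h))
  · intro i
    by_cases hi : i = i0
    · left; rw [hi, hb0, hi0]
    · right
      obtain ⟨ρ, w, hq, hρ, _, hav⟩ := hfacts i hi
      refine ⟨w, by rw [hq]; simp, fun f hf hinc => ?_⟩
      rw [(hne0 i hi).2.2.2] at hf
      rw [hq] at hf hav hinc
      exact hang_tip ((hRm ρ).mpr hρ) hav hf hinc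
  · intro i hib
    have hi : i ≠ i0 := fun h => hebd (by rw [← hi0, ← h]; exact hib)
    obtain ⟨ρ, w, hq, hρ, _, _⟩ := hfacts i hi
    have hm : roots i ∈ ET.erase e := Finset.mem_erase.mpr ⟨(hne0 i hi).2.1, hrE i⟩
    rw [(hne0 i hi).2.2.2, hq]
    rw [hq] at hib hm
    exact hang_special hs h2 (Finset.erase_subset _ _) hm ((hRm ρ).mpr hρ) (hv2 ρ hρ) hib
  · intro i
    have hv : ∃ v ∈ e, v ∈ roots i := by
      by_cases hi : i = i0
      · obtain ⟨v, hv⟩ : ∃ v, v ∈ e := ⟨_, Sym2.out_fst_mem e⟩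
        exact ⟨v, hv, by rw [hi, hi0]; exact hv⟩
      · exact (hne0 i hi).2.2.1.2
    obtain ⟨v, hve, hvi⟩ := hv
    have hall' : ∀ f ∈ ET, v ∈ f → ∃ i, roots i = f := by
      intro f hf hvf
      by_cases hfe : f = e
      · exact ⟨i0, by rw [hi0, hfe]⟩
      · exact hall f hf hfe ⟨Ne.symm hfe, v, hve, hvf⟩
    obtain ⟨s, hsi, hsr⟩ := star_enum hs h2 hdeg (hv2 v hve) hinj hrE hall'
    exact ⟨s, hsi, (hsr i).mpr hvi, fun j j' hj => ⟨fun h => hj (hsi (hinj h)), v,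
      (hsr _).mp ⟨j, rfl⟩, (hsr _).mp ⟨j', rfl⟩⟩⟩

end BlockStructure

/-! ### Poincaré inequalities for the root colours -/

section RootColours

variable {V : Type} [Fintype V] [DecidableEq V] {G : SimpleGraph V} [DecidableRel G.Adj]

/-- Colourings of the root edges compatible with each other and with `μ` outside `ET`. -/
noncomputable def rootCols (G : SimpleGraph V) (ET : Finset (Sym2 V)) {k : ℕ} (μ : Sym2 V → Fin k)
    {r : ℕ} (roots : Fin r → Sym2 V) : Finset (Fin r → Fin k) :=
  Finset.univ.filter fun c => (∀ i, c i ∈ allowedCol G ET μ (roots i)) ∧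
    ∀ i j, EdgeInc (roots i) (roots j) → c i ≠ c j

lemma mem_rootCols {ET : Finset (Sym2 V)} {k : ℕ} {μ : Sym2 V → Fin k} {r : ℕ}
    {roots : Fin r → Sym2 V} {c : Fin r → Fin k} : c ∈ rootCols G ET μ roots ↔
      (∀ i, c i ∈ allowedCol G ET μ (roots i)) ∧
        ∀ i j, EdgeInc (roots i) (roots j) → c i ≠ c j := by
  simp [rootCols]

/-- The weight of a block: `d + 1` for the exceptional single-edge blocks, `1` otherwise. -/
noncomputable def blockWt (d : ℕ) (S : Prop) : ℝ := if S then (d : ℝ) + 1 else 1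

lemma one_le_blockWt (d : ℕ) (S : Prop) : 1 ≤ blockWt d S := by
  rw [blockWt]; split_ifs
  · have : (0 : ℝ) ≤ d := by positivity
    linarith
  · exact le_rfl

lemma intBd_not_inc {ET : Finset (Sym2 V)} (hs : IsSplitting G ET) (h2 : 2 ≤ ET.card)
    {e f : Sym2 V} (he : e ∈ intBd G ET) (hf : f ∈ intBd G ET) : ¬ EdgeInc e f := by
  intro h
  rcases hs.2.2.2 with h' | h'
  · omega
  · exact h'.2.2 e he f hf h.1 h

/-- A star of root edges contains at most one interior boundary edge. -/
lemma exists_special_index {ET : Finset (Sym2 V)} (hs : IsSplitting G ET) (h2 : 2 ≤ ET.card)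
    {d : ℕ} (q : Fin d → Sym2 V) (hq : ∀ j j', j ≠ j' → EdgeInc (q j) (q j')) {z p0 : Fin d}
    (hp0 : p0 ≠ z) (hz : q z ∉ intBd G ET) :
    ∃ p, p ≠ z ∧ ∀ j, q j ∈ intBd G ET → j = p := by
  by_cases h : ∃ p, q p ∈ intBd G ET
  · obtain ⟨p, hp⟩ := h
    refine ⟨p, fun h => hz (h ▸ hp), fun j hj => ?_⟩
    by_contra hne
    exact intBd_not_inc hs h2 hj hp (hq j p hne)
  · push Not at h
    exact ⟨p0, hp0, fun j hj => absurd hj (h j)⟩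

/-- Poincaré inequality for the root colours of a vertex-rooted partition. Only the interior boundary
edges carry the weight `d + 1`. -/
lemma rootPoincare_vertex {ET : Finset (Sym2 V)} (hs : IsSplitting G ET)
    (h2 : 2 ≤ ET.card) {d : ℕ} (hd : 3 ≤ d) (hdeg : ∀ v : V, 2 ≤ G.degree v → G.degree v = d)
    (μ : Sym2 V → Fin (d + 1)) {r : ℕ} {blocks : Fin r → Finset (Sym2 V)} {roots : Fin r → Sym2 V}
    (h : IsVertexRooted ET blocks roots) (F : (Fin r → Fin (d + 1)) → ℝ) :
    ∑ c ∈ rootCols G ET μ roots, ∑ c' ∈ rootCols G ET μ roots, (F c - F c') ^ 2 ≤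
      2100000 * (rootCols G ET μ roots).card *
        ∑ i, blockWt d (roots i ∈ intBd G ET) * colEn (rootCols G ET μ roots) i F := by
  obtain ⟨r0, hr0, hinj, hroots, hall, hbl⟩ := h
  obtain ⟨s, hsi, hsr⟩ := star_enum hs h2 hdeg hr0 hinj (fun i => (hroots i).1) hall
  let S : Fin d ≃ Fin r := Equiv.ofBijective s ⟨hsi, fun i => (hsr i).mpr (hroots i).2⟩
  have hinc : ∀ i j, i ≠ j → EdgeInc (roots i) (roots j) := fun i j hij =>
    ⟨fun h => hij (hinj h), r0, (hroots i).2, (hroots j).2⟩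
  have hp : ∃ p : Fin r, ∀ j, roots j ∈ intBd G ET → j = p := by
    by_cases h : ∃ p, roots p ∈ intBd G ET
    · obtain ⟨p, hp⟩ := h
      refine ⟨p, fun j hj => ?_⟩
      by_contra hne
      exact intBd_not_inc hs h2 hj hp (hinc j p hne)
    · push Not at h
      exact ⟨s ⟨0, by omega⟩, fun j hj => absurd hj (h j)⟩
  obtain ⟨p, hp⟩ := hp
  have hd0 : (0 : ℝ) ≤ d := by positivity
  have hcase : (allowedCol G ET μ (roots p)).Nonempty ∧
      (d : ℝ) ≤ blockWt d (roots p ∈ intBd G ET) * (allowedCol G ET μ (roots p)).card := by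
    by_cases hb : roots p ∈ intBd G ET
    · have h3 := two_le_card_allowedCol hs h2 hd hdeg μ hb
      refine ⟨Finset.card_pos.mp (by omega), ?_⟩
      have h4 : (2 : ℝ) ≤ (allowedCol G ET μ (roots p)).card := by exact_mod_cast h3
      rw [blockWt, if_pos hb]
      nlinarith
    · rw [allowedCol_eq_univ μ (hroots p).1 hb, blockWt, if_neg hb]
      refine ⟨Finset.univ_nonempty, ?_⟩
      rw [Finset.card_univ, Fintype.card_fin]; push_cast; linarith
  refine (col_vertex S (fun i => allowedCol G ET μ (roots i)) p (fun i hi => ?_) hcase.1 hcase.2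
    (w := fun i => blockWt d (roots i ∈ intBd G ET)) (fun i => one_le_blockWt _ _) le_rfl
    (rootCols G ET μ roots) (fun c => ?_) F).trans ?_
  · exact allowedCol_eq_univ μ (hroots i).1 fun hb => hi (hp i hb)
  · rw [mem_rootCols, and_comm]
    refine and_congr_left fun _ => ⟨fun hc a b hab => ?_, fun hc i j hij hcij => ?_⟩
    · by_contra hne
      exact hc _ _ (hinc (S a) (S b) fun h => hne (S.injective h)) hab
    · apply hij.1
      have : S.symm i = S.symm j := hc (by simpa using hcij)
      rw [S.symm.injective this]
  · refine mul_le_mul_of_nonneg_right ?_ (Finset.sum_nonneg fun i _ =>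
      mul_nonneg (zero_le_one.trans (one_le_blockWt _ _)) (colEn_nonneg _ _ _))
    exact mul_le_mul_of_nonneg_right (by norm_num) (by positivity)

/-- Poincaré inequality for the root colours of an edge-rooted partition. The central edge `i0` and
the interior boundary edges carry the weight `d + 1`. -/
lemma rootPoincare_edge (hG : G.IsAcyclic) {ET : Finset (Sym2 V)} (hs : IsSplitting G ET)
    (h2 : 2 ≤ ET.card) {d : ℕ} (hd : 3 ≤ d) (hdeg : ∀ v : V, 2 ≤ G.degree v → G.degree v = d)
    (μ : Sym2 V → Fin (d + 1)) {r : ℕ} {blocks : Fin r → Finset (Sym2 V)} {roots : Fin r → Sym2 V}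
    (h : IsEdgeRooted G ET blocks roots) :
    ∃ i0 : Fin r, blocks i0 = {roots i0} ∧ ∀ F : (Fin r → Fin (d + 1)) → ℝ,
    ∑ c ∈ rootCols G ET μ roots, ∑ c' ∈ rootCols G ET μ roots, (F c - F c') ^ 2 ≤
      2100000 * (rootCols G ET μ roots).card *
        ∑ i, blockWt d (roots i ∈ intBd G ET ∨ i = i0) * colEn (rootCols G ET μ roots) i F := by
  have hBD := blockData_edge hG hs h2 hdeg h
  obtain ⟨e, he, hebd, hv2, hinj, ⟨i0, hi0, hb0⟩, hroots, hall⟩ := h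
  refine ⟨i0, by rw [hb0, hi0], fun F => ?_⟩
  have hrE : ∀ i, roots i ∈ ET := fun i => hBD.sub i (hBD.mem i)
  have hall' : ∀ v ∈ e, ∀ f ∈ ET, v ∈ f → ∃ i, roots i = f := by
    intro v hve f hf hvf
    by_cases hfe : f = e
    · exact ⟨i0, by rw [hi0, hfe]⟩
    · exact hall f hf hfe ⟨Ne.symm hfe, v, hve, hvf⟩
  obtain ⟨x, y, rfl⟩ : ∃ x y, e = s(x, y) := by
    induction e using Sym2.ind with | _ x y => exact ⟨x, y, rfl⟩
  have hxe : x ∈ s(x, y) := by simp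
  have hye : y ∈ s(x, y) := by simp
  have hxy : x ≠ y := by
    have : s(x, y) ∈ G.edgeSet := by simpa using hs.1 he
    exact ((SimpleGraph.mem_edgeSet G).mp this).ne
  obtain ⟨sx, hsx, hsxr⟩ := star_enum hs h2 hdeg (hv2 x hxe) hinj hrE (hall' x hxe)
  obtain ⟨sy', hsy', hsyr'⟩ := star_enum hs h2 hdeg (hv2 y hye) hinj hrE (hall' y hye)
  obtain ⟨z, hz⟩ := (hsxr i0).mpr (by rw [hi0]; exact hxe)
  obtain ⟨z', hz'⟩ := (hsyr' i0).mpr (by rw [hi0]; exact hye)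
  -- align the two enumerations at the root edge
  obtain ⟨sy, hsy, hsyr, hzy⟩ : ∃ sy : Fin d → Fin r, Function.Injective sy ∧
      (∀ i, (∃ j, sy j = i) ↔ y ∈ roots i) ∧ sy z = i0 := by
    refine ⟨sy' ∘ Equiv.swap z z', hsy'.comp (Equiv.injective _), fun i => ?_, by simp [hz']⟩
    rw [← hsyr' i]
    constructor
    · rintro ⟨j, hj⟩; exact ⟨_, hj⟩
    · rintro ⟨j, hj⟩; exact ⟨Equiv.swap z z' j, by simp [hj]⟩
  have hincx : ∀ j j', j ≠ j' → EdgeInc (roots (sx j)) (roots (sx j')) := fun j j' hj =>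
    ⟨fun h => hj (hsx (hinj h)), x, (hsxr _).mp ⟨j, rfl⟩, (hsxr _).mp ⟨j', rfl⟩⟩
  have hincy : ∀ j j', j ≠ j' → EdgeInc (roots (sy j)) (roots (sy j')) := fun j j' hj =>
    ⟨fun h => hj (hsy (hinj h)), y, (hsyr _).mp ⟨j, rfl⟩, (hsyr _).mp ⟨j', rfl⟩⟩
  have hcov : ∀ i, (∃ j, sx j = i) ∨ ∃ j, sy j = i := by
    intro i
    rw [hsxr, hsyr]
    rcases hroots i with h | h
    · left; rw [h]; exact hxe
    · obtain ⟨_, v, hv, hvi⟩ := h.2.2.1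
      rcases Sym2.mem_iff.mp hv with rfl | rfl
      · exact Or.inl hvi
      · exact Or.inr hvi
  obtain ⟨p0, hp0⟩ : ∃ p0 : Fin d, p0 ≠ z :=
    have : Nontrivial (Fin d) := Fin.nontrivial_iff_two_le.mpr (by omega)
    exists_ne z
  have hzb : roots i0 ∉ intBd G ET := by rw [hi0]; exact hebd
  obtain ⟨px, hpx, hpxs⟩ := exists_special_index hs h2 (fun j => roots (sx j)) hincx hp0
    (by rw [hz]; exact hzb)
  obtain ⟨py, hpy, hpys⟩ := exists_special_index hs h2 (fun j => roots (sy j)) hincy hp0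
    (by rw [hzy]; exact hzb)
  have hd3 : (3 : ℝ) ≤ d := by exact_mod_cast hd
  have hcase : ∀ p, 2 ≤ (allowedCol G ET μ (roots p)).card ∧
      (d : ℝ) - 1 ≤ blockWt d (roots p ∈ intBd G ET ∨ p = i0) *
        (((allowedCol G ET μ (roots p)).card : ℝ) - 1) := by
    intro p
    have hw := one_le_blockWt d (roots p ∈ intBd G ET ∨ p = i0)
    by_cases hb : roots p ∈ intBd G ET
    · have h3 := two_le_card_allowedCol hs h2 hd hdeg μ hb
      refine ⟨h3, ?_⟩
      have h4 : (2 : ℝ) ≤ (allowedCol G ET μ (roots p)).card := by exact_mod_cast h3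
      rw [blockWt, if_pos (Or.inl hb)]
      nlinarith
    · rw [allowedCol_eq_univ μ (hrE p) hb, Finset.card_univ, Fintype.card_fin]
      refine ⟨by omega, ?_⟩
      push_cast
      nlinarith
  refine col_edge hd sx sy hsx hsy z (by rw [hz, hzy]) ?_ hcov
    (fun i => allowedCol G ET μ (roots i)) px py hpx hpy ?_ (hcase _).1 (hcase _).1
    (zero_le_one.trans (one_le_blockWt _ _)) (zero_le_one.trans (one_le_blockWt _ _))
    (hcase _).2 (hcase _).2 (w := fun i => blockWt d (roots i ∈ intBd G ET ∨ i = i0))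
    (fun i => one_le_blockWt _ _) le_rfl le_rfl ?_ _ (fun c => ?_) F
  · intro j j' hjj
    have h1 : x ∈ roots (sx j) := (hsxr _).mp ⟨j, rfl⟩
    have h3 : y ∈ roots (sx j) := by rw [hjj]; exact (hsyr _).mp ⟨j', rfl⟩
    have h4 : sx j = i0 := hinj (by rw [hi0]; exact (Sym2.mem_and_mem_iff hxy).mp ⟨h1, h3⟩)
    exact ⟨hsx (by rw [h4, hz]), hsy (by rw [← hjj, h4, hzy])⟩
  · intro i hix hiy
    refine allowedCol_eq_univ μ (hrE i) fun hb => ?_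
    rcases hcov i with ⟨j, rfl⟩ | ⟨j, rfl⟩
    · exact hix (by rw [hpxs j hb])
    · exact hiy (by rw [hpys j hb])
  · rw [blockWt, if_pos (Or.inr hz)]
  · rw [mem_rootCols]
    constructor
    · rintro ⟨h1, h3⟩
      refine ⟨fun a b hab => ?_, fun a b hab => ?_, h1⟩
      · by_contra hne; exact h3 _ _ (hincx a b hne) hab
      · by_contra hne; exact h3 _ _ (hincy a b hne) hab
    · rintro ⟨hcx, hcy, h1⟩
      refine ⟨h1, fun i j hij hcij => ?_⟩
      obtain ⟨hne, u, hui, huj⟩ := hij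
      have hu : u ∈ s(x, y) := by
        by_contra hu
        -- two root edges meeting outside the root edge would lie in the same block
        have hin : ∀ i, u ∈ roots i → roots i ≠ s(x, y) ∧ roots i ∈ ET ∧
            blocks i = hangBlock (ET.erase s(x, y))
              (Finset.univ.filter fun v => v ∈ s(x, y)) (roots i) := by
          intro i hui
          rcases hroots i with h | h
          · exact absurd (h ▸ hui) hu
          · exact ⟨h.2.1, h.1, h.2.2.2⟩
        have hi := hin i hui
        have hj := hin j huj
        have : roots j ∈ blocks i := by
          rw [hi.2.2]
          exact mem_hangBlock_step
            (mem_hangBlock_self (Finset.mem_erase.mpr ⟨hi.1, hi.2.1⟩))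
            (Finset.mem_erase.mpr ⟨hj.1, hj.2.1⟩) hui huj (by simpa using hu)
        exact hne (by rw [hBD.disj i j _ this (hBD.mem j)])
      rcases Sym2.mem_iff.mp hu with rfl | rfl
      · obtain ⟨a, rfl⟩ := (hsxr i).mpr hui
        obtain ⟨b, rfl⟩ := (hsxr j).mpr huj
        exact hne (by rw [hcx hcij])
      · obtain ⟨a, rfl⟩ := (hsyr i).mpr hui
        obtain ⟨b, rfl⟩ := (hsyr j).mpr huj
        exact hne (by rw [hcy hcij])

end RootColours

/-! ### Comparing counts by colour swaps -/

section Counting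

variable {V : Type} [Fintype V] [DecidableEq V] {G : SimpleGraph V} [DecidableRel G.Adj] {k : ℕ}

/-- Colourings of the block `S`, extended by `μ`, that are proper inside `S` and towards the edges
outside `ET`. -/
noncomputable def blockCols (G : SimpleGraph V) (ET : Finset (Sym2 V)) (μ : Sym2 V → Fin k)
    (S : Finset (Sym2 V)) : Finset (Sym2 V → Fin k) :=
  Finset.univ.filter fun x => (∀ e, e ∉ S → x e = μ e) ∧
    ∀ e ∈ S, ∀ f ∈ G.edgeSet, (f ∈ S ∨ f ∉ ET) → EdgeInc e f → x e ≠ x f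

lemma mem_blockCols {ET S : Finset (Sym2 V)} {μ x : Sym2 V → Fin k} :
    x ∈ blockCols G ET μ S ↔ (∀ e, e ∉ S → x e = μ e) ∧
      ∀ e ∈ S, ∀ f ∈ G.edgeSet, (f ∈ S ∨ f ∉ ET) → EdgeInc e f → x e ≠ x f := by
  simp [blockCols]

/-- Colourings of `S`, extended by `μ`, that are proper inside `S` and take prescribed colours at
two edges. -/
noncomputable def twoPt (μ : Sym2 V → Fin k) (S : Finset (Sym2 V)) (q b : Sym2 V) (c β : Fin k) :
    Finset (Sym2 V → Fin k) :=
  Finset.univ.filter fun x => ((∀ e, e ∉ S → x e = μ e) ∧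
    ∀ e ∈ S, ∀ f ∈ S, EdgeInc e f → x e ≠ x f) ∧ x q = c ∧ x b = β

lemma mem_twoPt {S : Finset (Sym2 V)} {μ x : Sym2 V → Fin k} {q b : Sym2 V} {c β : Fin k} :
    x ∈ twoPt μ S q b c β ↔ ((∀ e, e ∉ S → x e = μ e) ∧
      ∀ e ∈ S, ∀ f ∈ S, EdgeInc e f → x e ≠ x f) ∧ x q = c ∧ x b = β := by
  simp [twoPt]

/-- Permuting the colours on the edges of `U`. -/
noncomputable def permOn (U : Finset (Sym2 V)) (π : Equiv.Perm (Fin k)) (x : Sym2 V → Fin k) :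
    Sym2 V → Fin k := fun e => if e ∈ U then π (x e) else x e

lemma permOn_mem {U : Finset (Sym2 V)} (π : Equiv.Perm (Fin k)) (x : Sym2 V → Fin k) {e : Sym2 V}
    (h : e ∈ U) : permOn U π x e = π (x e) := if_pos h

lemma permOn_not_mem {U : Finset (Sym2 V)} (π : Equiv.Perm (Fin k)) (x : Sym2 V → Fin k)
    {e : Sym2 V} (h : e ∉ U) : permOn U π x e = x e := if_neg h

lemma permOn_injective (U : Finset (Sym2 V)) (π : Equiv.Perm (Fin k)) :
    Function.Injective (permOn U π) := by
  intro x y h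
  funext e
  have := congrFun h e
  by_cases he : e ∈ U
  · rw [permOn_mem _ _ he, permOn_mem _ _ he] at this
    exact π.injective this
  · rwa [permOn_not_mem _ _ he, permOn_not_mem _ _ he] at this

/-- Permuting the colours on all of `S` shows that the counts `twoPt` depend only on whether the two
prescribed colours are equal. -/
lemma card_twoPt_le {S : Finset (Sym2 V)} {μ : Sym2 V → Fin k} {q b : Sym2 V} (hq : q ∈ S)
    (hb : b ∈ S) (π : Equiv.Perm (Fin k)) (c β : Fin k) :
    (twoPt μ S q b c β).card ≤ (twoPt μ S q b (π c) (π β)).card := by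
  refine Finset.card_le_card_of_injOn (permOn S π) ?_ (permOn_injective S π).injOn
  intro x hx
  obtain ⟨⟨h1, h2⟩, h3, h4⟩ := mem_twoPt.mp hx
  refine mem_twoPt.mpr ⟨⟨fun e he => by rw [permOn_not_mem _ _ he, h1 e he], ?_⟩, ?_, ?_⟩
  · intro e he f hf hinc
    rw [permOn_mem _ _ he, permOn_mem _ _ hf]
    exact fun h => h2 e he f hf hinc (π.injective h)
  · rw [permOn_mem _ _ hq, h3]
  · rw [permOn_mem _ _ hb, h4]

lemma card_twoPt_diag {S : Finset (Sym2 V)} {μ : Sym2 V → Fin k} {q b : Sym2 V} (hq : q ∈ S)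
    (hb : b ∈ S) (c c' : Fin k) :
    (twoPt μ S q b c c).card = (twoPt μ S q b c' c').card := by
  refine le_antisymm ?_ ?_
  · simpa using card_twoPt_le (μ := μ) hq hb (Equiv.swap c c') c c
  · simpa using card_twoPt_le (μ := μ) hq hb (Equiv.swap c c') c' c'

lemma card_twoPt_off {S : Finset (Sym2 V)} {μ : Sym2 V → Fin k} {q b : Sym2 V} (hq : q ∈ S)
    (hb : b ∈ S) {c β c' β' : Fin k} (h : c ≠ β) (h' : c' ≠ β') :
    (twoPt μ S q b c β).card = (twoPt μ S q b c' β').card := by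
  have key : ∀ {c β c' β' : Fin k}, c ≠ β → c' ≠ β' →
      (twoPt μ S q b c β).card ≤ (twoPt μ S q b c' β').card := by
    intro c β c' β' h h'
    have hne : Equiv.swap c c' β ≠ c' := by
      intro hh
      have : Equiv.swap c c' β = Equiv.swap c c' c := by rw [hh, Equiv.swap_apply_left]
      exact h (Equiv.injective _ this).symm
    have := card_twoPt_le (μ := μ) hq hb
      ((Equiv.swap c c').trans (Equiv.swap (Equiv.swap c c' β) β')) c β
    simp only [Equiv.trans_apply, Equiv.swap_apply_left] at this
    rwa [Equiv.swap_apply_of_ne_of_ne hne.symm h'] at this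
  refine le_antisymm (key h h') ?_
  apply key <;> assumption

/-- Comparison of equal and different colours at two edges `q`, `b` of `S` separated by an edge
`q1` incident to `q`: beyond `q1`, the colour `c` may be exchanged with any other colour not used
at `q1`. -/
lemma swap_count {S U : Finset (Sym2 V)} {μ : Sym2 V → Fin k} {q b q1 : Sym2 V} (hUS : U ⊆ S)
    (hq : q ∈ S) (hqU : q ∉ U) (hbU : b ∈ U) (hq1 : q1 ∈ S) (hq1U : q1 ∉ U)
    (hinc : EdgeInc q q1)
    (hcross : ∀ e ∈ U, ∀ f ∈ S, f ∉ U → EdgeInc e f → f = q1) (c : Fin k) :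
    (k - 2) * (twoPt μ S q b c c).card ≤
      ∑ γ ∈ Finset.univ.erase c, (twoPt μ S q b c γ).card := by
  set P := (twoPt μ S q b c c).sigma fun x => Finset.univ \ {c, x q1} with hP
  set W := (Finset.univ.erase c).biUnion fun γ => twoPt μ S q b c γ with hW
  have h1 : (k - 2) * (twoPt μ S q b c c).card ≤ P.card := by
    rw [hP, Finset.card_sigma, mul_comm, ← smul_eq_mul, ← Finset.sum_const]
    refine Finset.sum_le_sum fun x _ => ?_
    have h3 := Finset.le_card_sdiff ({c, x q1} : Finset (Fin k)) Finset.univ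
    have h4 : ({c, x q1} : Finset (Fin k)).card ≤ 2 := Finset.card_le_two
    rw [Finset.card_univ, Fintype.card_fin] at h3
    omega
  have h2 : P.card ≤ W.card := by
    refine Finset.card_le_card_of_injOn (fun z => permOn U (Equiv.swap c z.2) z.1) ?_ ?_
    · rintro ⟨x, γ⟩ hz
      obtain ⟨hx, hγ⟩ := Finset.mem_sigma.mp (Finset.mem_coe.mp hz)
      obtain ⟨⟨g1, g2⟩, g3, g4⟩ := mem_twoPt.mp hx
      simp only [Finset.mem_sdiff, Finset.mem_univ, true_and, Finset.mem_insert,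
        Finset.mem_singleton, not_or] at hγ
      dsimp only at g1 g2 g3 g4 hγ
      show permOn U (Equiv.swap c γ) x ∈ (W : Set (Sym2 V → Fin k))
      have hxq1 : x q1 ≠ c := fun h => g2 q hq q1 hq1 hinc (by rw [g3, h])
      have hfix : Equiv.swap c γ (x q1) = x q1 :=
        Equiv.swap_apply_of_ne_of_ne hxq1 (Ne.symm hγ.2)
      refine Finset.mem_coe.mpr (Finset.mem_biUnion.mpr
        ⟨γ, Finset.mem_erase.mpr ⟨hγ.1, Finset.mem_univ _⟩, mem_twoPt.mpr ⟨⟨?_, ?_⟩, ?_, ?_⟩⟩)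
      · intro e he
        rw [permOn_not_mem _ _ fun h => he (hUS h), g1 e he]
      · have hmix : ∀ e ∈ U, ∀ f ∈ S, f ∉ U → EdgeInc e f →
            permOn U (Equiv.swap c γ) x e ≠ permOn U (Equiv.swap c γ) x f := by
          intro e he f hf hfU hef
          have := hcross e he f hf hfU hef
          subst this
          rw [permOn_mem _ _ he, permOn_not_mem _ _ hfU]
          intro h
          rw [← hfix] at h
          exact g2 e (hUS he) f hf hef (Equiv.injective _ h)
        intro e he f hf hef
        by_cases heU : e ∈ U
        · by_cases hfU : f ∈ U
          · rw [permOn_mem _ _ heU, permOn_mem _ _ hfU]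
            exact fun h => g2 e he f hf hef (Equiv.injective _ h)
          · exact hmix e heU f hf hfU hef
        · by_cases hfU : f ∈ U
          · exact (hmix f hfU e he heU hef.symm).symm
          · rw [permOn_not_mem _ _ heU, permOn_not_mem _ _ hfU]
            exact g2 e he f hf hef
      · rw [permOn_not_mem _ _ hqU, g3]
      · rw [permOn_mem _ _ hbU, g4, Equiv.swap_apply_left]
    · rintro ⟨x, γ⟩ hz ⟨x', γ'⟩ hz' heq
      obtain ⟨hx, _⟩ := Finset.mem_sigma.mp (Finset.mem_coe.mp hz)
      obtain ⟨hx', _⟩ := Finset.mem_sigma.mp (Finset.mem_coe.mp hz')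
      have g4 := (mem_twoPt.mp hx).2.2
      have g4' := (mem_twoPt.mp hx').2.2
      simp only at heq g4 g4'
      have := congrFun heq b
      rw [permOn_mem _ _ hbU, permOn_mem _ _ hbU, g4, g4', Equiv.swap_apply_left,
        Equiv.swap_apply_left] at this
      subst this
      rw [permOn_injective U _ heq]
  exact h1.trans (h2.trans Finset.card_biUnion_le)

/-- In a block with two distant distinguished edges, the edge `b` being restricted to a palette of
at least two colours, the number of colourings depends on the colour at `q` by a factor of at most
three. -/
lemma twoPt_ratio {S : Finset (Sym2 V)} {μ : Sym2 V → Fin k} {q b : Sym2 V} (hq : q ∈ S)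
    (hb : b ∈ S) (hk : 4 ≤ k)
    (hsw : ∀ c, (k - 2) * (twoPt μ S q b c c).card ≤
      ∑ γ ∈ Finset.univ.erase c, (twoPt μ S q b c γ).card)
    {A : Finset (Fin k)} (hA : 2 ≤ A.card) (c c' : Fin k) :
    ∑ β ∈ A, (twoPt μ S q b c β).card ≤ 3 * ∑ β ∈ A, (twoPt μ S q b c' β).card := by
  obtain ⟨c0, β0, h0⟩ : ∃ c0 β0 : Fin k, c0 ≠ β0 :=
    ⟨⟨0, by omega⟩, ⟨1, by omega⟩, by simp⟩
  set p := (twoPt μ S q b c0 c0).card with hp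
  set t := (twoPt μ S q b c0 β0).card with ht
  have hdiag : ∀ c, (twoPt μ S q b c c).card = p := fun c => card_twoPt_diag hq hb c c0
  have hoff : ∀ c β, c ≠ β → (twoPt μ S q b c β).card = t := fun c β h =>
    card_twoPt_off hq hb h h0
  have hpt : 2 * p ≤ 3 * t := by
    have h := hsw c0
    have h' : ∑ γ ∈ Finset.univ.erase c0, (twoPt μ S q b c0 γ).card = (k - 1) * t := by
      rw [Finset.sum_congr rfl fun γ hγ => hoff c0 γ (Finset.ne_of_mem_erase hγ).symm,
        Finset.sum_const, Finset.card_erase_of_mem (Finset.mem_univ _), Finset.card_univ,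
        Fintype.card_fin, smul_eq_mul]
    rw [h', ← hp] at h
    obtain ⟨n, rfl⟩ : ∃ n, k = n + 4 := ⟨k - 4, by omega⟩
    have e1 : n + 4 - 2 = n + 2 := by omega
    have e2 : n + 4 - 1 = n + 3 := by omega
    rw [e1, e2] at h
    -- `(n+2) p ≤ (n+3) t` and `n+3 ≤ 3(n+2)/2`
    nlinarith
  have hsum : ∀ c, ∑ β ∈ A, (twoPt μ S q b c β).card =
      if c ∈ A then p + (A.card - 1) * t else A.card * t := by
    intro c
    split_ifs with hc
    · rw [← Finset.add_sum_erase A _ hc, hdiag,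
        Finset.sum_congr rfl fun γ hγ => hoff c γ (Finset.ne_of_mem_erase hγ).symm,
        Finset.sum_const, Finset.card_erase_of_mem hc, smul_eq_mul]
    · rw [Finset.sum_congr rfl fun γ hγ => hoff c γ fun h => hc (h ▸ hγ), Finset.sum_const,
        smul_eq_mul]
  rw [hsum, hsum]
  obtain ⟨n, hn⟩ : ∃ n, A.card = n + 2 := ⟨A.card - 2, by omega⟩
  have e1 : n + 2 - 1 = n + 1 := by omega
  rw [hn, e1]
  split_ifs <;> nlinarith

end Counting

/-! ### Number of extensions of a root colour to a block -/

section BlockCount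

variable {V : Type} [Fintype V] [DecidableEq V] {G : SimpleGraph V} [DecidableRel G.Adj]

/-- Colourings of the block `S` with colour `c` at the edge `q`. -/
noncomputable def blockCnt {k : ℕ} (G : SimpleGraph V) (ET : Finset (Sym2 V)) (μ : Sym2 V → Fin k)
    (S : Finset (Sym2 V)) (q : Sym2 V) (c : Fin k) : ℕ :=
  ((blockCols G ET μ S).filter fun x => x q = c).card

/-- Without boundary constraints, all root colours have the same number of extensions, by swapping
colours. -/
lemma blockCnt_free {k : ℕ} {ET S : Finset (Sym2 V)} (μ : Sym2 V → Fin k) (hsub : S ⊆ ET)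
    (hS : ∀ e ∈ S, e ∉ intBd G ET) {q : Sym2 V} (hq : q ∈ S) (c c' : Fin k) :
    blockCnt G ET μ S q c ≤ blockCnt G ET μ S q c' := by
  refine Finset.card_le_card_of_injOn (permOn S (Equiv.swap c c')) ?_
    (permOn_injective S _).injOn
  intro x hx
  obtain ⟨hx, hxq⟩ := Finset.mem_filter.mp (Finset.mem_coe.mp hx)
  obtain ⟨h1, h2⟩ := mem_blockCols.mp hx
  refine Finset.mem_coe.mpr (Finset.mem_filter.mpr ⟨mem_blockCols.mpr ⟨?_, ?_⟩, ?_⟩)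
  · intro e he
    rw [permOn_not_mem _ _ he, h1 e he]
  · intro e he f hf hor hinc
    by_cases hfE : f ∈ ET
    · have hfS : f ∈ S := hor.resolve_right (not_not.mpr hfE)
      rw [permOn_mem _ _ he, permOn_mem _ _ hfS]
      exact fun h => h2 e he f hf hor hinc (Equiv.injective _ h)
    · exact absurd (mem_intBd_of (hsub he) hf hfE hinc) (hS e he)
  · rw [permOn_mem _ _ hq, hxq, Equiv.swap_apply_left]

lemma blockCnt_singleton {k : ℕ} {ET : Finset (Sym2 V)} (μ : Sym2 V → Fin k) {q : Sym2 V}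
    {c c' : Fin k} (hq : q ∈ ET) (hc' : c' ∈ allowedCol G ET μ q) :
    blockCnt G ET μ {q} q c ≤ blockCnt G ET μ {q} q c' := by
  have h1 : blockCnt G ET μ {q} q c ≤ 1 := by
    refine Finset.card_le_one.mpr fun x hx y hy => ?_
    obtain ⟨hx, hxq⟩ := Finset.mem_filter.mp hx
    obtain ⟨hy, hyq⟩ := Finset.mem_filter.mp hy
    funext e
    by_cases he : e = q
    · rw [he, hxq, hyq]
    · rw [(mem_blockCols.mp hx).1 e (by simpa using he),
        (mem_blockCols.mp hy).1 e (by simpa using he)]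
  refine h1.trans (Finset.card_pos.mpr ⟨Function.update μ q c', ?_⟩)
  refine Finset.mem_filter.mpr ⟨mem_blockCols.mpr ⟨?_, ?_⟩, by simp⟩
  · intro e he
    rw [Function.update_of_ne (by simpa using he)]
  · intro e he f hf hor hinc
    have he' := Finset.mem_singleton.mp he
    subst he'
    have hfe : f ≠ e := hinc.1.symm
    have hfE : f ∉ ET := hor.resolve_left (by simpa using hfe)
    rw [Function.update_self, Function.update_of_ne hfe]
    exact mem_allowedCol.mp hc' f hf hfE hinc

/-- If `b` is the only edge of `S` in the interior boundary of `ET`, the boundary condition only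
restricts the palette at `b`. -/
lemma blockCnt_eq_sum {k : ℕ} {ET S : Finset (Sym2 V)} (μ : Sym2 V → Fin k) (hsub : S ⊆ ET)
    (hedge : ET ⊆ G.edgeFinset) {q b : Sym2 V} (hb : b ∈ S)
    (huniq : ∀ e ∈ S, e ∈ intBd G ET → e = b) (c : Fin k) :
    blockCnt G ET μ S q c = ∑ β ∈ allowedCol G ET μ b, (twoPt μ S q b c β).card := by
  have hmu : ∀ x ∈ blockCols G ET μ S, ∀ g, g ∉ ET → x g = μ g := fun x hx g hg =>
    (mem_blockCols.mp hx).1 g fun h => hg (hsub h)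
  rw [blockCnt, Finset.card_eq_sum_card_fiberwise (f := fun x => x b) (t := allowedCol G ET μ b)]
  · refine Finset.sum_congr rfl fun β hβ => congrArg _ ?_
    ext x
    rw [Finset.mem_filter, Finset.mem_filter, mem_twoPt]
    constructor
    · rintro ⟨⟨hx, hq⟩, hxb⟩
      obtain ⟨h1, h2⟩ := mem_blockCols.mp hx
      exact ⟨⟨h1, fun e he f hf hinc => h2 e he f
        (SimpleGraph.mem_edgeFinset.mp (hedge (hsub hf))) (Or.inl hf) hinc⟩, hq, hxb⟩
    · rintro ⟨⟨h1, h2⟩, hq, hxb⟩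
      refine ⟨⟨mem_blockCols.mpr ⟨h1, ?_⟩, hq⟩, hxb⟩
      intro e he f hf hor hinc
      by_cases hfS : f ∈ S
      · exact h2 e he f hfS hinc
      · have hfE := hor.resolve_left hfS
        have := huniq e he (mem_intBd_of (hsub he) hf hfE hinc)
        subst this
        rw [hxb, h1 f hfS]
        exact mem_allowedCol.mp hβ f hf hfE hinc
  · intro x hx
    obtain ⟨hx, _⟩ := Finset.mem_filter.mp (Finset.mem_coe.mp hx)
    refine Finset.mem_coe.mpr (mem_allowedCol.mpr fun g hg hgE hinc => ?_)
    rw [← hmu x hx g hgE]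
    exact (mem_blockCols.mp hx).2 b hb g hg (Or.inr hgE) hinc

/-- The number of extensions of a root colour to a block depends on the colour by a factor of at
most three, and not at all if the block misses the interior boundary of the tree. -/
lemma block_count (hG : G.IsAcyclic) {ET : Finset (Sym2 V)} (hs : IsSplitting G ET)
    (h2 : 2 ≤ ET.card) {d : ℕ} (hd : 3 ≤ d)
    (hdeg : ∀ v : V, 2 ≤ G.degree v → G.degree v = d) (μ : Sym2 V → Fin (d + 1)) {r : ℕ}
    {blocks : Fin r → Finset (Sym2 V)} {roots : Fin r → Sym2 V}
    (B : BlockData G d ET blocks roots) {i : Fin r} (hA : IsSplitting G (blocks i))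
    {c c' : Fin (d + 1)} (hc' : c' ∈ allowedCol G ET μ (roots i)) :
    blockCnt G ET μ (blocks i) (roots i) c ≤
      (if ∃ e ∈ blocks i, e ∈ intBd G ET then 3 else 1) *
        blockCnt G ET μ (blocks i) (roots i) c' := by
  split_ifs with hmeet
  swap
  · push Not at hmeet
    rw [one_mul]
    exact blockCnt_free μ (B.sub i) hmeet (B.mem i) c c'
  by_cases hq : roots i ∈ intBd G ET
  · rw [B.special i hq]
    have := blockCnt_singleton (c := c) μ (B.sub i (B.mem i)) hc'
    omega
  obtain ⟨b, hb, hbI⟩ := hmeet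
  set S := blocks i with hSdef
  set q := roots i with hqdef
  have hqS : q ∈ S := B.mem i
  have hqb : q ≠ b := fun h => hq (h ▸ hbI)
  have hcard : 1 < S.card := Finset.one_lt_card.mpr ⟨q, hqS, b, hb, hqb⟩
  obtain ⟨hA1, -, hA3, hA4⟩ := hA
  have hA5 := hA4.resolve_left (by omega)
  -- The block is not a single edge, so (being splitting) it has at most two interior boundary edges,
  -- namely its root `q` and `b`, and these are not incident.
  have hqI : q ∈ intBd G S := by
    obtain ⟨s, hsinj, ⟨j, hj⟩, hinc⟩ := B.clique i
    obtain ⟨j', hj'⟩ : ∃ j' : Fin d, j ≠ j' := by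
      have : Nontrivial (Fin d) := Fin.nontrivial_iff_two_le.mpr (by omega)
      obtain ⟨j', h⟩ := exists_ne j
      exact ⟨j', h.symm⟩
    refine mem_intBd_of hqS (SimpleGraph.mem_edgeFinset.mp (hs.1 (B.sub _ (B.mem (s j')))))
      (fun h => ?_) (by have := hinc j j' hj'; rwa [hj] at this)
    exact hj' (hsinj (hj.trans (B.disj _ _ _ h (B.mem _))))
  have hIS : ∀ e ∈ S, e ∈ intBd G ET → e ∈ intBd G S := by
    intro e he h
    obtain ⟨_, g, hg, hgE, hinc⟩ := exists_ext_of_mem_intBd h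
    exact mem_intBd_of he hg (fun h => hgE (B.sub i h)) hinc
  have hninc : ¬ EdgeInc q b := hA5.2.2 q hqI b (hIS b hb hbI) hqb
  have huniq : ∀ e ∈ S, e ∈ intBd G ET → e = b := by
    intro e he h
    by_contra hne
    have h3 : ({q, b, e} : Finset (Sym2 V)).card = 3 :=
      Finset.card_eq_three.mpr ⟨q, b, e, hqb, fun h' => hq (h' ▸ h), Ne.symm hne, rfl⟩
    have h4 : ({q, b, e} : Finset (Sym2 V)) ⊆ intBd G S := by
      intro z hz
      simp only [Finset.mem_insert, Finset.mem_singleton] at hz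
      rcases hz with rfl | rfl | rfl
      · exact hqI
      · exact hIS _ hb hbI
      · exact hIS _ he h
    have := Finset.card_le_card h4
    have := hA5.2.1
    omega
  have hSe : ∀ e ∈ S, e ∈ G.edgeSet := fun e he => SimpleGraph.mem_edgeFinset.mp (hA1 he)
  obtain ⟨w, hwq, hw⟩ : ∃ w ∈ q, ∀ f ∈ S, EdgeInc q f → w ∈ f := by
    rcases B.tip i with h | h
    · have h' : S.card = 1 := by rw [hSdef, h, Finset.card_singleton]
      omega
    · exact h
  -- `q1` is the first edge after `q` on the path to `b`
  obtain ⟨q1, hq1, hwq1, hbq1⟩ := hang_cover hA3 hqS hwq hb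
  have hne : q ≠ q1 := by
    rintro rfl
    obtain ⟨a, ⟨_, ha, hinc, u, hu, hua, huR⟩, _⟩ :=
      (Finset.mem_filter.mp hbq1).2.cases_head.resolve_left hqb
    have huw : u ≠ w := by simpa using huR
    have e1 := (Sym2.mem_and_mem_iff huw).mp ⟨hu, hwq⟩
    have e2 := (Sym2.mem_and_mem_iff huw).mp ⟨hua, hw a ha hinc⟩
    exact hinc.1 (e1.trans e2.symm)
  have hinc1 : EdgeInc q q1 := ⟨hne, w, hwq, hwq1⟩
  have hbne : b ≠ q1 := fun h => hninc (h ▸ hinc1)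
  have hav : ∀ g ∈ hangBlock S {w} q1, g ≠ q1 → w ∉ g := by
    obtain ⟨w', rfl⟩ := hwq1
    intro g hg hgne hwg
    refine hang_avoid hG hA1 (hSe _ hq1) ?_ (Finset.mem_singleton_self w) hg hgne w hwg
      (Finset.mem_singleton_self w)
    intro v hv
    rw [Finset.mem_singleton.mp hv]
  rw [blockCnt_eq_sum μ (B.sub i) hs.1 hb huniq, blockCnt_eq_sum μ (B.sub i) hs.1 hb huniq]
  refine twoPt_ratio hqS hb (by omega) (fun c => ?_)
    (two_le_card_allowedCol hs h2 hd hdeg μ hbI) c c'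
  refine swap_count (U := (hangBlock S {w} q1).erase q1) (q1 := q1)
    ((Finset.erase_subset _ _).trans (hangBlock_subset _ _ _)) hqS ?_ ?_ hq1
    (Finset.notMem_erase _ _) hinc1 ?_ c
  · intro h
    obtain ⟨h', h''⟩ := Finset.mem_erase.mp h
    exact hav q h'' h' hwq
  · exact Finset.mem_erase.mpr ⟨hbne, hbq1⟩
  · intro e he f hf hfU hinc
    obtain ⟨he1, he2⟩ := Finset.mem_erase.mp he
    obtain ⟨_, u, hue, huf⟩ := hinc
    by_contra hfq
    refine hfU (Finset.mem_erase.mpr ⟨hfq, mem_hangBlock_step he2 hf hue huf ?_⟩)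
    rw [Finset.mem_singleton]
    rintro rfl
    exact hav e he2 he1 hue

/-- At most two blocks meet the interior boundary. -/
lemma card_meeting_le {ET : Finset (Sym2 V)} (hs : IsSplitting G ET)
    (h2 : 2 ≤ ET.card) {d : ℕ} {r : ℕ}
    {blocks : Fin r → Finset (Sym2 V)} {roots : Fin r → Sym2 V}
    (B : BlockData G d ET blocks roots) :
    (Finset.univ.filter fun i => ∃ e ∈ blocks i, e ∈ intBd G ET).card ≤ 2 := by
  have h4 := (hs.2.2.2.resolve_left (by omega)).2.1
  refine le_trans (Finset.card_le_card_of_injOn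
    (fun i => if h : ∃ e ∈ blocks i, e ∈ intBd G ET then h.choose else roots i) ?_ ?_) h4
  · intro i hi
    have hi' : ∃ e ∈ blocks i, e ∈ intBd G ET := by simpa using hi
    simp only [dif_pos hi']
    exact hi'.choose_spec.2
  · intro i hi j hj hij
    have hi' : ∃ e ∈ blocks i, e ∈ intBd G ET := by simpa using hi
    have hj' : ∃ e ∈ blocks j, e ∈ intBd G ET := by simpa using hj
    simp only [dif_pos hi', dif_pos hj'] at hij
    exact B.disj i j _ hi'.choose_spec.1 (hij ▸ hj'.choose_spec.1)

end BlockCount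

/-! ### From root colours to tuples of block colourings -/

section Lifting

variable {V : Type} [Fintype V] [DecidableEq V] {G : SimpleGraph V} [DecidableRel G.Adj]

/-- Given the colours of the other root edges, at most two colours are available at a root edge. -/
lemma card_options_le {ET : Finset (Sym2 V)} {d : ℕ} (hd : 3 ≤ d) {μ : Sym2 V → Fin (d + 1)} {r : ℕ}
    {blocks : Fin r → Finset (Sym2 V)} {roots : Fin r → Sym2 V}
    (B : BlockData G d ET blocks roots) {c : Fin r → Fin (d + 1)}
    (hc : c ∈ rootCols G ET μ roots) (i : Fin r) {A : Finset (Fin (d + 1))}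
    (hA : ∀ b ∈ A, Function.update c i b ∈ rootCols G ET μ roots) : A.card ≤ 2 := by
  obtain ⟨s, hsinj, ⟨j, hj⟩, hinc⟩ := B.clique i
  have hc2 := (mem_rootCols.mp hc).2
  have himg : ((Finset.univ.erase j).image fun a => c (s a)).card = d - 1 := by
    rw [Finset.card_image_of_injOn, Finset.card_erase_of_mem (Finset.mem_univ _),
      Finset.card_univ, Fintype.card_fin]
    intro a _ b _ hab
    by_contra hne
    exact hc2 _ _ (hinc a b hne) hab
  have hsub : A ⊆ ((Finset.univ.erase j).image fun a => c (s a))ᶜ := by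
    intro b hb
    have hb2 := (mem_rootCols.mp (hA b hb)).2
    rw [Finset.mem_compl, Finset.mem_image]
    rintro ⟨a, ha, hab⟩
    have haj : a ≠ j := Finset.ne_of_mem_erase ha
    have hsa : s a ≠ i := fun h => haj (hsinj (h.trans hj.symm))
    have := hb2 (s a) i (by have := hinc a j haj; rwa [hj] at this)
    rw [Function.update_of_ne hsa, Function.update_self] at this
    exact this hab
  refine (Finset.card_le_card hsub).trans ?_
  rw [Finset.card_compl, himg, Fintype.card_fin]
  omega

/-- The lifting theorem applied to block colourings: the fibres over two root colour vectors differ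
in size by a factor of at most `9 = 3²`, and among the options at a block a given colour accounts for
at least one sixth. -/
lemma lift_apply (hG : G.IsAcyclic) {ET : Finset (Sym2 V)} (hs : IsSplitting G ET)
    (h2 : 2 ≤ ET.card) {d : ℕ} (hd : 3 ≤ d)
    (hdeg : ∀ v : V, 2 ≤ G.degree v → G.degree v = d) {μ : Sym2 V → Fin (d + 1)}
    (hμ : ProperECol G μ) {r : ℕ}
    {blocks : Fin r → Finset (Sym2 V)} {roots : Fin r → Sym2 V}
    (B : BlockData G d ET blocks roots) (hA : ∀ i, IsSplitting G (blocks i))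
    {w : Fin r → ℝ} {K : ℝ} (hK : 0 ≤ K) (hw : ∀ i, 1 ≤ w i)
    (hC : ∀ F : (Fin r → Fin (d + 1)) → ℝ,
      ∑ c ∈ rootCols G ET μ roots, ∑ c' ∈ rootCols G ET μ roots, (F c - F c') ^ 2 ≤
        K * (rootCols G ET μ roots).card * ∑ i, w i * colEn (rootCols G ET μ roots) i F)
    (f : (Fin r → Sym2 V → Fin (d + 1)) → ℝ) :
    ∑ y ∈ liftSet (fun i => blockCols G ET μ (blocks i)) (fun i x => x (roots i))
        (rootCols G ET μ roots),
      ∑ z ∈ liftSet (fun i => blockCols G ET μ (blocks i)) (fun i x => x (roots i))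
        (rootCols G ET μ roots), (f y - f z) ^ 2 ≤
      (6 + 3 * 9 ^ 2 * K) * 6 * (liftSet (fun i => blockCols G ET μ (blocks i))
        (fun i x => x (roots i)) (rootCols G ET μ roots)).card *
        ∑ i, w i * liftEn (fun i => blockCols G ET μ (blocks i)) (fun i x => x (roots i))
          (rootCols G ET μ roots) i f := by
  have hcnt : ∀ i b, (colFib (fun i => blockCols G ET μ (blocks i))
      (fun i (x : Sym2 V → Fin (d + 1)) => x (roots i)) i b).card =
        blockCnt G ET μ (blocks i) (roots i) b := fun i b => by
      rw [colFib, blockCnt]; congr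
  have hratio : ∀ i c, ∀ c' ∈ allowedCol G ET μ (roots i),
      blockCnt G ET μ (blocks i) (roots i) c ≤
        (if ∃ e ∈ blocks i, e ∈ intBd G ET then 3 else 1) *
          blockCnt G ET μ (blocks i) (roots i) c' :=
    fun i c c' hc' => block_count hG hs h2 hd hdeg μ B (hA i) hc'
  have hratio3 : ∀ i c, ∀ c' ∈ allowedCol G ET μ (roots i),
      blockCnt G ET μ (blocks i) (roots i) c ≤ 3 * blockCnt G ET μ (blocks i) (roots i) c' := by
    intro i c c' hc'
    have := hratio i c c' hc'
    split_ifs at this <;> omega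
  refine lift_poincare hK (by norm_num) (by norm_num) hw hC ?_ ?_ ?_ f
  · intro c hc i
    rw [← Finset.card_pos, hcnt]
    have h1 : 0 < blockCnt G ET μ (blocks i) (roots i) (μ (roots i)) := by
      refine Finset.card_pos.mpr ⟨μ, Finset.mem_filter.mpr ⟨mem_blockCols.mpr
        ⟨fun _ _ => rfl, fun e he f hf _ hinc => hμ e ?_ f hf hinc⟩, rfl⟩⟩
      exact SimpleGraph.mem_edgeFinset.mp (hs.1 (B.sub i he))
    have := hratio3 i (μ (roots i)) (c i) ((mem_rootCols.mp hc).1 i)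
    omega
  · intro c hc i b hb
    have hba : b ∈ allowedCol G ET μ (roots i) := by
      have := (mem_rootCols.mp hb).1 i
      rwa [Function.update_self] at this
    simp only [hcnt]
    suffices h : ∀ A : Finset (Fin (d + 1)),
        (∀ b' ∈ A, Function.update c i b' ∈ rootCols G ET μ roots) →
        ∑ b' ∈ A, (blockCnt G ET μ (blocks i) (roots i) b' : ℝ) ≤
          6 * blockCnt G ET μ (blocks i) (roots i) b by
      refine h _ fun b' hb' => ?_
      simpa only [Finset.mem_filter, Finset.mem_univ, true_and] using hb'
    intro A hA'
    refine (Finset.sum_le_card_nsmul _ _ (3 * (blockCnt G ET μ (blocks i) (roots i) b : ℝ))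
      fun b' _ => by exact_mod_cast hratio3 i b' b hba).trans ?_
    rw [nsmul_eq_mul]
    have h3 : (A.card : ℝ) ≤ 2 := by exact_mod_cast card_options_le hd B hc i hA'
    have h4 : (0 : ℝ) ≤ blockCnt G ET μ (blocks i) (roots i) b := Nat.cast_nonneg _
    nlinarith
  · intro c _ c' hc'
    have hprod : ∏ i, (if ∃ e ∈ blocks i, e ∈ intBd G ET then 3 else 1) ≤ 9 := by
      rw [Finset.prod_ite, Finset.prod_const, Finset.prod_const_one, mul_one]
      calc _ ≤ 3 ^ 2 := Nat.pow_le_pow_right (by norm_num) (card_meeting_le hs h2 B)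
        _ = 9 := by norm_num
    simp only [vecFib, Fintype.card_piFinset, hcnt]
    have : ∏ i, blockCnt G ET μ (blocks i) (roots i) (c i) ≤
        9 * ∏ i, blockCnt G ET μ (blocks i) (roots i) (c' i) := by
      refine (Finset.prod_le_prod' fun i _ =>
        hratio i (c i) (c' i) ((mem_rootCols.mp hc').1 i)).trans ?_
      rw [Finset.prod_mul_distrib]
      exact Nat.mul_le_mul_right _ hprod
    exact_mod_cast this

end Lifting

/-! ### Colourings as tuples of block colourings -/

section Options

variable {B κ : Type*} {r : ℕ} {X : Fin r → Finset B} {ρ : Fin r → B → κ} {C : Finset (Fin r → κ)}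

lemma mem_liftOpts {i : Fin r} {y : Fin r → B} {t : B} :
    t ∈ liftOpts X ρ C i y ↔ t ∈ X i ∧ Function.update y i t ∈ liftSet X ρ C := by
  rw [liftOpts, Finset.mem_filter]

end Options

section Splitting

variable {V : Type} [Fintype V] [DecidableEq V] {G : SimpleGraph V} [DecidableRel G.Adj]
  {k d r : ℕ} {ET : Finset (Sym2 V)} {blocks : Fin r → Finset (Sym2 V)} {roots : Fin r → Sym2 V}
  {μ : Sym2 V → Fin k}

/-- The tuple of restrictions of a colouring to the blocks, each extended by `μ`. -/
noncomputable def splitCol (μ : Sym2 V → Fin k) (blocks : Fin r → Finset (Sym2 V))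
    (a : Sym2 V → Fin k) : Fin r → Sym2 V → Fin k :=
  fun i e => if e ∈ blocks i then a e else μ e

lemma splitCol_mem {i : Fin r} {e : Sym2 V} (h : e ∈ blocks i) (a : Sym2 V → Fin k) :
    splitCol μ blocks a i e = a e := if_pos h

lemma splitCol_not_mem {i : Fin r} {e : Sym2 V} (h : e ∉ blocks i) (a : Sym2 V → Fin k) :
    splitCol μ blocks a i e = μ e := if_neg h

/-- The tuples of block colourings that are compatible along the root edges. -/
noncomputable abbrev splitSet (G : SimpleGraph V) (ET : Finset (Sym2 V)) (μ : Sym2 V → Fin k)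
    (blocks : Fin r → Finset (Sym2 V)) (roots : Fin r → Sym2 V) :
    Finset (Fin r → Sym2 V → Fin k) :=
  liftSet (fun i => blockCols G ET μ (blocks i)) (fun i x => x (roots i)) (rootCols G ET μ roots)

lemma splitCol_mem_splitSet (hE : ET ⊆ G.edgeFinset) (B : BlockData G d ET blocks roots)
    (a : OmegaE G k ET μ) : splitCol μ blocks a.1 ∈ splitSet G ET μ blocks roots := by
  have hedge : ∀ i, ∀ e ∈ blocks i, e ∈ G.edgeSet := fun i e he =>
    SimpleGraph.mem_edgeFinset.mp (hE (B.sub i he))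
  refine mem_liftSet.mpr ⟨fun i => mem_blockCols.mpr ⟨fun e he => splitCol_not_mem he _, ?_⟩,
    mem_rootCols.mpr ⟨fun i => mem_allowedCol.mpr ?_, ?_⟩⟩
  · intro e he f hf hor hinc
    rw [splitCol_mem he]
    by_cases hfi : f ∈ blocks i
    · rw [splitCol_mem hfi]
      exact a.2.1 e (hedge i e he) f hf hinc
    · rw [splitCol_not_mem hfi, ← a.2.2 f (hor.resolve_left hfi)]
      exact a.2.1 e (hedge i e he) f hf hinc
  · intro g hg hgE hinc
    rw [splitCol_mem (B.mem i), ← a.2.2 g hgE]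
    exact a.2.1 _ (hedge i _ (B.mem i)) g hg hinc
  · intro i j hinc
    rw [splitCol_mem (B.mem i), splitCol_mem (B.mem j)]
    exact a.2.1 _ (hedge i _ (B.mem i)) _ (hedge j _ (B.mem j)) hinc

lemma splitCol_injective (B : BlockData G d ET blocks roots) {a b : OmegaE G k ET μ}
    (h : splitCol μ blocks a.1 = splitCol μ blocks b.1) : a = b := by
  apply Subtype.ext
  funext e
  by_cases he : e ∈ ET
  · obtain ⟨i, hi⟩ := B.cov e he
    have := congrFun (congrFun h i) e
    rwa [splitCol_mem hi, splitCol_mem hi] at this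
  · rw [a.2.2 e he, b.2.2 e he]

/-- Compatible block colourings glue to a proper colouring of the whole tree. -/
lemma splitCol_surj (hμ : ProperECol G μ)
    (B : BlockData G d ET blocks roots) {y : Fin r → Sym2 V → Fin k}
    (hy : y ∈ splitSet G ET μ blocks roots) :
    ∃ a : OmegaE G k ET μ, splitCol μ blocks a.1 = y := by
  obtain ⟨h1, h2⟩ := mem_liftSet.mp hy
  obtain ⟨h3, h4⟩ := mem_rootCols.mp h2
  set g : Sym2 V → Fin k := fun e => if h : ∃ i, e ∈ blocks i then y h.choose e else μ e with hg
  have g1 : ∀ i, ∀ e ∈ blocks i, g e = y i e := by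
    intro i e he
    have hex : ∃ i, e ∈ blocks i := ⟨i, he⟩
    rw [hg]
    simp only [dif_pos hex]
    rw [B.disj _ _ _ hex.choose_spec he]
  have g2 : ∀ e, e ∉ ET → g e = μ e := by
    intro e he
    have hex : ¬ ∃ i, e ∈ blocks i := fun ⟨i, hi⟩ => he (B.sub i hi)
    rw [hg]
    simp only [dif_neg hex]
  have g3 : ∀ e ∈ ET, ∀ f ∈ G.edgeSet, EdgeInc e f → g e ≠ g f := by
    intro e he f hf hinc
    obtain ⟨i, hi⟩ := B.cov e he
    rw [g1 i e hi]
    by_cases hfE : f ∈ ET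
    · obtain ⟨j, hj⟩ := B.cov f hfE
      rw [g1 j f hj]
      by_cases hij : i = j
      · subst hij
        exact (mem_blockCols.mp (h1 i)).2 e hi f hf (Or.inl hj) hinc
      · obtain ⟨rfl, rfl⟩ := B.inc i j e f hi hj hij hinc
        exact h4 i j hinc
    · rw [g2 f hfE, ← (mem_blockCols.mp (h1 i)).1 f fun h => hfE (B.sub i h)]
      exact (mem_blockCols.mp (h1 i)).2 e hi f hf (Or.inr hfE) hinc
  refine ⟨⟨g, fun e he f hf hinc => ?_, g2⟩, ?_⟩
  · by_cases heE : e ∈ ET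
    · exact g3 e heE f hf hinc
    · by_cases hfE : f ∈ ET
      · exact (g3 f hfE e he hinc.symm).symm
      · rw [g2 e heE, g2 f hfE]
        exact hμ e he f hf hinc
  · funext i e
    by_cases he : e ∈ blocks i
    · rw [splitCol_mem he]; exact g1 i e he
    · rw [splitCol_not_mem he, (mem_blockCols.mp (h1 i)).1 e he]

/-- The colourings that agree with `a` outside `S`. -/
noncomputable def agreeOff {G : SimpleGraph V} {ET : Finset (Sym2 V)} {μ : Sym2 V → Fin k}
    (S : Finset (Sym2 V)) (a : OmegaE G k ET μ) : Finset (OmegaE G k ET μ) :=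
  Finset.univ.filter fun b => ∀ e, e ∉ S → b.1 e = a.1 e

lemma mem_agreeOff {S : Finset (Sym2 V)} {a b : OmegaE G k ET μ} :
    b ∈ agreeOff S a ↔ ∀ e, e ∉ S → b.1 e = a.1 e := by simp [agreeOff]

lemma self_mem_agreeOff {S : Finset (Sym2 V)} {a : OmegaE G k ET μ} : a ∈ agreeOff S a :=
  mem_agreeOff.mpr fun _ _ => rfl

lemma agreeOff_eq {S : Finset (Sym2 V)} {a b : OmegaE G k ET μ} (h : b ∈ agreeOff S a) :
    agreeOff S b = agreeOff S a := by
  ext c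
  rw [mem_agreeOff] at h
  rw [mem_agreeOff, mem_agreeOff]
  exact ⟨fun h' e he => (h' e he).trans (h e he), fun h' e he => (h' e he).trans (h e he).symm⟩

lemma mem_agreeOff_comm {S : Finset (Sym2 V)} {a b : OmegaE G k ET μ} :
    b ∈ agreeOff S a ↔ a ∈ agreeOff S b := by
  rw [mem_agreeOff, mem_agreeOff]
  exact ⟨fun h e he => (h e he).symm, fun h e he => (h e he).symm⟩

lemma update_splitCol (B : BlockData G d ET blocks roots) {i : Fin r} {a b : OmegaE G k ET μ}
    (h : b ∈ agreeOff (blocks i) a) :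
    Function.update (splitCol μ blocks a.1) i (splitCol μ blocks b.1 i) =
      splitCol μ blocks b.1 := by
  funext j
  by_cases hj : j = i
  · subst hj; rw [Function.update_self]
  · rw [Function.update_of_ne hj]
    funext e
    by_cases he : e ∈ blocks j
    · rw [splitCol_mem he, splitCol_mem he]
      exact (mem_agreeOff.mp h e fun hi => hj (B.disj _ _ _ he hi)).symm
    · rw [splitCol_not_mem he, splitCol_not_mem he]

lemma sum_splitSet (hE : ET ⊆ G.edgeFinset) (hμ : ProperECol G μ)
    (B : BlockData G d ET blocks roots) (φ : (Fin r → Sym2 V → Fin k) → ℝ) :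
    ∑ y ∈ splitSet G ET μ blocks roots, φ y =
      ∑ a : OmegaE G k ET μ, φ (splitCol μ blocks a.1) := by
  symm
  refine Finset.sum_bij (fun a _ => splitCol μ blocks a.1)
    (fun a _ => splitCol_mem_splitSet hE B a) (fun a _ b _ h => splitCol_injective B h)
    (fun y hy => ?_) fun _ _ => rfl
  obtain ⟨a, ha⟩ := splitCol_surj hμ B hy
  exact ⟨a, Finset.mem_univ _, ha⟩

/-- Replacing the component `i` of a tuple amounts to recolouring the block `i`. -/
lemma sum_splitOpts (hE : ET ⊆ G.edgeFinset) (hμ : ProperECol G μ)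
    (B : BlockData G d ET blocks roots) (i : Fin r) (a : OmegaE G k ET μ)
    (φ : (Sym2 V → Fin k) → ℝ) :
    ∑ t ∈ liftOpts (fun i => blockCols G ET μ (blocks i)) (fun i x => x (roots i))
        (rootCols G ET μ roots) i (splitCol μ blocks a.1), φ t =
      ∑ b ∈ agreeOff (blocks i) a, φ (splitCol μ blocks b.1 i) := by
  symm
  refine Finset.sum_bij (fun b _ => splitCol μ blocks b.1 i) ?_ ?_ ?_ fun _ _ => rfl
  · intro b hb
    have hmem := splitCol_mem_splitSet hE B b
    refine mem_liftOpts.mpr ⟨(mem_liftSet.mp hmem).1 i, ?_⟩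
    rw [update_splitCol B hb]
    exact hmem
  · intro b hb c hc h
    refine splitCol_injective B ?_
    rw [← update_splitCol B hb, ← update_splitCol B hc, h]
  · intro t ht
    obtain ⟨_, ht2⟩ := mem_liftOpts.mp ht
    obtain ⟨b, hb⟩ := splitCol_surj hμ B ht2
    refine ⟨b, mem_agreeOff.mpr fun e he => ?_, by rw [hb, Function.update_self]⟩
    by_cases heE : e ∈ ET
    · obtain ⟨j, hj⟩ := B.cov e heE
      have hji : j ≠ i := fun h => he (h ▸ hj)
      have := congrFun (congrFun hb j) e
      rwa [Function.update_of_ne hji, splitCol_mem hj, splitCol_mem hj] at this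
    · rw [b.2.2 e heE, a.2.2 e heE]

/-- The energy of the heat-bath moves in the edge set `S`. -/
noncomputable def blockEn {G : SimpleGraph V} {ET : Finset (Sym2 V)} {μ : Sym2 V → Fin k}
    (S : Finset (Sym2 V)) (f : OmegaE G k ET μ → ℝ) : ℝ :=
  ∑ a, (1 / ((agreeOff S a).card : ℝ)) * ∑ b ∈ agreeOff S a, (f a - f b) ^ 2

/-- A function on colourings, transported to tuples of block colourings. -/
lemma exists_transport (B : BlockData G d ET blocks roots) (f : OmegaE G k ET μ → ℝ) :
    ∃ g : (Fin r → Sym2 V → Fin k) → ℝ, ∀ a, g (splitCol μ blocks a.1) = f a := by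
  refine ⟨fun y => if h : ∃ a : OmegaE G k ET μ, splitCol μ blocks a.1 = y then f h.choose else 0,
    fun a => ?_⟩
  have h : ∃ b : OmegaE G k ET μ, splitCol μ blocks b.1 = splitCol μ blocks a.1 := ⟨a, rfl⟩
  simp only [dif_pos h]
  rw [splitCol_injective B h.choose_spec]

lemma liftEn_eq_blockEn (hE : ET ⊆ G.edgeFinset) (hμ : ProperECol G μ)
    (B : BlockData G d ET blocks roots) (i : Fin r) (f : OmegaE G k ET μ → ℝ)
    {g : (Fin r → Sym2 V → Fin k) → ℝ} (hg : ∀ a, g (splitCol μ blocks a.1) = f a) :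
    liftEn (fun i => blockCols G ET μ (blocks i)) (fun i x => x (roots i))
        (rootCols G ET μ roots) i g = blockEn (blocks i) f := by
  rw [liftEn, sum_splitSet hE hμ B, blockEn]
  refine Finset.sum_congr rfl fun a _ => ?_
  have h1 := sum_splitOpts hE hμ B i a fun _ => 1
  simp only [Finset.sum_const, nsmul_eq_mul, mul_one] at h1
  rw [h1, sum_splitOpts hE hμ B i a fun t =>
    (g (splitCol μ blocks a.1) - g (Function.update (splitCol μ blocks a.1) i t)) ^ 2]
  congr 1
  refine Finset.sum_congr rfl fun b hb => ?_
  rw [update_splitCol B hb, hg, hg]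

end Splitting

/-! ### Block energies and the relaxation time -/

section Energies

variable {V : Type} [Fintype V] [DecidableEq V] {G : SimpleGraph V} [DecidableRel G.Adj]
  {k d r : ℕ} {ET : Finset (Sym2 V)} {blocks : Fin r → Finset (Sym2 V)} {roots : Fin r → Sym2 V}
  {μ : Sym2 V → Fin k}

/-- The contribution of the transition `a → b` of the Glauber dynamics to the Dirichlet form. -/
noncomputable def gEn {G : SimpleGraph V} {ET : Finset (Sym2 V)} {μ : Sym2 V → Fin k}
    (f : OmegaE G k ET μ → ℝ) (a b : OmegaE G k ET μ) : ℝ :=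
  (1 / (k : ℝ)) * if DiffOne a.1 b.1 then (f a - f b) ^ 2 else 0

lemma gEn_nonneg (f : OmegaE G k ET μ → ℝ) (a b : OmegaE G k ET μ) : 0 ≤ gEn f a b := by
  rw [gEn]; split_ifs <;> positivity

/-- The part of the Glauber energy due to updates of edges in `S`. -/
noncomputable def blockDir {G : SimpleGraph V} {ET : Finset (Sym2 V)} {μ : Sym2 V → Fin k}
    (S : Finset (Sym2 V)) (f : OmegaE G k ET μ → ℝ) : ℝ :=
  ∑ a, ∑ b ∈ agreeOff S a, gEn f a b

lemma blockDir_nonneg (S : Finset (Sym2 V)) (f : OmegaE G k ET μ → ℝ) : 0 ≤ blockDir S f :=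
  Finset.sum_nonneg fun _ _ => Finset.sum_nonneg fun _ _ => gEn_nonneg f _ _

/-- Averaging over the classes of the relation of agreeing outside `S` preserves the total. -/
lemma sum_avg_agreeOff (S : Finset (Sym2 V)) (φ : OmegaE G k ET μ → ℝ) :
    ∑ a, (1 / ((agreeOff S a).card : ℝ)) * ∑ b ∈ agreeOff S a, φ b = ∑ a, φ a := by
  have h1 : ∀ a : OmegaE G k ET μ, (1 / ((agreeOff S a).card : ℝ)) * ∑ b ∈ agreeOff S a, φ b =
      ∑ b ∈ agreeOff S a, (1 / ((agreeOff S b).card : ℝ)) * φ b := by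
    intro a
    rw [Finset.mul_sum]
    refine Finset.sum_congr rfl fun b hb => ?_
    rw [agreeOff_eq hb]
  rw [Finset.sum_congr rfl fun a _ => h1 a]
  rw [Finset.sum_comm' (t' := Finset.univ) (s' := fun b => agreeOff S b)
    (fun a b => by
      simp only [Finset.mem_univ, true_and, and_true]
      exact mem_agreeOff_comm)]
  refine Finset.sum_congr rfl fun b _ => ?_
  rw [Finset.sum_const, nsmul_eq_mul]
  have h3 : ((agreeOff S b).card : ℝ) ≠ 0 := by
    exact_mod_cast (Finset.card_pos.mpr ⟨b, self_mem_agreeOff⟩).ne'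
  field_simp

/-- Poincaré inequalities with constant `τ` on all classes bound the heat-bath energy. -/
lemma blockEn_le_of_class (S : Finset (Sym2 V)) (f : OmegaE G k ET μ → ℝ) {τ : ℝ}
    (h : ∀ a, ∑ b ∈ agreeOff S a, ∑ c ∈ agreeOff S a, (f b - f c) ^ 2 ≤
      τ * (agreeOff S a).card * ∑ b ∈ agreeOff S a, ∑ c ∈ agreeOff S a, gEn f b c) :
    blockEn S f ≤ τ * blockDir S f := by
  have hL := sum_avg_agreeOff S fun b : OmegaE G k ET μ =>
    (1 / ((agreeOff S b).card : ℝ)) * ∑ c ∈ agreeOff S b, (f b - f c) ^ 2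
  have hR := sum_avg_agreeOff S fun b : OmegaE G k ET μ => ∑ c ∈ agreeOff S b, gEn f b c
  rw [blockEn, ← hL, blockDir, ← hR, Finset.mul_sum]
  refine Finset.sum_le_sum fun a _ => ?_
  have hpos : (0 : ℝ) < (agreeOff S a).card := by
    exact_mod_cast Finset.card_pos.mpr ⟨a, self_mem_agreeOff⟩
  have e1 : ∑ b ∈ agreeOff S a, (1 / ((agreeOff S b).card : ℝ)) *
      ∑ c ∈ agreeOff S b, (f b - f c) ^ 2 =
      (1 / ((agreeOff S a).card : ℝ)) * ∑ b ∈ agreeOff S a, ∑ c ∈ agreeOff S a, (f b - f c) ^ 2 := by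
    rw [Finset.mul_sum]
    exact Finset.sum_congr rfl fun b hb => by rw [agreeOff_eq hb]
  have e2 : ∑ b ∈ agreeOff S a, ∑ c ∈ agreeOff S b, gEn f b c =
      ∑ b ∈ agreeOff S a, ∑ c ∈ agreeOff S a, gEn f b c :=
    Finset.sum_congr rfl fun b hb => by rw [agreeOff_eq hb]
  rw [e1, e2]
  calc _ ≤ (1 / ((agreeOff S a).card : ℝ)) * ((1 / ((agreeOff S a).card : ℝ)) *
        (τ * (agreeOff S a).card * ∑ b ∈ agreeOff S a, ∑ c ∈ agreeOff S a, gEn f b c)) := by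
        gcongr
        exact h a
    _ = _ := by field_simp

/-- The class of `a` is the state space of the dynamics on `S` with boundary condition `a`. -/
lemma sum_agreeOff {S : Finset (Sym2 V)} (hS : S ⊆ ET) (a : OmegaE G k ET μ) :
    ∃ ι : OmegaE G k S a.1 → OmegaE G k ET μ, (∀ σ, (ι σ).1 = σ.1) ∧
      ∀ φ : OmegaE G k ET μ → ℝ, ∑ b ∈ agreeOff S a, φ b = ∑ σ, φ (ι σ) := by
  refine ⟨fun σ => ⟨σ.1, σ.2.1, fun e he => (σ.2.2 e fun h => he (hS h)).trans (a.2.2 e he)⟩,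
    fun _ => rfl, fun φ => ?_⟩
  symm
  refine Finset.sum_bij (fun σ _ => (⟨σ.1, σ.2.1, fun e he =>
    (σ.2.2 e fun h => he (hS h)).trans (a.2.2 e he)⟩ : OmegaE G k ET μ)) ?_ ?_ ?_ fun _ _ => rfl
  · exact fun σ _ => mem_agreeOff.mpr σ.2.2
  · intro σ _ σ' _ h
    exact Subtype.ext (Subtype.mk.inj h)
  · intro b hb
    exact ⟨⟨b.1, b.2.1, mem_agreeOff.mp hb⟩, Finset.mem_univ _, rfl⟩

/-- The relaxation time of the dynamics on `S`, with boundary condition `a`, controls the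
variance on the class of `a`. -/
lemma class_poincare {S : Finset (Sym2 V)} (hS : S ⊆ ET) (f : OmegaE G k ET μ → ℝ)
    (a : OmegaE G k ET μ) (herg : IsErgodicGen (treeGen G k S a.1)) :
    ∑ b ∈ agreeOff S a, ∑ c ∈ agreeOff S a, (f b - f c) ^ 2 ≤
      relaxTime (unif (OmegaE G k S a.1)) (treeGen G k S a.1) *
        (agreeOff S a).card * ∑ b ∈ agreeOff S a, ∑ c ∈ agreeOff S a, gEn f b c := by
  obtain ⟨ι, hι, hsum⟩ := sum_agreeOff hS a
  have h := varForm_le_relaxTime (treeGen G k S a.1) (treeGen_nonneg G k S a.1) herg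
    fun σ => f (ι σ)
  have hcard : ((agreeOff S a).card : ℝ) = Fintype.card (OmegaE G k S a.1) := by
    have := hsum fun _ => 1
    simpa using this
  have hpos : (0 : ℝ) < (agreeOff S a).card := by
    exact_mod_cast Finset.card_pos.mpr ⟨a, self_mem_agreeOff⟩
  rw [varForm_unif, dirForm_unif, ← hcard] at h
  have e1 : ∑ b ∈ agreeOff S a, ∑ c ∈ agreeOff S a, (f b - f c) ^ 2 =
      ∑ σ, ∑ σ', (f (ι σ) - f (ι σ')) ^ 2 := by
    rw [hsum]; exact Finset.sum_congr rfl fun σ _ => hsum _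
  have e2 : ∑ b ∈ agreeOff S a, ∑ c ∈ agreeOff S a, gEn f b c =
      ∑ σ, ∑ σ', treeGen G k S a.1 σ σ' * (f (ι σ) - f (ι σ')) ^ 2 := by
    rw [hsum]
    refine Finset.sum_congr rfl fun σ _ => (hsum _).trans (Finset.sum_congr rfl fun σ' _ => ?_)
    rw [treeGen_mul_sq G k S a.1 (fun σ => f (ι σ)), gEn, hι, hι]
  rw [e1, e2]
  set M : ℝ := ((agreeOff S a).card : ℝ) with hM
  have := mul_le_mul_of_nonneg_left h (show 0 ≤ 2 * M ^ 2 by positivity)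
  calc _ = 2 * M ^ 2 * (1 / (2 * M ^ 2) * ∑ σ, ∑ σ', (f (ι σ) - f (ι σ')) ^ 2) := by field_simp
    _ ≤ _ := this
    _ = _ := by field_simp

/-- A heat-bath move at a single edge is a Glauber transition. -/
lemma blockEn_singleton_le (q : Sym2 V) (f : OmegaE G k ET μ → ℝ) :
    blockEn {q} f ≤ k * blockDir {q} f := by
  rw [blockEn, blockDir, Finset.mul_sum]
  refine Finset.sum_le_sum fun a _ => ?_
  have hk : (k : ℝ) ≠ 0 := by
    have := (a.1 q).pos
    exact_mod_cast this.ne'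
  have hpos : (1 : ℝ) ≤ (agreeOff {q} a).card := by
    exact_mod_cast Finset.card_pos.mpr ⟨a, self_mem_agreeOff⟩
  have h1 : 1 / ((agreeOff {q} a).card : ℝ) ≤ 1 := by
    rw [div_le_one (by linarith)]; exact hpos
  refine (mul_le_of_le_one_left (Finset.sum_nonneg fun _ _ => sq_nonneg _) h1).trans ?_
  rw [Finset.mul_sum]
  refine Finset.sum_le_sum fun b hb => ?_
  rw [gEn, ← mul_assoc, mul_one_div_cancel hk, one_mul]
  split_ifs with hd
  · exact le_rfl
  · have hab : a = b := by
      by_contra hne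
      apply hd
      have hq : a.1 q ≠ b.1 q := by
        intro h
        apply hne
        apply Subtype.ext
        funext e
        by_cases he : e = q
        · rw [he, h]
        · exact (mem_agreeOff.mp hb e (by simpa using he)).symm
      rw [DiffOne, Finset.card_eq_one]
      refine ⟨q, ?_⟩
      ext e
      simp only [Finset.mem_filter, Finset.mem_univ, true_and, Finset.mem_singleton]
      constructor
      · intro h
        by_contra he
        exact h (mem_agreeOff.mp hb e (by simpa using he)).symm
      · rintro rfl; exact hq
    rw [hab]; simp

/-- A Glauber transition updates an edge of exactly one block. -/
lemma sum_blockDir_le (B : BlockData G d ET blocks roots) (f : OmegaE G k ET μ → ℝ) :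
    ∑ i, blockDir (blocks i) f ≤ ∑ a, ∑ b, gEn f a b := by
  simp only [blockDir]
  rw [Finset.sum_comm]
  refine Finset.sum_le_sum fun a _ => ?_
  have h1 : ∀ i, ∑ b ∈ agreeOff (blocks i) a, gEn f a b =
      ∑ b, if b ∈ agreeOff (blocks i) a then gEn f a b else 0 := by
    intro i
    rw [← Finset.sum_filter]
    exact Finset.sum_congr (by ext; simp) fun _ _ => rfl
  simp only [h1]
  rw [Finset.sum_comm]
  refine Finset.sum_le_sum fun b _ => ?_
  by_cases hd : DiffOne a.1 b.1
  · have hd' := hd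
    rw [DiffOne, Finset.card_eq_one] at hd'
    obtain ⟨e, he⟩ := hd'
    have hne : a.1 e ≠ b.1 e := by
      have : e ∈ Finset.univ.filter fun w => a.1 w ≠ b.1 w := by rw [he]; simp
      simpa using this
    have hmem : ∀ i, b ∈ agreeOff (blocks i) a → e ∈ blocks i := by
      intro i hi
      by_contra h
      exact hne (mem_agreeOff.mp hi e h).symm
    rw [← Finset.sum_filter, Finset.sum_const, nsmul_eq_mul]
    refine mul_le_of_le_one_left (gEn_nonneg f a b) ?_
    have : (Finset.univ.filter fun i => b ∈ agreeOff (blocks i) a).card ≤ 1 := by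
      refine Finset.card_le_one.mpr fun i hi j hj => ?_
      exact B.disj i j e (hmem i (Finset.mem_filter.mp hi).2) (hmem j (Finset.mem_filter.mp hj).2)
    exact_mod_cast this
  · have : gEn f a b = 0 := by rw [gEn, if_neg hd, mul_zero]
    simp [this]

end Energies

section Assembly

variable {V : Type} [Fintype V] [DecidableEq V] {G : SimpleGraph V} [DecidableRel G.Adj]
  {d r : ℕ} {ET : Finset (Sym2 V)} {blocks : Fin r → Finset (Sym2 V)} {roots : Fin r → Sym2 V}
  {μ : Sym2 V → Fin (d + 1)}

lemma blockTauE_nonneg (i : Fin r) : 0 ≤ blockTauE G d ET μ blocks i := by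
  refine Real.sSup_nonneg ?_
  rintro _ ⟨σ, rfl⟩
  exact relaxTime_nonneg _ (treeGen_nonneg _ _ _ _)

lemma relaxTime_le_blockTauE (i : Fin r) (σ : OmegaE G (d + 1) ET μ) :
    relaxTime (unif (OmegaE G (d + 1) (blocks i) σ.1)) (treeGen G (d + 1) (blocks i) σ.1) ≤
      blockTauE G d ET μ blocks i := by
  refine le_csSup (Set.Finite.bddAbove ?_) ⟨σ, rfl⟩
  refine (Set.finite_range fun σ : OmegaE G (d + 1) ET μ => relaxTime
    (unif (OmegaE G (d + 1) (blocks i) σ.1)) (treeGen G (d + 1) (blocks i) σ.1)).subset ?_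
  rintro _ ⟨σ, rfl⟩
  exact ⟨σ, rfl⟩

lemma blockEn_le_tau (B : BlockData G d ET blocks roots) (i : Fin r)
    (herg : ∀ σ : OmegaE G (d + 1) ET μ, IsErgodicGen (treeGen G (d + 1) (blocks i) σ.1))
    (f : OmegaE G (d + 1) ET μ → ℝ) :
    blockEn (blocks i) f ≤ blockTauE G d ET μ blocks i * blockDir (blocks i) f := by
  refine blockEn_le_of_class _ f fun a => (class_poincare (B.sub i) f a (herg a)).trans ?_
  refine mul_le_mul_of_nonneg_right ?_ (Finset.sum_nonneg fun _ _ => Finset.sum_nonneg fun _ _ =>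
    gEn_nonneg f _ _)
  exact mul_le_mul_of_nonneg_right (relaxTime_le_blockTauE i a) (Nat.cast_nonneg _)

/-- The Poincaré inequality for the Glauber dynamics, from one for the root colours whose weights
exceed `1` only at single-edge blocks. -/
lemma glauber_poincare (hG : G.IsAcyclic) (hs : IsSplitting G ET)
    (h2 : 2 ≤ ET.card) (hd : 3 ≤ d)
    (hdeg : ∀ v : V, 2 ≤ G.degree v → G.degree v = d) (hμ : ProperECol G μ)
    (B : BlockData G d ET blocks roots) (hA : ∀ i, IsSplitting G (blocks i))
    (herg : ∀ (i : Fin r) (σ : OmegaE G (d + 1) ET μ),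
      IsErgodicGen (treeGen G (d + 1) (blocks i) σ.1))
    (P : Fin r → Prop) (hPs : ∀ i, P i → blocks i = {roots i})
    (hC : ∀ F : (Fin r → Fin (d + 1)) → ℝ,
      ∑ c ∈ rootCols G ET μ roots, ∑ c' ∈ rootCols G ET μ roots, (F c - F c') ^ 2 ≤
        2100000 * (rootCols G ET μ roots).card *
          ∑ i, blockWt d (P i) * colEn (rootCols G ET μ roots) i F)
    (f : OmegaE G (d + 1) ET μ → ℝ) :
    VarForm (unif (OmegaE G (d + 1) ET μ)) f ≤
      10000000000 * ((d : ℝ) ^ 3 + ∑ i, blockTauE G d ET μ blocks i) *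
        DirForm (unif (OmegaE G (d + 1) ET μ)) (treeGen G (d + 1) ET μ) f := by
  set T := ∑ i, blockTauE G d ET μ blocks i with hT
  have hT0 : 0 ≤ T := Finset.sum_nonneg fun i _ => blockTauE_nonneg i
  have hTi : ∀ i, blockTauE G d ET μ blocks i ≤ T := fun i =>
    Finset.single_le_sum (f := fun i => blockTauE G d ET μ blocks i)
      (fun j _ => blockTauE_nonneg j) (Finset.mem_univ i)
  set D := ∑ a, ∑ b, gEn f a b with hD
  obtain ⟨g, hg⟩ := exists_transport B f
  have hd' : (3 : ℝ) ≤ d := by exact_mod_cast hd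
  have hblock : ∀ i, blockWt d (P i) * blockEn (blocks i) f ≤
      (T + ((d : ℝ) + 1) ^ 2) * blockDir (blocks i) f := by
    intro i
    have hD0 := blockDir_nonneg (blocks i) f
    rw [blockWt]
    split_ifs with h
    · have h1 : blockEn (blocks i) f ≤ ((d : ℝ) + 1) * blockDir (blocks i) f := by
        have := blockEn_singleton_le (roots i) f
        rw [← hPs i h] at this
        exact_mod_cast this
      nlinarith
    · have h1 := blockEn_le_tau B i (herg i) f
      have h3 := mul_le_mul_of_nonneg_right (hTi i) hD0
      nlinarith
  have hsum : ∑ i, blockWt d (P i) * blockEn (blocks i) f ≤ (T + ((d : ℝ) + 1) ^ 2) * D := by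
    refine (Finset.sum_le_sum fun i _ => hblock i).trans ?_
    rw [← Finset.mul_sum]
    exact mul_le_mul_of_nonneg_left (sum_blockDir_le B f) (by positivity)
  have hlift := lift_apply hG hs h2 hd hdeg hμ B hA (by norm_num)
    (fun i => one_le_blockWt d (P i)) hC g
  rw [sum_splitSet hs.1 hμ B] at hlift
  simp only [sum_splitSet hs.1 hμ B, hg] at hlift
  have hcard : ((splitSet G ET μ blocks roots).card : ℝ) =
      Fintype.card (OmegaE G (d + 1) ET μ) := by
    have := sum_splitSet hs.1 hμ B fun _ => 1
    simpa using this
  simp only [liftEn_eq_blockEn hs.1 hμ B _ f hg] at hlift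
  rw [hcard] at hlift
  have hN : (0 : ℝ) < Fintype.card (OmegaE G (d + 1) ET μ) := by
    have : Nonempty (OmegaE G (d + 1) ET μ) := ⟨⟨μ, hμ, fun _ _ => rfl⟩⟩
    exact_mod_cast Fintype.card_pos
  set N : ℝ := (Fintype.card (OmegaE G (d + 1) ET μ) : ℝ) with hNdef
  have hDir : DirForm (unif (OmegaE G (d + 1) ET μ)) (treeGen G (d + 1) ET μ) f =
      1 / (2 * N) * D := by
    rw [dirForm_unif]
    simp only [treeGen_mul_sq]
    rfl
  have hD0 : 0 ≤ D := Finset.sum_nonneg fun _ _ => Finset.sum_nonneg fun _ _ => gEn_nonneg f _ _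
  rw [hDir, varForm_unif, ← hNdef]
  have hfac : (6 + 3 * 9 ^ 2 * 2100000) * 6 * (T + ((d : ℝ) + 1) ^ 2) ≤
      10000000000 * ((d : ℝ) ^ 3 + T) := by
    have : ((d : ℝ) + 1) ^ 2 ≤ 2 * (d : ℝ) ^ 3 := by nlinarith [sq_nonneg ((d : ℝ) - 3)]
    nlinarith
  have hmain : ∑ a, ∑ b, (f a - f b) ^ 2 ≤ 10000000000 * ((d : ℝ) ^ 3 + T) * N * D := by
    refine hlift.trans ?_
    calc _ ≤ (6 + 3 * 9 ^ 2 * 2100000) * 6 * N * ((T + ((d : ℝ) + 1) ^ 2) * D) :=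
          mul_le_mul_of_nonneg_left hsum (by positivity)
      _ = (6 + 3 * 9 ^ 2 * 2100000) * 6 * (T + ((d : ℝ) + 1) ^ 2) * (N * D) := by ring
      _ ≤ 10000000000 * ((d : ℝ) ^ 3 + T) * (N * D) :=
          mul_le_mul_of_nonneg_right hfac (by positivity)
      _ = _ := by ring
  calc _ ≤ 1 / (2 * N ^ 2) * (10000000000 * ((d : ℝ) ^ 3 + T) * N * D) :=
        mul_le_mul_of_nonneg_left hmain (by positivity)
    _ = _ := by field_simp

end Assembly

/-- in the tree block setting, assuming (A1) and (A2), the Glauber dynamics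
`𝓛^μ_E` is ergodic, and there is a universal constant `C₀ > 0` with
`τ(𝓛^μ_E) ≤ C₀·(d³ + Σ_i τ_i)`, where `τ_i = max_{σ∈Ω^μ_E} τ(𝓛^σ_{E_i})`. -/
theorem tree_blockDyn_relaxTime :
    ∃ C0 : ℝ, 0 < C0 ∧
      ∀ (V : Type) [Fintype V] [DecidableEq V] (G : SimpleGraph V) [DecidableRel G.Adj]
        (d : ℕ), 3 ≤ d → G.IsTree → (∀ v : V, 2 ≤ G.degree v → G.degree v = d) →
      ∀ ET : Finset (Sym2 V), IsSplitting G ET → 2 ≤ ET.card →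
      ∀ μ : Sym2 V → Fin (d + 1), ProperECol G μ →
      ∀ (r : ℕ) (blocks : Fin r → Finset (Sym2 V)) (roots : Fin r → Sym2 V),
        TreeBlockSetting G ET blocks roots →
        (∀ i, IsSplitting G (blocks i)) →
        (∀ (i : Fin r) (σ : OmegaE G (d + 1) ET μ),
          IsErgodicGen (treeGen G (d + 1) (blocks i) σ.1)) →
        IsErgodicGen (treeGen G (d + 1) ET μ) ∧
        relaxTime (unif (OmegaE G (d + 1) ET μ)) (treeGen G (d + 1) ET μ) ≤
          C0 * ((d : ℝ) ^ 3 + ∑ i : Fin r, blockTauE G d ET μ blocks i) := by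

  refine ⟨10000000000, by norm_num, ?_⟩
  intro V _ _ G _ d hd hG hdeg ET hs h2 μ hμ r blocks roots hset hA herg
  have hp : ∀ f, VarForm (unif (OmegaE G (d + 1) ET μ)) f ≤
      10000000000 * ((d : ℝ) ^ 3 + ∑ i, blockTauE G d ET μ blocks i) *
        DirForm (unif (OmegaE G (d + 1) ET μ)) (treeGen G (d + 1) ET μ) f := by
    rcases hset with h | h
    · have B := blockData_vertex hG.isAcyclic hs h2 hdeg h
      exact glauber_poincare hG.isAcyclic hs h2 hd hdeg hμ B hA herg _ B.special
        (rootPoincare_vertex hs h2 hd hdeg μ h)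
    · have B := blockData_edge hG.isAcyclic hs h2 hdeg h
      obtain ⟨i0, hi0, hroot⟩ := rootPoincare_edge hG.isAcyclic hs h2 hd hdeg μ h
      refine glauber_poincare hG.isAcyclic hs h2 hd hdeg hμ B hA herg _ (fun i hi => ?_) hroot
      rcases hi with hi | rfl
      · exact B.special i hi
      · exact hi0
  have hsym := treeGen_symm G (d + 1) ET μ
  refine ⟨ergodic_of_poincare _ (treeGen_nonneg _ _ _ _) hsym hp,
    relaxTime_le_of_poincare _ ?_ hp⟩
  have h1 : 0 ≤ ∑ i, blockTauE G d ET μ blocks i :=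
    Finset.sum_nonneg fun i _ => blockTauE_nonneg i
  have h3 : (1 : ℝ) ≤ (d : ℝ) ^ 3 := one_le_pow₀ (by exact_mod_cast (by omega : 1 ≤ d))
  linarith
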